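/- arXiv:1105.5959 — 2 statements merged into one kernel-verified Lean document; each statement's English description precedes it below -/
import Mathlib

section
/- Assume 𝕋 is bounded, p > 0 dρ-a.e., L²(𝕋_κ; r dσ_κ) is infinite dimensional, and let S be a self-adjoint operator with separated boundary conditions as above. Suppose L := ∫_𝕋 √(r(t)/p(t)) dt > 0 (Lebesgue integral over 𝕋). Then the set of eigenvalues of S is an infinite subset of ℝ which is bounded from below and has no finite accumulation point, and, enumerating it as a strictly increasing sequence E₀ < E₁ < E₂ < ⋯, one has lim_{n→∞} E_n/n² = π²/L². -/
open MeasureTheory Set Filter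
open scoped ENNReal NNReal Classical

/-- Forward shift of a time scale. -/
noncomputable def tsSigma (T : Set ℝ) (t : ℝ) : ℝ :=
  if ({s | s ∈ T ∧ t < s}).Nonempty then sInf {s | s ∈ T ∧ t < s} else sSup T

/-- Backward shift of a time scale. -/
noncomputable def tsRho (T : Set ℝ) (t : ℝ) : ℝ :=
  if ({s | s ∈ T ∧ s < t}).Nonempty then sSup {s | s ∈ T ∧ s < t} else sInf T

/-- `𝕋_κ` : the time scale with the left endpoint removed if it is finite and right-scattered. -/
noncomputable def tsKappa (T : Set ℝ) : Set ℝ :=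
  if BddBelow T ∧ sInf T < tsSigma T (sInf T) then T \ {sInf T} else T

/-- Extension `p̄` of a function on `𝕋_κ` to all of `ℝ`. -/
noncomputable def extK (T : Set ℝ) (p : ℝ → ℂ) (t : ℝ) : ℂ :=
  if t ∈ tsKappa T then p t else p (tsSigma (tsKappa T) t)

/-- Coercion of a real-valued coefficient to a complex-valued one. -/
def cR (f : ℝ → ℝ) : ℝ → ℂ := fun t => (f t : ℂ)

/-- `(u, u^[1])` is an integrated pair with density `h` against the measure `μ = dσ_κ`. -/
def IsPair (T : Set ℝ) (μ : Measure ℝ) (p : ℝ → ℂ) (u u1 h : ℝ → ℂ) : Prop :=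
  ∀ c x : ℝ, c ≤ x →
    u x = u c + ∫ t in c..x, u1 t / extK T p t ∧
    u1 x = u1 c + ∫ t in Set.Ioc c x, h t ∂μ

/-- `(u, u^[1])` is a solution pair of `(ℓ - z) u = g`. -/
def IsSLSol (T : Set ℝ) (μ : Measure ℝ) (p r q : ℝ → ℂ) (z : ℂ) (g : ℝ → ℂ)
    (u u1 : ℝ → ℂ) : Prop :=
  IsPair T μ p u u1 (fun t => (q t - z * r t) * u t - r t * g t)

/-- Wronskian of two pairs. -/
def Wr (u u1 v v1 : ℝ → ℂ) (x : ℝ) : ℂ := u x * v1 x - u1 x * v x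

/-- The integrand `|u|² r` as an `ℝ≥0∞`-valued function. -/
noncomputable def sqWeight (r : ℝ → ℝ) (u : ℝ → ℂ) (t : ℝ) : ℝ≥0∞ :=
  ((‖u t‖₊ : ℝ≥0∞)) ^ 2 * ENNReal.ofReal (r t)

/-- `u` lies in `L²` near the left endpoint `a`. -/
def L2NearLeft (T : Set ℝ) (μ : Measure ℝ) (r : ℝ → ℝ) (u : ℝ → ℂ) : Prop :=
  ∀ c ∈ tsKappa T, ∫⁻ t in {t | (∃ s ∈ T, s < t) ∧ t ≤ c} ∩ tsKappa T, sqWeight r u t ∂μ < ∞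

/-- `u` lies in `L²` near the right endpoint `b`. -/
def L2NearRight (T : Set ℝ) (μ : Measure ℝ) (r : ℝ → ℝ) (u : ℝ → ℂ) : Prop :=
  ∀ c ∈ tsKappa T, ∫⁻ t in {t | c ≤ t ∧ ∃ s ∈ T, t < s} ∩ tsKappa T, sqWeight r u t ∂μ < ∞

/-- `ℓ` is in the limit-circle case at the left endpoint. -/
def LimitCircleLeft (T : Set ℝ) (μ : Measure ℝ) (p r q : ℝ → ℝ) : Prop :=
  ∀ z : ℂ, ∀ u u1 : ℝ → ℂ, IsSLSol T μ (cR p) (cR r) (cR q) z 0 u u1 → L2NearLeft T μ r u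

/-- `ℓ` is in the limit-point case at the left endpoint. -/
def LimitPointLeft (T : Set ℝ) (μ : Measure ℝ) (p r q : ℝ → ℝ) : Prop :=
  ∀ z : ℂ, ∃ u u1 : ℝ → ℂ, IsSLSol T μ (cR p) (cR r) (cR q) z 0 u u1 ∧ ¬ L2NearLeft T μ r u

/-- `ℓ` is in the limit-circle case at the right endpoint. -/
def LimitCircleRight (T : Set ℝ) (μ : Measure ℝ) (p r q : ℝ → ℝ) : Prop :=
  ∀ z : ℂ, ∀ u u1 : ℝ → ℂ, IsSLSol T μ (cR p) (cR r) (cR q) z 0 u u1 → L2NearRight T μ r u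

/-- `ℓ` is in the limit-point case at the right endpoint. -/
def LimitPointRight (T : Set ℝ) (μ : Measure ℝ) (p r q : ℝ → ℝ) : Prop :=
  ∀ z : ℂ, ∃ u u1 : ℝ → ℂ, IsSLSol T μ (cR p) (cR r) (cR q) z 0 u u1 ∧ ¬ L2NearRight T μ r u

/-- The action `ℓ u = (-h + q u)/r` of the differential expression on a pair with density `h`. -/
noncomputable def ellApply (r q : ℝ → ℝ) (h u : ℝ → ℂ) (t : ℝ) : ℂ :=
  (-h t + (q t : ℂ) * u t) / (r t : ℂ)

/-- Membership in `L²(𝕋_κ; r dσ_κ)`. -/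
def MemL2T (T : Set ℝ) (μ : Measure ℝ) (r : ℝ → ℝ) (u : ℝ → ℂ) : Prop :=
  ∫⁻ t in tsKappa T, sqWeight r u t ∂μ < ∞

/-- The pair `(u, u^[1])` with density `h` belongs to `D_ℓ²`. -/
def MemD2 (T : Set ℝ) (μ : Measure ℝ) (p r q : ℝ → ℝ) (u u1 h : ℝ → ℂ) : Prop :=
  LocallyIntegrable h μ ∧ IsPair T μ (cR p) u u1 h ∧ MemL2T T μ r u ∧
    MemL2T T μ r (ellApply r q h u)

/-- The filter `x ↓ a`, `x ∈ 𝕋`. -/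
noncomputable def leftLimFilter (T : Set ℝ) : Filter ℝ :=
  if BddBelow T then nhdsWithin (sInf T) T else Filter.atBot ⊓ Filter.principal T

/-- The filter `x ↑ b`, `x ∈ 𝕋`. -/
noncomputable def rightLimFilter (T : Set ℝ) : Filter ℝ :=
  if BddAbove T then nhdsWithin (sSup T) T else Filter.atTop ⊓ Filter.principal T

/-- The measure `r dσ_κ` on `𝕋_κ`, giving the Hilbert space `L²(𝕋_κ; r dσ_κ)`. -/
noncomputable def wM (T : Set ℝ) (μ : Measure ℝ) (r : ℝ → ℝ) : Measure ℝ :=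
  (μ.restrict (tsKappa T)).withDensity fun t => ENNReal.ofReal (r t)



/-- `f` is absolutely continuous on `[a,b]` with a.e. derivative `g`. -/
def ACd (f g : ℝ → ℝ) (a b : ℝ) : Prop :=
  IntervalIntegrable g volume a b ∧ ∀ x ∈ Icc a b, f x = f a + ∫ t in a..x, g t

theorem ac_congr {f g : ℝ → ℝ} {a b : ℝ} (hf : AbsolutelyContinuousOnInterval f a b)
    (h : ∀ x ∈ uIcc a b, g x = f x) : AbsolutelyContinuousOnInterval g a b := by
  rw [absolutelyContinuousOnInterval_iff] at hf ⊢
  intro ε hε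
  obtain ⟨δ, hδ, H⟩ := hf ε hε
  refine ⟨δ, hδ, fun E hE hs => ?_⟩
  have := H E hE hs
  refine lt_of_le_of_lt (le_of_eq ?_) this
  refine Finset.sum_congr rfl fun i hi => ?_
  have := hE.1 i hi
  rw [h _ this.1, h _ this.2]

theorem ac_comp2 {f g : ℝ → ℝ} {a b : ℝ} (hf : AbsolutelyContinuousOnInterval f a b)
    (hg : AbsolutelyContinuousOnInterval g a b) {F : ℝ × ℝ → ℝ} (hF : ContDiff ℝ 1 F) :
    AbsolutelyContinuousOnInterval (fun x => F (f x, g x)) a b := by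
  obtain ⟨A, hA⟩ := hf.exists_bound
  obtain ⟨B, hB⟩ := hg.exists_bound
  obtain ⟨K, hK⟩ := (hF.contDiffOn (s := Icc (-A) A ×ˢ Icc (-B) B)).exists_lipschitzOnWith
    (by decide) ((convex_Icc _ _).prod (convex_Icc _ _)) (isCompact_Icc.prod isCompact_Icc)
  have hm : ∀ x ∈ uIcc a b, (f x, g x) ∈ Icc (-A) A ×ˢ Icc (-B) B := fun x hx =>
    ⟨abs_le.1 (hA x hx), abs_le.1 (hB x hx)⟩
  have hsum := (hf.add hg)
  have key : Tendsto (fun E : ℕ × (ℕ → ℝ × ℝ) => (K : ℝ) *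
      ((∑ i ∈ Finset.range E.1, dist (f (E.2 i).1) (f (E.2 i).2)) +
       ∑ i ∈ Finset.range E.1, dist (g (E.2 i).1) (g (E.2 i).2)))
      (AbsolutelyContinuousOnInterval.totalLengthFilter ⊓
        𝓟 (AbsolutelyContinuousOnInterval.disjWithin a b)) (nhds 0) := by
    simpa using (Tendsto.add hf hg).const_mul (K : ℝ)
  refine squeeze_zero' (Eventually.of_forall fun E => Finset.sum_nonneg fun i _ => dist_nonneg)
    ?_ key
  filter_upwards [mem_inf_of_right (mem_principal_self _)] with E hE
  rw [← Finset.sum_add_distrib, Finset.mul_sum]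
  refine Finset.sum_le_sum fun i hi => ?_
  have h1 := hE.1 i hi
  refine (hK.dist_le_mul _ (hm _ h1.1) _ (hm _ h1.2)).trans ?_
  gcongr
  rw [Prod.dist_eq]
  exact max_le (le_add_of_nonneg_right dist_nonneg) (le_add_of_nonneg_left dist_nonneg)

theorem ACd.ac {f g : ℝ → ℝ} {a b : ℝ} (hab : a ≤ b) (h : ACd f g a b) :
    AbsolutelyContinuousOnInterval f a b := by
  have h1 := h.1.absolutelyContinuousOnInterval_intervalIntegral (c := a) (by simp)
  have h2 := ac_comp2 (F := fun z => f a + z.1) h1 h1 (by fun_prop)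
  refine ac_congr h2 ?_
  rw [uIcc_of_le hab]; exact h.2

theorem ACd.deriv {f g : ℝ → ℝ} {a b : ℝ} (hab : a ≤ b) (h : ACd f g a b) :
    ∀ᵐ x, x ∈ Ioo a b → HasDerivAt f (g x) x := by
  filter_upwards [h.1.ae_hasDerivAt_integral] with x hx hxI
  have := (hx (by rw [uIcc_of_le hab]; exact Ioo_subset_Icc_self hxI) a (by simp)).const_add (f a)
  refine this.congr_of_eventuallyEq ?_
  filter_upwards [Icc_mem_nhds hxI.1 hxI.2] with y hy using h.2 y hy

theorem ae_Icc_of_Ioo {a b : ℝ} {p : ℝ → Prop} (h : ∀ᵐ x, x ∈ Ioo a b → p x) :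
    ∀ᵐ x, x ∈ Icc a b → p x := by
  have h1 : ∀ᵐ x : ℝ, x ≠ a := by simp [ae_iff, measure_singleton]
  have h2 : ∀ᵐ x : ℝ, x ≠ b := by simp [ae_iff, measure_singleton]
  filter_upwards [h, h1, h2] with x hx h1 h2 h3
  exact hx ⟨lt_of_le_of_ne h3.1 (Ne.symm h1), lt_of_le_of_ne h3.2 h2⟩

theorem ACd.of_ac {f g : ℝ → ℝ} {a b : ℝ} (hab : a ≤ b) (h : AbsolutelyContinuousOnInterval f a b)
    (hd : ∀ᵐ x, x ∈ Ioo a b → HasDerivAt f (g x) x) : ACd f g a b := by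
  have hd' := ae_Icc_of_Ioo hd
  have e : ∀ᵐ x, x ∈ uIoc a b → _root_.deriv f x = g x := by
    filter_upwards [hd'] with x hx hxI
    rw [uIoc_of_le hab] at hxI
    exact (hx (Ioc_subset_Icc_self hxI)).deriv
  refine ⟨h.intervalIntegrable_deriv.congr_ae ?_, fun x hx => ?_⟩
  · rw [EventuallyEq, ae_restrict_iff' measurableSet_uIoc]; exact e
  · have hs : uIcc a x ⊆ uIcc a b := by
      rw [uIcc_of_le hab, uIcc_of_le hx.1]; exact Icc_subset_Icc le_rfl hx.2
    have := (h.mono hs).integral_deriv_eq_sub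
    rw [← intervalIntegral.integral_congr_ae (f := _root_.deriv f), this]; ring
    filter_upwards [e] with y hy hyI
    apply hy
    rw [uIoc_of_le hab]; rw [uIoc_of_le hx.1] at hyI
    exact ⟨hyI.1, hyI.2.trans hx.2⟩

theorem ACd.continuousOn {f g : ℝ → ℝ} {a b : ℝ} (hab : a ≤ b) (h : ACd f g a b) :
    ContinuousOn f (Icc a b) := by
  have := (h.ac hab).continuousOn; rwa [uIcc_of_le hab] at this

theorem ACd.comp2 {f f' g g' k : ℝ → ℝ} {a b : ℝ} (hab : a ≤ b) (hf : ACd f f' a b)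
    (hg : ACd g g' a b) {F : ℝ × ℝ → ℝ} (hF : ContDiff ℝ 1 F)
    (hk : ∀ᵐ x, x ∈ Ioo a b → HasDerivAt f (f' x) x → HasDerivAt g (g' x) x →
      HasDerivAt (fun x => F (f x, g x)) (k x) x) :
    ACd (fun x => F (f x, g x)) k a b := by
  refine ACd.of_ac hab (ac_comp2 (hf.ac hab) (hg.ac hab) hF) ?_
  filter_upwards [hk, hf.deriv hab, hg.deriv hab] with x h1 h2 h3 h4
  exact h1 h4 (h2 h4) (h3 h4)

theorem ACd.integral {f g : ℝ → ℝ} {a b : ℝ} (hab : a ≤ b) (h : ACd f g a b) :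
    ∫ t in a..b, g t = f b - f a := by
  have := h.2 b ⟨hab, le_rfl⟩; linarith

theorem ACd.of_integral {g : ℝ → ℝ} {a b : ℝ} (hg : IntervalIntegrable g volume a b) (c : ℝ) :
    ACd (fun x => c + ∫ t in a..x, g t) g a b := ⟨hg, fun x _ => by simp⟩

theorem ACd.mono {f g : ℝ → ℝ} {a b x : ℝ} (h : ACd f g a b) (hx : x ∈ Icc a b) :
    ACd f g a x := by
  refine ⟨h.1.mono_set ?_, fun y hy => h.2 y ⟨hy.1, hy.2.trans hx.2⟩⟩
  rw [uIcc_of_le hx.1, uIcc_of_le (hx.1.trans hx.2)]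
  exact Icc_subset_Icc le_rfl hx.2

/-- Linear comparison. -/
theorem ACd.lin {y A g : ℝ → ℝ} {a b : ℝ} (hab : a ≤ b) (hA : IntervalIntegrable A volume a b)
    (hg : IntervalIntegrable g volume a b)
    (hy : ACd y (fun s => A s * y s + g s) a b) (hg0 : ∀ᵐ x, x ∈ Icc a b → 0 ≤ g x)
    (hy0 : 0 ≤ y a) :
    Real.exp (-∫ t in a..b, |A t|) * (y a + Real.exp (-∫ t in a..b, |A t|) * ∫ t in a..b, g t)
      ≤ y b ∧
    y b ≤ Real.exp (∫ t in a..b, |A t|) * (y a + Real.exp (∫ t in a..b, |A t|) * ∫ t in a..b, g t) := by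
  set M := ∫ t in a..b, |A t| with hM
  set J : ℝ → ℝ := fun x => 0 + ∫ t in a..x, A t with hJ
  have hJa : ACd J A a b := ACd.of_integral hA 0
  have hJb : ∀ x ∈ Icc a b, |J x| ≤ M := by
    intro x hx
    have := intervalIntegral.abs_integral_le_integral_abs (f := A) (μ := volume) hx.1
    simp only [hJ, zero_add]
    refine this.trans (intervalIntegral.integral_mono_interval le_rfl hx.1 hx.2 ?_ hA.abs)
    exact Eventually.of_forall fun _ => abs_nonneg _
  have key : ACd (fun x => Real.exp (-J x) * y x) (fun s => Real.exp (-J s) * g s) a b := by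
    refine ACd.comp2 (F := fun z => Real.exp (-z.1) * z.2) hab hJa hy (by fun_prop) ?_
    refine Eventually.of_forall fun x _ h1 h2 => ?_
    convert! (h1.neg.exp).mul h2 using 1
    simp; ring
  have h1 := key.integral hab
  have hJ0 : J a = 0 := by simp [hJ]
  rw [hJ0] at h1
  simp only [neg_zero, Real.exp_zero, one_mul] at h1
  have hI1 : Real.exp (-M) * ∫ t in a..b, g t ≤ ∫ t in a..b, Real.exp (-J t) * g t := by
    rw [← intervalIntegral.integral_const_mul]
    refine intervalIntegral.integral_mono_ae_restrict hab (hg.const_mul _) key.1 ?_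
    rw [EventuallyLE, ae_restrict_iff' measurableSet_Icc]
    filter_upwards [hg0] with x hx hxI
    gcongr
    · exact hx hxI
    · exact (le_abs_self _).trans (hJb x hxI)
  have hI2 : ∫ t in a..b, Real.exp (-J t) * g t ≤ Real.exp M * ∫ t in a..b, g t := by
    rw [← intervalIntegral.integral_const_mul]
    refine intervalIntegral.integral_mono_ae_restrict hab key.1 (hg.const_mul _) ?_
    rw [EventuallyLE, ae_restrict_iff' measurableSet_Icc]
    filter_upwards [hg0] with x hx hxI
    gcongr
    · exact hx hxI
    · exact (neg_le_abs _).trans (hJb x hxI)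
  have hI0 : 0 ≤ ∫ t in a..b, g t := by
    refine intervalIntegral.integral_nonneg_of_ae_restrict hab ?_
    rw [EventuallyLE, ae_restrict_iff' measurableSet_Icc]
    filter_upwards [hg0] with x hx hxI using hx hxI
  have hJbb := hJb b ⟨hab, le_rfl⟩
  have eq : y b = Real.exp (J b) * (y a + ∫ t in a..b, Real.exp (-J t) * g t) := by
    rw [h1, Real.exp_neg]; field_simp; ring
  have hJ2 : Real.exp (-M) ≤ Real.exp (J b) := Real.exp_le_exp.2 (abs_le.1 hJbb).1
  have hJ3 : Real.exp (J b) ≤ Real.exp M := Real.exp_le_exp.2 ((le_abs_self _).trans hJbb)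
  have h4 : 0 ≤ Real.exp (-M) * ∫ t in a..b, g t := by positivity
  rw [eq]
  exact ⟨mul_le_mul hJ2 (by linarith) (by positivity) (Real.exp_pos _).le,
    mul_le_mul hJ3 (by linarith) (by linarith) (Real.exp_pos _).le⟩

theorem caratheodory {f : ℝ → ℝ → ℝ} {k : ℝ → ℝ} {a b : ℝ} (hab : a ≤ b) (θ0 : ℝ)
    (hk : IntervalIntegrable k volume a b) (hk0 : ∀ s, 0 ≤ k s)
    (hf : ∀ s x y, |f s x - f s y| ≤ k s * |x - y|)
    (hm : ∀ θ : ℝ → ℝ, ContinuousOn θ (Icc a b) →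
      IntervalIntegrable (fun s => f s (θ s)) volume a b) :
    ∃ θ : ℝ → ℝ, θ a = θ0 ∧ ACd θ (fun s => f s (θ s)) a b := by
  set K : ℝ → ℝ := fun x => 0 + ∫ t in a..x, k t with hK
  have hKa : ACd K k a b := ACd.of_integral hk 0
  have hKc := hKa.continuousOn hab
  have hKe : ACd (fun x => Real.exp (2 * K x) / 2) (fun s => k s * Real.exp (2 * K s)) a b := by
    refine ACd.comp2 (F := fun z => Real.exp (2 * z.1) / 2) hab hKa hKa (by fun_prop) ?_
    refine Eventually.of_forall fun x _ h1 _ => ?_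
    convert! ((h1.const_mul 2).exp).div_const 2 using 1
    ring
  have hK0 : K a = 0 := by simp [hK]
  have hex : ∀ y : C(Icc a b, ℝ), ContinuousOn (fun t => Real.exp (2 * K t) * IccExtend hab y t)
      (Icc a b) := fun y => by
    have : Continuous (IccExtend hab y) := y.continuous.Icc_extend'
    exact (Real.continuous_exp.comp_continuousOn (hKc.const_mul 2)).mul this.continuousOn
  have hint : ∀ y : C(Icc a b, ℝ), IntervalIntegrable
      (fun t => f t (Real.exp (2 * K t) * IccExtend hab y t)) volume a b := fun y => hm _ (hex y)
  have hcont : ∀ y : C(Icc a b, ℝ), Continuous fun s : Icc a b => Real.exp (-(2 * K s)) *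
      (θ0 + ∫ t in a..(s : ℝ), f t (Real.exp (2 * K t) * IccExtend hab y t)) := fun y => by
    have h1 := (ACd.of_integral (hint y) θ0).continuousOn hab
    have h2 : ContinuousOn (fun s => Real.exp (-(2 * K s))) (Icc a b) :=
      Real.continuous_exp.comp_continuousOn (hKc.const_mul 2).neg
    exact (h2.mul h1).domRestrict
  let Φ : C(Icc a b, ℝ) → C(Icc a b, ℝ) := fun y => ⟨_, hcont y⟩
  have hΦv : ∀ y s, Φ y s = Real.exp (-(2 * K s)) *
      (θ0 + ∫ t in a..(s : ℝ), f t (Real.exp (2 * K t) * IccExtend hab y t)) := fun _ _ => rfl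
  have hΦ : ContractingWith (1/2) Φ := by
    refine ⟨by norm_num [← NNReal.coe_lt_coe], LipschitzWith.of_dist_le_mul fun y z => ?_⟩
    rw [ContinuousMap.dist_le (by positivity)]
    rintro ⟨s, hs⟩
    rw [Real.dist_eq, hΦv, hΦv]
    rw [← mul_sub, add_sub_add_left_eq_sub, abs_mul, abs_of_pos (Real.exp_pos _)]
    have hss : uIcc a s ⊆ uIcc a b := by
      rw [uIcc_of_le hab, uIcc_of_le hs.1]; exact Icc_subset_Icc le_rfl hs.2
    rw [← intervalIntegral.integral_sub ((hint y).mono_set hss) ((hint z).mono_set hss)]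
    have h3 : |∫ t in a..s, (f t (Real.exp (2 * K t) * IccExtend hab y t) -
        f t (Real.exp (2 * K t) * IccExtend hab z t))| ≤
        ∫ t in a..s, (k t * Real.exp (2 * K t)) * dist y z := by
      refine (intervalIntegral.abs_integral_le_integral_abs hs.1).trans ?_
      refine intervalIntegral.integral_mono_on hs.1
        (((hint y).sub (hint z)).mono_set hss).abs ((hKe.1.mono_set hss).mul_const _) ?_
      intro t _
      refine (hf _ _ _).trans ?_
      rw [← mul_sub, abs_mul, abs_of_pos (Real.exp_pos _), ← mul_assoc]
      refine mul_le_mul_of_nonneg_left ?_ (mul_nonneg (hk0 t) (Real.exp_pos _).le)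
      rw [← Real.dist_eq]
      exact ContinuousMap.dist_apply_le_dist _
    rw [intervalIntegral.integral_mul_const, (hKe.mono hs).integral hs.1, hK0] at h3
    refine (mul_le_mul_of_nonneg_left h3 (Real.exp_pos _).le).trans ?_
    rw [Real.exp_neg]
    have h4 := Real.exp_pos (2 * K s)
    simp only [mul_zero, Real.exp_zero, NNReal.coe_div, NNReal.coe_one, NNReal.coe_ofNat]
    rw [← mul_assoc]
    refine mul_le_mul_of_nonneg_right ?_ dist_nonneg
    rw [← div_eq_inv_mul, div_le_iff₀ h4]; linarith
  have : Nonempty C(Icc a b, ℝ) := ⟨0⟩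
  obtain ⟨y, hy⟩ : ∃ y, Φ y = y := ⟨_, hΦ.fixedPoint_isFixedPt⟩
  have hyy : ∀ s ∈ Icc a b, Real.exp (2 * K s) * IccExtend hab y s =
      θ0 + ∫ t in a..s, f t (Real.exp (2 * K t) * IccExtend hab y t) := by
    intro s hs
    rw [IccExtend_of_mem hab _ hs]
    conv_lhs => rw [← hy]
    rw [hΦv, ← mul_assoc, ← Real.exp_add, add_neg_cancel, Real.exp_zero, one_mul]
  have h0 := hyy a ⟨le_rfl, hab⟩
  simp only [intervalIntegral.integral_same, add_zero] at h0
  refine ⟨fun t => Real.exp (2 * K t) * IccExtend hab y t, h0, hint y, fun x hx => ?_⟩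
  exact (hyy x hx).trans (by beta_reduce; rw [h0])

/-- The Prüfer right hand side. -/
noncomputable def prF (P Q R : ℝ → ℝ) (E s x : ℝ) : ℝ :=
  P s * Real.cos x ^ 2 + (E * R s - Q s) * Real.sin x ^ 2

theorem sinsq_lip (x y : ℝ) : |Real.sin x ^ 2 - Real.sin y ^ 2| ≤ |x - y| := by
  have h : Real.sin x ^ 2 - Real.sin y ^ 2 = Real.sin (x + y) * Real.sin (x - y) := by
    rw [Real.sin_add, Real.sin_sub]
    nlinarith [Real.sin_sq_add_cos_sq x, Real.sin_sq_add_cos_sq y]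
  rw [h, abs_mul]
  calc _ ≤ 1 * |x - y| := mul_le_mul (Real.abs_sin_le_one _) Real.abs_sin_le_abs
        (abs_nonneg _) zero_le_one
    _ = _ := one_mul _

theorem cossq_lip (x y : ℝ) : |Real.cos x ^ 2 - Real.cos y ^ 2| ≤ |x - y| := by
  rw [Real.cos_sq', Real.cos_sq', sub_sub_sub_cancel_left, abs_sub_comm]
  exact sinsq_lip x y

theorem prF_lip (P Q R : ℝ → ℝ) (E s x y : ℝ) :
    |prF P Q R E s x - prF P Q R E s y| ≤ (|P s| + |E * R s - Q s|) * |x - y| := by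
  have : prF P Q R E s x - prF P Q R E s y = P s * (Real.cos x ^ 2 - Real.cos y ^ 2) +
    (E * R s - Q s) * (Real.sin x ^ 2 - Real.sin y ^ 2) := by unfold prF; ring
  rw [this, add_mul]
  refine (abs_add_le _ _).trans ?_
  rw [abs_mul, abs_mul]
  exact add_le_add (mul_le_mul_of_nonneg_left (cossq_lip x y) (abs_nonneg _))
    (mul_le_mul_of_nonneg_left (sinsq_lip x y) (abs_nonneg _))

theorem prF_int {P Q R : ℝ → ℝ} {a b : ℝ} (hab : a ≤ b) (hP : IntervalIntegrable P volume a b)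
    (hQ : IntervalIntegrable Q volume a b) (hR : IntervalIntegrable R volume a b) (E : ℝ)
    (θ : ℝ → ℝ) (hθ : ContinuousOn θ (Icc a b)) :
    IntervalIntegrable (fun s => prF P Q R E s (θ s)) volume a b := by
  rw [← uIcc_of_le hab] at hθ
  exact (hP.mul_continuousOn ((Real.continuous_cos.comp_continuousOn hθ).pow 2)).add
    (((hR.const_mul E).sub hQ).mul_continuousOn ((Real.continuous_sin.comp_continuousOn hθ).pow 2))

theorem prufer_exists {P Q R : ℝ → ℝ} {a b : ℝ} (hab : a ≤ b) (hP : IntervalIntegrable P volume a b)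
    (hQ : IntervalIntegrable Q volume a b) (hR : IntervalIntegrable R volume a b) (θ0 E : ℝ) :
    ∃ θ : ℝ → ℝ, θ a = θ0 ∧ ACd θ (fun s => prF P Q R E s (θ s)) a b :=
  caratheodory (k := fun s => |P s| + |E * R s - Q s|) hab θ0
    (hP.abs.add ((hR.const_mul E).sub hQ).abs) (fun s => by positivity)
    (prF_lip P Q R E) (prF_int hab hP hQ hR E)

theorem sinc_mul' (x : ℝ) : Real.sinc x * x = Real.sin x := by
  by_cases h : x = 0
  · simp [h]
  · rw [Real.sinc_of_ne_zero h]; field_simp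

theorem pr_nonneg {P Q R θ : ℝ → ℝ} {a b E : ℝ} (hab : a ≤ b) (hP : IntervalIntegrable P volume a b)
    (hQ : IntervalIntegrable Q volume a b) (hR : IntervalIntegrable R volume a b)
    (hP0 : ∀ᵐ x, x ∈ Icc a b → 0 ≤ P x)
    (h : ACd θ (fun s => prF P Q R E s (θ s)) a b) (h0 : 0 ≤ θ a) : 0 ≤ θ b := by
  have hc := h.continuousOn hab
  rw [← uIcc_of_le hab] at hc
  have hA : IntervalIntegrable
      (fun s => (E * R s - Q s) * (Real.sin (θ s) * Real.sinc (θ s))) volume a b :=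
    ((hR.const_mul E).sub hQ).mul_continuousOn
      ((Real.continuous_sin.comp_continuousOn hc).mul (Real.continuous_sinc.comp_continuousOn hc))
  have hg : IntervalIntegrable (fun s => P s * Real.cos (θ s) ^ 2) volume a b :=
    hP.mul_continuousOn ((Real.continuous_cos.comp_continuousOn hc).pow 2)
  have hy : ACd θ (fun s => ((E * R s - Q s) * (Real.sin (θ s) * Real.sinc (θ s))) * θ s +
      P s * Real.cos (θ s) ^ 2) a b := by
    convert h using 1
    funext s
    rw [mul_assoc, mul_assoc, sinc_mul', prF]; ring
  have hg0 : ∀ᵐ x, x ∈ Icc a b → 0 ≤ P x * Real.cos (θ x) ^ 2 := by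
    filter_upwards [hP0] with x hx hxI
    have := hx hxI
    positivity
  refine le_trans ?_ (ACd.lin hab hA hg hy hg0 h0).1
  have : 0 ≤ ∫ s in a..b, P s * Real.cos (θ s) ^ 2 := by
    refine intervalIntegral.integral_nonneg_of_ae_restrict hab ?_
    rw [EventuallyLE, ae_restrict_iff' measurableSet_Icc]
    exact hg0
  positivity

theorem pr_diff {P Q R θ1 θ2 : ℝ → ℝ} {a b E1 E2 : ℝ} (hab : a ≤ b)
    (hP : IntervalIntegrable P volume a b)
    (hQ : IntervalIntegrable Q volume a b) (hR : IntervalIntegrable R volume a b)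
    (hR0 : ∀ᵐ x, x ∈ Icc a b → 0 ≤ R x)
    (h1 : ACd θ1 (fun s => prF P Q R E1 s (θ1 s)) a b)
    (h2 : ACd θ2 (fun s => prF P Q R E2 s (θ2 s)) a b) (h0 : θ1 a = θ2 a) (hE : E1 ≤ E2) :
    (∃ c > 0, c * ((E2 - E1) * ∫ t in a..b, R t * Real.sin (θ1 t) ^ 2) ≤ θ2 b - θ1 b) ∧
    θ2 b - θ1 b ≤ Real.exp (2 * ((∫ t in a..b, |P t|) + (∫ t in a..b, |Q t|) +
      |E2| * ∫ t in a..b, |R t|)) * ((E2 - E1) * ∫ t in a..b, R t) := by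
  have hc1 := h1.continuousOn hab
  have hc2 := h2.continuousOn hab
  rw [← uIcc_of_le hab] at hc1 hc2
  set A : ℝ → ℝ := fun s => (E2 * R s - Q s - P s) *
    (Real.sin (θ2 s + θ1 s) * Real.sinc (θ2 s - θ1 s)) with hAd
  have hA : IntervalIntegrable A volume a b :=
    (((hR.const_mul E2).sub hQ).sub hP).mul_continuousOn
      ((Real.continuous_sin.comp_continuousOn (hc2.add hc1)).mul
        (Real.continuous_sinc.comp_continuousOn (hc2.sub hc1)))
  have hR1 : IntervalIntegrable (fun s => R s * Real.sin (θ1 s) ^ 2) volume a b :=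
    hR.mul_continuousOn ((Real.continuous_sin.comp_continuousOn hc1).pow 2)
  have hg := hR1.const_mul (E2 - E1)
  have hy : ACd (fun s => θ2 s - θ1 s) (fun s => A s * (θ2 s - θ1 s) +
      (E2 - E1) * (R s * Real.sin (θ1 s) ^ 2)) a b := by
    refine ACd.comp2 (F := fun z => z.1 - z.2) hab h2 h1 (by fun_prop) ?_
    refine Eventually.of_forall fun x _ d2 d1 => ?_
    convert! d2.sub d1 using 1
    simp only [hAd, prF]
    rw [mul_assoc, mul_assoc, sinc_mul', Real.sin_add, Real.sin_sub, Real.cos_sq', Real.cos_sq']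
    have e1 := Real.sin_sq_add_cos_sq (θ1 x)
    have e2 := Real.sin_sq_add_cos_sq (θ2 x)
    have e3 : (Real.sin (θ2 x) * Real.cos (θ1 x) + Real.cos (θ2 x) * Real.sin (θ1 x)) *
        (Real.sin (θ2 x) * Real.cos (θ1 x) - Real.cos (θ2 x) * Real.sin (θ1 x)) =
        Real.sin (θ2 x) ^ 2 - Real.sin (θ1 x) ^ 2 := by
      have : Real.cos (θ1 x) ^ 2 = 1 - Real.sin (θ1 x) ^ 2 := by linarith
      have h' : Real.cos (θ2 x) ^ 2 = 1 - Real.sin (θ2 x) ^ 2 := by linarith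
      ring_nf; rw [this, h']; ring
    rw [e3]; ring
  have hg0 : ∀ᵐ x, x ∈ Icc a b → 0 ≤ (E2 - E1) * (R x * Real.sin (θ1 x) ^ 2) := by
    filter_upwards [hR0] with x hx hxI
    exact mul_nonneg (sub_nonneg.2 hE) (mul_nonneg (hx hxI) (sq_nonneg _))
  have key := ACd.lin hab hA hg hy hg0 (by rw [h0, sub_self])
  simp only [intervalIntegral.integral_const_mul, h0, sub_self, zero_add] at key
  set M := ∫ t in a..b, |A t| with hM
  refine ⟨⟨Real.exp (-M) * Real.exp (-M), by positivity, by rw [mul_assoc]; exact key.1⟩,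
    key.2.trans ?_⟩
  have hMM : M ≤ (∫ t in a..b, |P t|) + (∫ t in a..b, |Q t|) + |E2| * ∫ t in a..b, |R t| := by
    rw [← intervalIntegral.integral_const_mul, ← intervalIntegral.integral_add hP.abs hQ.abs,
      ← intervalIntegral.integral_add (hP.abs.add hQ.abs) (hR.abs.const_mul _)]
    refine intervalIntegral.integral_mono hab hA.abs
      ((hP.abs.add hQ.abs).add (hR.abs.const_mul _)) fun s => ?_
    simp only [hAd, abs_mul]
    have : |Real.sin (θ2 s + θ1 s)| * |Real.sinc (θ2 s - θ1 s)| ≤ 1 :=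
      mul_le_one₀ (Real.abs_sin_le_one _) (abs_nonneg _) (Real.abs_sinc_le_one _)
    refine (mul_le_of_le_one_right (abs_nonneg _) this).trans ?_
    have h3 := abs_sub (E2 * R s - Q s) (P s)
    have h4 := abs_sub (E2 * R s) (Q s)
    rw [abs_mul] at h4
    linarith
  rw [← mul_assoc, ← Real.exp_add]
  have hI0 : 0 ≤ ∫ t in a..b, R t * Real.sin (θ1 t) ^ 2 := by
    refine intervalIntegral.integral_nonneg_of_ae_restrict hab ?_
    rw [EventuallyLE, ae_restrict_iff' measurableSet_Icc]
    filter_upwards [hR0] with x hx hxI using mul_nonneg (hx hxI) (sq_nonneg _)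
  have hI1 : ∫ t in a..b, R t * Real.sin (θ1 t) ^ 2 ≤ ∫ t in a..b, R t := by
    refine intervalIntegral.integral_mono_ae_restrict hab hR1 hR ?_
    rw [EventuallyLE, ae_restrict_iff' measurableSet_Icc]
    filter_upwards [hR0] with x hx hxI
    exact mul_le_of_le_one_right (hx hxI) (Real.sin_sq_le_one _)
  refine mul_le_mul (Real.exp_le_exp.2 (by linarith)) ?_ (mul_nonneg (sub_nonneg.2 hE) hI0)
    (Real.exp_pos _).le
  exact mul_le_mul_of_nonneg_left hI1 (sub_nonneg.2 hE)

theorem countable_zero (g : ℝ → ℝ) : {x | g x = 0 ∧ ∃ d ≠ 0, HasDerivAt g d x}.Countable := by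
  set I : Set ℝ := {x | g x = 0 ∧ ∃ d ≠ 0, HasDerivAt g d x} with hI
  refine (countable_setOfPred_isolated_right_within (s := I)).mono ?_
  intro x hx
  refine ⟨hx, ?_⟩
  obtain ⟨hx0, d, hd, hdx⟩ := hx
  have := hdx.eventually_ne (c := 0) hd
  rw [← empty_mem_iff_bot]
  have h3 : ∀ᶠ y in nhdsWithin x (I ∩ Ioi x), False := by
    have h4 : nhdsWithin x (I ∩ Ioi x) ≤ nhdsWithin x {x}ᶜ :=
      nhdsWithin_mono _ fun y hy => ne_of_gt hy.2
    filter_upwards [h4 this, self_mem_nhdsWithin] with y hy hy2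
    exact hy hy2.1.1
  exact h3

theorem pr_pos {P Q R θ : ℝ → ℝ} {a b E : ℝ} (hab : a ≤ b)
    (hR : IntervalIntegrable R volume a b)
    (hR0 : ∀ᵐ x, x ∈ Icc a b → 0 ≤ R x)
    (hZ : volume {x | x ∈ Ioo a b ∧ 0 < P x ∧ 0 < R x} ≠ 0)
    (h : ACd θ (fun s => prF P Q R E s (θ s)) a b) :
    0 < ∫ t in a..b, R t * Real.sin (θ t) ^ 2 := by
  have hc := h.continuousOn hab
  rw [← uIcc_of_le hab] at hc
  have hR1 : IntervalIntegrable (fun s => R s * Real.sin (θ s) ^ 2) volume a b :=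
    hR.mul_continuousOn ((Real.continuous_sin.comp_continuousOn hc).pow 2)
  have hn : ∀ᵐ x, x ∈ Icc a b → 0 ≤ R x * Real.sin (θ x) ^ 2 := by
    filter_upwards [hR0] with x hx hxI using mul_nonneg (hx hxI) (sq_nonneg _)
  have hn' : 0 ≤ᵐ[volume.restrict (Ioc a b)] (fun x => R x * Real.sin (θ x) ^ 2) := by
    rw [EventuallyLE, ae_restrict_iff' measurableSet_Ioc]
    filter_upwards [hn] with x hx hxI using hx (Ioc_subset_Icc_self hxI)
  have hI0 : 0 ≤ ∫ t in a..b, R t * Real.sin (θ t) ^ 2 :=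
    intervalIntegral.integral_nonneg_of_ae_restrict hab (by
      rw [EventuallyLE, ae_restrict_iff' measurableSet_Icc]; exact hn)
  refine lt_of_le_of_ne hI0 fun h0 => hZ ?_
  have hz := (intervalIntegral.integral_eq_zero_iff_of_le_of_nonneg_ae hab hn' hR1).1 h0.symm
  rw [EventuallyEq, ae_restrict_iff' measurableSet_Ioc] at hz
  set I : Set ℝ := {x | Real.sin (θ x) = 0 ∧ ∃ d ≠ 0, HasDerivAt θ d x} with hI
  have hIc : I.Countable := by
    refine (countable_zero (fun x => Real.sin (θ x))).mono ?_
    rintro x ⟨hx0, d, hd, hdx⟩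
    refine ⟨hx0, _, ?_, hdx.sin⟩
    refine mul_ne_zero (fun hcx => ?_) hd
    have := Real.sin_sq_add_cos_sq (θ x)
    rw [hx0, hcx] at this; norm_num at this
  have hI0 : ∀ᵐ x, x ∉ I := by
    rw [ae_iff]; simpa using hIc.measure_zero volume
  have : ∀ᵐ x : ℝ, ¬ (x ∈ Ioo a b ∧ 0 < P x ∧ 0 < R x) := by
    filter_upwards [hz, h.deriv hab, hI0] with x h1 h2 h3 ⟨hx, hp, hr⟩
    have h4 : R x * Real.sin (θ x) ^ 2 = 0 := h1 (Ioo_subset_Ioc_self hx)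
    have h5 : Real.sin (θ x) = 0 := by
      rcases mul_eq_zero.1 h4 with h | h
      · exact absurd h hr.ne'
      · exact pow_eq_zero_iff two_ne_zero |>.1 h
    refine h3 ⟨h5, _, ?_, h2 hx⟩
    have h6 := Real.sin_sq_add_cos_sq (θ x)
    rw [h5] at h6
    have h7 : Real.cos (θ x) ^ 2 = 1 := by linarith
    simp [prF, h5, h7, hp.ne']
  rw [ae_iff] at this
  simpa only [not_not] using this

noncomputable def gz (δ x y : ℝ) : ℝ := 1 / 2 * Real.log ((y + δ * (x + y)) / (x + δ * (x + y)))

theorem gz_neg (δ x y : ℝ) : - gz δ x y = gz δ y x := by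
  unfold gz
  rw [← inv_div (x + δ * (x + y)), Real.log_inv, add_comm y x]; ring

theorem gz_le {δ x y : ℝ} (hd : 0 < δ) (hx : 0 ≤ x) (hy : 0 ≤ y) :
    gz δ x y ≤ Real.log ((1 + δ) / δ) := by
  have h0 : 0 ≤ Real.log ((1 + δ) / δ) := Real.log_nonneg (by rw [le_div_iff₀ hd]; linarith)
  unfold gz
  rcases (add_nonneg hx hy).eq_or_lt with h | h
  · rw [← h]; have : y = 0 := by linarith
    simp [this, h0]
  · have h1 : Real.log ((y + δ * (x + y)) / (x + δ * (x + y))) ≤ Real.log ((1 + δ) / δ) := by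
      apply Real.log_le_log (by positivity)
      rw [div_le_div_iff₀ (by positivity) hd]
      nlinarith [mul_nonneg hd.le hx, mul_nonneg hd.le hy]
    linarith

theorem gz_abs {δ x y : ℝ} (hd : 0 < δ) (hx : 0 ≤ x) (hy : 0 ≤ y) :
    |gz δ x y| ≤ Real.log ((1 + δ) / δ) :=
  abs_le'.2 ⟨gz_le hd hx hy, by rw [gz_neg]; exact gz_le hd hy hx⟩

theorem gz_close {δ x y : ℝ} (hd : 0 < δ) (hx : 0 ≤ x) (hy : 0 ≤ y) :
    |Real.exp (gz δ x y) * x - Real.sqrt (x * y)| ≤ Real.sqrt δ * (x + y) := by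
  rcases (add_nonneg hx hy).eq_or_lt with h | h
  · have : y = 0 := by linarith
    have hx' : x = 0 := by linarith
    rw [this, hx']; simp
  have hB : 0 < x + δ * (x + y) := by positivity
  have hA : 0 < y + δ * (x + y) := by positivity
  set X := Real.exp (gz δ x y) * x with hX
  set Y := Real.sqrt (x * y) with hY
  have hX0 : 0 ≤ X := by positivity
  have hY0 : 0 ≤ Y := by positivity
  have hX2 : X ^ 2 = (y + δ * (x + y)) / (x + δ * (x + y)) * x ^ 2 := by
    rw [hX, mul_pow, ← Real.exp_nat_mul, gz]
    congr 1
    rw [← mul_assoc]; norm_num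
    exact Real.exp_log (by positivity)
  have hY2 : Y ^ 2 = x * y := Real.sq_sqrt (by positivity)
  have h2 : |X ^ 2 - Y ^ 2| ≤ δ * (x + y) ^ 2 := by
    have : X ^ 2 - Y ^ 2 = δ * (x + y) * (x - y) * (x / (x + δ * (x + y))) := by
      rw [hX2, hY2]; field_simp; ring
    rw [this, abs_mul, abs_mul, abs_of_nonneg (a := δ * (x + y)) (by positivity),
      abs_of_nonneg (a := x / (x + δ * (x + y))) (by positivity)]
    have h3 : x / (x + δ * (x + y)) ≤ 1 := (div_le_one hB).2 (by nlinarith)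
    have h4 : |x - y| ≤ x + y := abs_le.2 ⟨by linarith, by linarith⟩
    calc _ ≤ δ * (x + y) * |x - y| * 1 := by gcongr
      _ ≤ δ * (x + y) * (x + y) * 1 := by gcongr
      _ = _ := by ring
  refine abs_le_of_sq_le_sq ?_ (by positivity)
  rw [mul_pow, Real.sq_sqrt hd.le]
  refine le_trans ?_ h2
  have : X ^ 2 - Y ^ 2 = (X - Y) * (X + Y) := by ring
  rw [this, abs_mul, abs_of_nonneg (a := X + Y) (by positivity), ← sq_abs (X - Y), sq]
  gcongr
  exact abs_le.2 ⟨by linarith, by linarith⟩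

theorem exp_lip {x y A : ℝ} (hx : x ≤ A) (hy : y ≤ A) :
    |Real.exp x - Real.exp y| ≤ Real.exp A * |x - y| := by
  wlog h : y ≤ x generalizing x y
  · rw [abs_sub_comm, abs_sub_comm x]; exact this hy hx (le_of_not_ge h)
  have h1 := Real.add_one_le_exp (y - x)
  rw [abs_of_nonneg (sub_nonneg.2 (Real.exp_le_exp.2 h)), abs_of_nonneg (sub_nonneg.2 h)]
  have h2 : Real.exp y = Real.exp x * Real.exp (y - x) := by rw [← Real.exp_add]; ring_nf
  calc _ = Real.exp x * (1 - Real.exp (y - x)) := by rw [mul_sub, ← h2]; ring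
    _ ≤ Real.exp x * (x - y) := mul_le_mul_of_nonneg_left (by linarith) (Real.exp_pos _).le
    _ ≤ _ := by gcongr

theorem exists_poly {P R : ℝ → ℝ} {a b : ℝ} (hab : a ≤ b) (hP : IntervalIntegrable P volume a b)
    (hR : IntervalIntegrable R volume a b) (hP0 : ∀ᵐ x, x ∈ Icc a b → 0 ≤ P x)
    (hR0 : ∀ᵐ x, x ∈ Icc a b → 0 ≤ R x) {ε : ℝ} (hε : 0 < ε) :
    ∃ g : Polynomial ℝ, ∫ s in a..b, (|Real.exp (g.eval s) * P s - Real.sqrt (P s * R s)| +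
      |Real.exp (-g.eval s) * R s - Real.sqrt (P s * R s)|) ≤ ε := by
  have hP0' : ∀ᵐ x ∂(volume.restrict (Ioc a b)), 0 ≤ P x := by
    rw [ae_restrict_iff' measurableSet_Ioc]
    filter_upwards [hP0] with x hx h using hx (Ioc_subset_Icc_self h)
  have hR0' : ∀ᵐ x ∂(volume.restrict (Ioc a b)), 0 ≤ R x := by
    rw [ae_restrict_iff' measurableSet_Ioc]
    filter_upwards [hR0] with x hx h using hx (Ioc_subset_Icc_self h)
  rw [intervalIntegrable_iff_integrableOn_Ioc_of_le hab] at hP hR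
  set m := volume.restrict (Ioc a b) with hm
  have hS : Integrable (fun s => P s + R s) m := hP.add hR
  set I := ∫ s, (P s + R s) ∂m with hI
  have hI0 : 0 ≤ I := integral_nonneg_of_ae (by
    filter_upwards [hP0', hR0'] with x h1 h2 using add_nonneg h1 h2)
  set d := ε / (8 * (I + 1)) with hd
  have hd0 : 0 < d := by positivity
  set δ := d ^ 2 with hδ
  have hδ0 : 0 < δ := by positivity
  have hsδ : Real.sqrt δ = d := Real.sqrt_sq hd0.le
  set A := Real.log ((1 + δ) / δ) with hA
  have hA0 : 0 ≤ A := Real.log_nonneg (by rw [le_div_iff₀ hδ0]; linarith)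
  set K := Real.exp (A + 1) with hK
  have hK0 : 0 < K := Real.exp_pos _
  set g0 : ℝ → ℝ := fun s => gz δ (P s) (R s) with hg0
  have hgm : Measurable (fun z : ℝ × ℝ => gz δ z.1 z.2) := by unfold gz; fun_prop
  have hg0m : AEStronglyMeasurable g0 m :=
    (hgm.comp_aemeasurable (hP.1.aemeasurable.prodMk hR.1.aemeasurable)).aestronglyMeasurable
  set η := m.withDensity (fun s => ENNReal.ofReal (P s + R s)) with hη
  have : IsFiniteMeasure η := isFiniteMeasure_withDensity_ofReal hS.2
  have hac : η ≪ m := withDensity_absolutelyContinuous _ _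
  have hgb : ∀ᵐ x ∂m, |g0 x| ≤ A := by
    filter_upwards [hP0', hR0'] with x h1 h2 using gz_abs hδ0 h1 h2
  have hgI : Integrable g0 η := Integrable.of_bound (hg0m.mono_ac hac) A
    (hac.ae_le hgb)
  obtain ⟨f, hf, hfI⟩ := hgI.exists_boundedContinuous_integral_sub_le (ε := ε / (4 * K))
    (by positivity)
  set e := min 1 (ε / (4 * K * (I + 1))) with he
  have he0 : 0 < e := by positivity
  obtain ⟨g, hg⟩ := exists_polynomial_near_of_continuousOn a b (fun x => max (-A) (min A (f x)))
    (by fun_prop) e he0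
  refine ⟨g, ?_⟩
  rw [intervalIntegral.integral_of_le hab]
  have hfS : Integrable (fun s => (P s + R s) * ‖g0 s - f s‖) m ∧
      ∫ s, (P s + R s) * ‖g0 s - f s‖ ∂m ≤ ε / (4 * K) := by
    have hlt : ∀ᵐ s ∂m, ENNReal.ofReal (P s + R s) < ∞ := by simp
    have hme : AEMeasurable (fun s => ENNReal.ofReal (P s + R s)) m :=
      hS.1.aemeasurable.ennreal_ofReal
    have e1 : (fun s => (P s + R s) * ‖g0 s - f s‖) =ᵐ[m]
        (fun s => (ENNReal.ofReal (P s + R s)).toReal • ‖g0 s - f s‖) := by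
      filter_upwards [hP0', hR0'] with x h1 h2
      rw [ENNReal.toReal_ofReal (add_nonneg h1 h2), smul_eq_mul]
    constructor
    · rw [integrable_congr e1, ← integrable_withDensity_iff_integrable_smul₀' hme hlt]
      exact (hgI.sub hfI).norm
    · rw [integral_congr_ae e1, ← integral_withDensity_eq_integral_toReal_smul₀ hme hlt]
      exact hf
  have hbd : ∀ᵐ s ∂m, |Real.exp (g.eval s) * P s - Real.sqrt (P s * R s)| +
      |Real.exp (-g.eval s) * R s - Real.sqrt (P s * R s)| ≤
      2 * d * (P s + R s) + (K * ((P s + R s) * ‖g0 s - f s‖) + K * e * (P s + R s)) := by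
    filter_upwards [hP0', hR0', hgb, ae_restrict_mem measurableSet_Ioc] with s h1 h2 h3 h4
    have h5 := hg s (Ioc_subset_Icc_self h4)
    have h6 := gz_close hδ0 h1 h2
    have h7 := gz_close hδ0 h2 h1
    rw [← gz_neg, mul_comm (R s) (P s)] at h7
    rw [hsδ] at h6 h7
    have h3' := abs_le.1 h3
    have hcl : |max (-A) (min A (f s))| ≤ A :=
      abs_le.2 ⟨le_max_left _ _, max_le (by linarith) (min_le_left _ _)⟩
    have hcl' := abs_le.1 hcl
    have hclg : |max (-A) (min A (f s)) - g0 s| ≤ ‖g0 s - f s‖ := by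
      have h8 : g0 s = max (-A) (min A (g0 s)) := by
        rw [min_eq_right h3'.2, max_eq_right h3'.1]
      conv_lhs => rw [h8]
      rw [Real.norm_eq_abs, abs_sub_comm (g0 s)]
      refine (abs_max_sub_max_le_max _ _ _ _).trans (max_le (by simp) ?_)
      exact (abs_min_sub_min_le_max _ _ _ _).trans (max_le (by simp) le_rfl)
    have he1 : e ≤ 1 := min_le_left _ _
    have h9 := abs_le.1 h5.le
    have hga : g.eval s ≤ A + 1 := by linarith
    have hgb' : - g.eval s ≤ A + 1 := by linarith
    have hgg : |g.eval s - g0 s| ≤ ‖g0 s - f s‖ + e := by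
      have := abs_sub_le (g.eval s) (max (-A) (min A (f s))) (g0 s); linarith
    have l1 := exp_lip hga (show g0 s ≤ A + 1 by linarith)
    have l2 := exp_lip hgb' (show - g0 s ≤ A + 1 by linarith)
    rw [show -g.eval s - -g0 s = -(g.eval s - g0 s) by ring, abs_neg] at l2
    have t1 : |Real.exp (g.eval s) * P s - Real.sqrt (P s * R s)| ≤
        d * (P s + R s) + K * |g.eval s - g0 s| * P s := by
      have := abs_sub_le (Real.exp (g.eval s) * P s) (Real.exp (g0 s) * P s) (Real.sqrt (P s * R s))
      rw [← sub_mul, abs_mul, abs_of_nonneg h1] at this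
      have := mul_le_mul_of_nonneg_right l1 h1
      linarith
    have t2 : |Real.exp (-g.eval s) * R s - Real.sqrt (P s * R s)| ≤
        d * (P s + R s) + K * |g.eval s - g0 s| * R s := by
      have := abs_sub_le (Real.exp (-g.eval s) * R s) (Real.exp (-g0 s) * R s)
        (Real.sqrt (P s * R s))
      rw [← sub_mul, abs_mul, abs_of_nonneg h2] at this
      have := mul_le_mul_of_nonneg_right l2 h2
      linarith
    have t3 : K * |g.eval s - g0 s| * (P s + R s) ≤ K * (‖g0 s - f s‖ + e) * (P s + R s) := by
      gcongr
    linarith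
  have hint := (hS.const_mul (2 * d)).add ((hfS.1.const_mul K).add (hS.const_mul (K * e)))
  refine (integral_mono_of_nonneg (Eventually.of_forall fun s => by positivity) hint hbd).trans ?_
  simp only [Pi.add_apply]
  rw [integral_add (g := fun x => K * ((P x + R x) * ‖g0 x - f x‖) + K * e * (P x + R x))
    (hS.const_mul (2 * d)) ((hfS.1.const_mul K).add (hS.const_mul (K * e)))]
  rw [integral_add (hfS.1.const_mul K) (hS.const_mul (K * e)), integral_const_mul,
    integral_const_mul, integral_const_mul]
  have b1 : 2 * d * I ≤ ε / 4 := by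
    have : 2 * d * (I + 1) = ε / 4 := by rw [hd]; field_simp; norm_num
    nlinarith
  have b2 : K * ∫ s, (P s + R s) * ‖g0 s - f s‖ ∂m ≤ ε / 4 := by
    calc _ ≤ K * (ε / (4 * K)) := by gcongr; exact hfS.2
      _ = _ := by field_simp
  have b3 : K * e * I ≤ ε / 4 := by
    calc K * e * I ≤ K * (ε / (4 * K * (I + 1))) * (I + 1) := by
          gcongr
          · exact min_le_right _ _
          · linarith
      _ = _ := by field_simp
  linarith

theorem sqrt_int {P R : ℝ → ℝ} {a b : ℝ} (hab : a ≤ b) (hP : IntervalIntegrable P volume a b)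
    (hR : IntervalIntegrable R volume a b) (hP0 : ∀ᵐ x, x ∈ Icc a b → 0 ≤ P x)
    (hR0 : ∀ᵐ x, x ∈ Icc a b → 0 ≤ R x) :
    IntervalIntegrable (fun s => Real.sqrt (P s * R s)) volume a b := by
  rw [intervalIntegrable_iff_integrableOn_Ioc_of_le hab] at *
  refine Integrable.mono' (hP.add hR)
    (Real.continuous_sqrt.comp_aestronglyMeasurable (hP.1.mul hR.1)) ?_
  rw [ae_restrict_iff' measurableSet_Ioc]
  filter_upwards [hP0, hR0] with x h1 h2 hx
  have h1 := h1 (Ioc_subset_Icc_self hx)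
  have h2 := h2 (Ioc_subset_Icc_self hx)
  rw [Real.norm_eq_abs, abs_of_nonneg (Real.sqrt_nonneg _), Pi.add_apply]
  apply Real.sqrt_le_iff.2 ⟨by positivity, by nlinarith⟩

theorem arctan_lt (x : ℝ) : |Real.arctan x| ≤ Real.pi / 2 :=
  abs_le.2 ⟨(Real.neg_pi_div_two_lt_arctan x).le, (Real.arctan_lt_pi_div_two x).le⟩

theorem modPrufer {P Q R θ : ℝ → ℝ} {a b w : ℝ} (hab : a ≤ b) (hw : 0 < w)
    (hP : IntervalIntegrable P volume a b)
    (hQ : IntervalIntegrable Q volume a b) (hR : IntervalIntegrable R volume a b)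
    (hP0 : ∀ᵐ x, x ∈ Icc a b → 0 ≤ P x) (hR0 : ∀ᵐ x, x ∈ Icc a b → 0 ≤ R x)
    (h : ACd θ (fun s => prF P Q R (w ^ 2) s (θ s)) a b) (g : Polynomial ℝ) :
    |θ b - θ a - w * ∫ s in a..b, Real.sqrt (P s * R s)| ≤ Real.pi +
      (w * (∫ s in a..b, (|Real.exp (g.eval s) * P s - Real.sqrt (P s * R s)| +
      |Real.exp (-g.eval s) * R s - Real.sqrt (P s * R s)|)) +
      (1 / w * (∫ s in a..b, Real.exp (-g.eval s) * |Q s|) +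
        ∫ s in a..b, |g.derivative.eval s|)) := by
  set F : ℝ × ℝ → ℝ := fun z => z.1 + Real.arctan (((w * Real.exp z.2 - 1) *
    (Real.sin z.1 * Real.cos z.1)) / (Real.cos z.1 ^ 2 + w * Real.exp z.2 * Real.sin z.1 ^ 2)) with hF
  have hpos : ∀ x y : ℝ, 0 < y → 0 < Real.cos x ^ 2 + y * Real.sin x ^ 2 := by
    intro x y hy
    by_cases hs : Real.sin x = 0
    · have := Real.sin_sq_add_cos_sq x
      rw [hs] at this ⊢; nlinarith
    · positivity
  have hFc : ContDiff ℝ 1 F := by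
    refine contDiff_fst.add (Real.contDiff_arctan.comp (ContDiff.div (by fun_prop) (by fun_prop) ?_))
    intro z; exact (hpos _ _ (by positivity)).ne'
  have hgA : ACd (fun s => g.eval s) (fun s => g.derivative.eval s) a b := by
    refine ⟨(by fun_prop : Continuous fun s => g.derivative.eval s).intervalIntegrable _ _,
      fun x _ => ?_⟩
    rw [intervalIntegral.integral_eq_sub_of_hasDerivAt (f := fun s => g.eval s)
      (fun y _ => g.hasDerivAt y)
      ((by fun_prop : Continuous fun s => g.derivative.eval s).intervalIntegrable _ _)]
    ring
  set K : ℝ → ℝ := fun s => w * Real.exp (g.eval s) with hK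
  have hKp : ∀ s, 0 < K s := fun s => by positivity
  set D : ℝ → ℝ := fun s => Real.cos (θ s) ^ 2 + K s ^ 2 * Real.sin (θ s) ^ 2 with hD
  have hDp : ∀ s, 0 < D s := fun s => hpos _ _ (by have := hKp s; positivity)
  have hA : ACd (fun s => F (θ s, g.eval s)) (fun s => (K s * prF P Q R (w ^ 2) s (θ s) +
      g.derivative.eval s * K s * (Real.sin (θ s) * Real.cos (θ s))) / D s) a b := by
    refine ACd.comp2 hab h hgA hFc (Eventually.of_forall fun x _ d1 d2 => ?_)
    have dK : HasDerivAt K (K x * g.derivative.eval x) x := by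
      have := (d2.exp).const_mul w
      simpa only [hK, mul_assoc] using this
    have dM : HasDerivAt (fun s => Real.cos (θ s) ^ 2 + K s * Real.sin (θ s) ^ 2) _ x :=
      (d1.cos.pow 2).add (dK.mul (d1.sin.pow 2))
    have dN : HasDerivAt (fun s => (K s - 1) * (Real.sin (θ s) * Real.cos (θ s))) _ x :=
      (dK.sub_const 1).mul (d1.sin.mul d1.cos)
    have hM := hpos (θ x) _ (hKp x)
    have := d1.add (dN.div dM hM.ne').arctan
    refine HasDerivAt.congr_deriv this ?_
    simp only [Pi.div_apply]
    set s := Real.sin (θ x) with hs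
    set c := Real.cos (θ x) with hc
    set θ' := prF P Q R (w ^ 2) x (θ x) with hθ'
    set G := g.derivative.eval x with hG
    have hsc : c ^ 2 = 1 - s ^ 2 := by rw [hs, hc, Real.cos_sq']
    have hDx := hDp x
    simp only [hD] at hDx ⊢
    rw [← hs, ← hc] at hDx ⊢
    generalize K x = k at *
    have e1 : 1 + ((k - 1) * (s * c) / (c ^ 2 + k * s ^ 2)) ^ 2 =
        (c ^ 2 + k ^ 2 * s ^ 2) / (c ^ 2 + k * s ^ 2) ^ 2 := by
      field_simp
      rw [show (c ^ 2 + k * s ^ 2) ^ 2 + (k - 1) ^ 2 * s ^ 2 * c ^ 2 =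
        (c ^ 2) ^ 2 + 2 * k * c ^ 2 * s ^ 2 + k ^ 2 * s ^ 4 + (k - 1) ^ 2 * s ^ 2 * c ^ 2 by ring,
        hsc]
      ring
    rw [e1]
    rw [eq_div_iff hDx.ne', add_mul]
    field_simp
    have : c ^ 3 = c * (1 - s ^ 2) := by rw [← hsc]; ring
    have h4 : c ^ 4 = (1 - s ^ 2) ^ 2 := by rw [← hsc]; ring
    ring_nf
    rw [h4, this, hsc]
    ring
  have hS := sqrt_int hab hP hR hP0 hR0
  have hφ := hA.integral hab
  have hc := h.continuousOn hab
  have ge : Continuous fun s => Real.exp (g.eval s) := by fun_prop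
  have ge' : Continuous fun s => Real.exp (-g.eval s) := by fun_prop
  have gd : Continuous fun s => |g.derivative.eval s| := by fun_prop
  have i1 : IntervalIntegrable (fun s => |Real.exp (g.eval s) * P s - Real.sqrt (P s * R s)| +
      |Real.exp (-g.eval s) * R s - Real.sqrt (P s * R s)|) volume a b :=
    ((hP.continuousOn_mul ge.continuousOn).sub hS).abs.add
      ((hR.continuousOn_mul ge'.continuousOn).sub hS).abs
  have i2 : IntervalIntegrable (fun s => Real.exp (-g.eval s) * |Q s|) volume a b :=
    hQ.abs.continuousOn_mul ge'.continuousOn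
  have i3 : IntervalIntegrable (fun s => |g.derivative.eval s|) volume a b :=
    gd.intervalIntegrable _ _
  have hbd : ∀ᵐ s ∂volume, s ∈ Ioc a b → ‖(K s * prF P Q R (w ^ 2) s (θ s) +
      g.derivative.eval s * K s * (Real.sin (θ s) * Real.cos (θ s))) / D s -
      w * Real.sqrt (P s * R s)‖ ≤ w * (|Real.exp (g.eval s) * P s - Real.sqrt (P s * R s)| +
      |Real.exp (-g.eval s) * R s - Real.sqrt (P s * R s)|) + (1 / w * (Real.exp (-g.eval s) * |Q s|)
        + |g.derivative.eval s|) := by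
    refine Eventually.of_forall fun x _ => ?_
    have hDx := hDp x
    have hk := hKp x
    set l := Real.cos (θ x) ^ 2 / D x with hl
    have hl0 : 0 ≤ l := by positivity
    have hl1 : 1 - l = K x ^ 2 * Real.sin (θ x) ^ 2 / D x := by
      rw [hl, eq_div_iff hDx.ne', sub_mul, div_mul_cancel₀ _ hDx.ne']; simp only [hD]; ring
    have hl2 : 0 ≤ 1 - l := by rw [hl1]; positivity
    set C := Real.exp (g.eval x) with hC
    have hC0 : 0 < C := Real.exp_pos _
    have hCi : Real.exp (-g.eval x) = C⁻¹ := Real.exp_neg _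
    have hKx : K x = w * C := rfl
    have hm : (K x * prF P Q R (w ^ 2) x (θ x) +
      g.derivative.eval x * K x * (Real.sin (θ x) * Real.cos (θ x))) / D x -
      w * Real.sqrt (P x * R x) = w * (l * (C * P x - Real.sqrt (P x * R x)) +
        (1 - l) * (C⁻¹ * R x - Real.sqrt (P x * R x))) + (- (1 / w * (C⁻¹ * Q x) * (1 - l))
        + g.derivative.eval x * (K x * (Real.sin (θ x) * Real.cos (θ x)) / D x)) := by
      have : w * (l * (C * P x - Real.sqrt (P x * R x)) +
        (1 - l) * (C⁻¹ * R x - Real.sqrt (P x * R x))) = w * (l * (C * P x)) +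
        w * ((1 - l) * (C⁻¹ * R x)) - w * Real.sqrt (P x * R x) := by ring
      rw [this, hl1, hl, hKx, prF]
      field_simp
      ring
    have hsc : |K x * (Real.sin (θ x) * Real.cos (θ x)) / D x| ≤ 1 := by
      rw [abs_div, abs_of_pos hDx, div_le_one hDx]
      refine abs_le.2 ⟨?_, ?_⟩ <;> simp only [hD] <;>
      nlinarith [sq_nonneg (Real.cos (θ x) + K x * Real.sin (θ x)),
        sq_nonneg (Real.cos (θ x) - K x * Real.sin (θ x))]
    rw [hm, Real.norm_eq_abs, hCi]
    refine (abs_add_le _ _).trans (add_le_add ?_ ((abs_add_le _ _).trans (add_le_add ?_ ?_)))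
    · rw [abs_mul, abs_of_pos hw]
      refine mul_le_mul_of_nonneg_left ((abs_add_le _ _).trans (add_le_add ?_ ?_)) hw.le
      · rw [abs_mul, abs_of_nonneg hl0]; exact mul_le_of_le_one_left (abs_nonneg _) (by linarith)
      · rw [abs_mul, abs_of_nonneg hl2]; exact mul_le_of_le_one_left (abs_nonneg _) (by linarith)
    · rw [abs_neg, abs_mul, abs_of_nonneg hl2, abs_mul, abs_mul, abs_of_pos (inv_pos.2 hC0),
        abs_of_pos (one_div_pos.2 hw)]
      exact mul_le_of_le_one_right (by positivity) (by linarith)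
    · rw [abs_mul]; exact mul_le_of_le_one_right (abs_nonneg _) hsc
  have hfin := intervalIntegral.norm_integral_le_of_norm_le hab hbd
    ((i1.const_mul w).add ((i2.const_mul (1 / w)).add i3))
  rw [intervalIntegral.integral_sub hA.1 (hS.const_mul w), intervalIntegral.integral_const_mul, hφ,
    intervalIntegral.integral_add (i1.const_mul w) ((i2.const_mul (1 / w)).add i3),
    intervalIntegral.integral_add (i2.const_mul (1 / w)) i3, intervalIntegral.integral_const_mul,
    intervalIntegral.integral_const_mul, Real.norm_eq_abs] at hfin
  simp only [hF] at hfin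
  have e1 := arctan_lt (((w * Real.exp (g.eval b) - 1) *
    (Real.sin (θ b) * Real.cos (θ b))) / (Real.cos (θ b) ^ 2 + w * Real.exp (g.eval b) * Real.sin (θ b) ^ 2))
  have e2 := arctan_lt (((w * Real.exp (g.eval a) - 1) *
    (Real.sin (θ a) * Real.cos (θ a))) / (Real.cos (θ a) ^ 2 + w * Real.exp (g.eval a) * Real.sin (θ a) ^ 2))
  rw [abs_le] at *
  constructor <;> linarith [hfin.1, hfin.2, e1.1, e1.2, e2.1, e2.2]

theorem theta_package {P Q R : ℝ → ℝ} {a b φ : ℝ} (hab : a ≤ b) (hφ : 0 ≤ φ)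
    (hP : IntervalIntegrable P volume a b)
    (hQ : IntervalIntegrable Q volume a b) (hR : IntervalIntegrable R volume a b)
    (hP0 : ∀ᵐ x, x ∈ Icc a b → 0 ≤ P x) (hR0 : ∀ᵐ x, x ∈ Icc a b → 0 ≤ R x)
    (hZ : volume {x | x ∈ Ioo a b ∧ 0 < P x ∧ 0 < R x} ≠ 0) :
    ∃ θ : ℝ → ℝ → ℝ, (∀ E, θ E a = φ ∧ ACd (θ E) (fun s => prF P Q R E s (θ E s)) a b) ∧
      Continuous (fun E => θ E b) ∧ StrictMono (fun E => θ E b) ∧ (∀ E, 0 ≤ θ E b) ∧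
      Tendsto (fun w => θ (w ^ 2) b / w) atTop (nhds (∫ s in a..b, Real.sqrt (P s * R s))) := by
  choose θ hθa hθ using fun E => prufer_exists hab hP hQ hR φ E
  have hdiff := fun E1 E2 (hE : E1 ≤ E2) => pr_diff hab hP hQ hR hR0 (hθ E1) (hθ E2)
    ((hθa E1).trans (hθa E2).symm) hE
  have hpos := fun E => pr_pos hab hR hR0 hZ (hθ E)
  have hmono : StrictMono (fun E => θ E b) := by
    intro E1 E2 hE
    obtain ⟨c, hc, h⟩ := (hdiff E1 E2 hE.le).1
    have := mul_pos hc (mul_pos (sub_pos.2 hE) (hpos E1))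
    simp only; linarith
  refine ⟨θ, fun E => ⟨hθa E, hθ E⟩, ?_, hmono, ?_, ?_⟩
  · rw [continuous_iff_continuousAt]
    intro E0
    set IP := ∫ t in a..b, |P t|
    set IQ := ∫ t in a..b, |Q t|
    set IR := ∫ t in a..b, |R t|
    have hIR : 0 ≤ IR := intervalIntegral.integral_nonneg hab fun _ _ => abs_nonneg _
    have hIR1 : ∫ t in a..b, R t ≤ IR :=
      intervalIntegral.integral_mono hab hR hR.abs fun _ => le_abs_self _
    set M := |E0| + 1
    have key : ∀ E1 E2, E1 ≤ E2 → |E2| ≤ M → θ E2 b - θ E1 b ≤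
        Real.exp (2 * (IP + IQ + M * IR)) * IR * (E2 - E1) := by
      intro E1 E2 h1 h2
      refine (hdiff E1 E2 h1).2.trans ?_
      rw [mul_assoc, mul_comm IR]
      have := sub_nonneg.2 h1
      have h0 : 0 ≤ (E2 - E1) * IR := by positivity
      calc _ ≤ Real.exp (2 * (IP + IQ + |E2| * IR)) * ((E2 - E1) * IR) := by gcongr
        _ ≤ _ := by gcongr
    refine continuousAt_of_locally_lipschitz (r := 1) one_pos
      (Real.exp (2 * (IP + IQ + M * IR)) * IR) fun y hy => ?_
    rw [Real.dist_eq] at *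
    have hyM : |y| ≤ M := by
      have := abs_sub_abs_le_abs_sub y E0
      simp only [M]; linarith
    have h0M : |E0| ≤ M := by simp only [M]; linarith
    rw [Real.dist_eq]
    rcases le_total y E0 with h | h
    · rw [abs_sub_comm, abs_sub_comm y, abs_of_nonneg (sub_nonneg.2 (hmono.monotone h)),
        abs_of_nonneg (sub_nonneg.2 h)]
      exact key _ _ h h0M
    · rw [abs_of_nonneg (sub_nonneg.2 (hmono.monotone h)), abs_of_nonneg (sub_nonneg.2 h)]
      exact key _ _ h hyM
  · intro E
    exact pr_nonneg hab hP hQ hR hP0 (hθ E) (by rw [hθa]; exact hφ)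
  · rw [Metric.tendsto_atTop]
    intro ε hε
    obtain ⟨g, hg⟩ := exists_poly hab hP hR hP0 hR0 (half_pos hε)
    set M1 := ∫ s in a..b, Real.exp (-g.eval s) * |Q s|
    set M2 := ∫ s in a..b, |g.derivative.eval s|
    have hM1 : 0 ≤ M1 := intervalIntegral.integral_nonneg hab fun _ _ => by positivity
    have hM2 : 0 ≤ M2 := intervalIntegral.integral_nonneg hab fun _ _ => by positivity
    have hpi := Real.pi_pos
    refine ⟨max 1 (2 * (Real.pi + φ + M1 + M2) / ε + 1), fun w hw => ?_⟩
    have hw1 : 1 ≤ w := le_trans (le_max_left _ _) hw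
    have hw2 : 2 * (Real.pi + φ + M1 + M2) / ε < w := by
      have := le_trans (le_max_right _ _) hw; linarith
    have hw0 : 0 < w := by linarith
    have := modPrufer hab hw0 hP hQ hR hP0 hR0 (hθ (w ^ 2)) g
    rw [hθa] at this
    set L := ∫ s in a..b, Real.sqrt (P s * R s)
    rw [Real.dist_eq]
    have e : θ (w ^ 2) b / w - L = (θ (w ^ 2) b - w * L) / w := by field_simp
    rw [e, abs_div, abs_of_pos hw0, div_lt_iff₀ hw0]
    rw [div_lt_iff₀ hε] at hw2
    have h1 : 1 / w * M1 ≤ M1 := mul_le_of_le_one_left hM1 ((div_le_one hw0).2 hw1)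
    have h2 := mul_le_mul_of_nonneg_left hg hw0.le
    have h3 := abs_sub_abs_le_abs_sub (θ (w ^ 2) b - w * L) φ
    rw [abs_of_nonneg hφ, sub_right_comm] at h3
    linarith

theorem counting {Θ : ℝ → ℝ} {L φ : ℝ} (hc : Continuous Θ) (hm : StrictMono Θ) (h0 : ∀ E, 0 ≤ Θ E)
    (hL : 0 < L) (ht : Tendsto (fun w => Θ (w ^ 2) / w) atTop (nhds L))
    (hφ : 0 ≤ φ ∧ φ < Real.pi) {Λ : Set ℝ} (hΛ : ∀ E, E ∈ Λ ↔ ∃ k : ℤ, Θ E = φ + k * Real.pi) :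
    Set.Infinite Λ ∧ BddBelow Λ ∧ (∀ x : ℝ, ¬ AccPt x (Filter.principal Λ)) ∧
    ∃ E : ℕ → ℝ, StrictMono E ∧ Set.range E = Λ ∧
      Filter.Tendsto (fun n => E n / (n : ℝ) ^ 2) Filter.atTop
        (nhds (Real.pi ^ 2 / L ^ 2)) := by
  have hpi := Real.pi_pos
  have hΛ' : ∀ E, E ∈ Λ ↔ ∃ k : ℕ, Θ E = φ + k * Real.pi := by
    intro E
    rw [hΛ]
    constructor
    · rintro ⟨k, hk⟩
      have h1 := h0 E
      have hk0 : 0 ≤ k := by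
        by_contra hneg
        have : k ≤ -1 := by omega
        have : (k : ℝ) ≤ -1 := by exact_mod_cast this
        nlinarith [hφ.2]
      lift k to ℕ using hk0
      exact ⟨k, by simpa using hk⟩
    · rintro ⟨k, hk⟩
      exact ⟨k, by simpa using hk⟩
  have hub : ∀ M, ∃ E, M ≤ Θ E := by
    intro M
    have h1 : ∀ᶠ w in atTop, L / 2 < Θ (w ^ 2) / w := ht.eventually (lt_mem_nhds (by linarith))
    obtain ⟨w, h2, h3⟩ := (h1.and (eventually_ge_atTop (max 1 (2 * M / L)))).exists
    refine ⟨w ^ 2, ?_⟩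
    have hw : 0 < w := lt_of_lt_of_le one_pos ((le_max_left _ _).trans h3)
    have h4 := (le_max_right _ _).trans h3
    rw [lt_div_iff₀ hw] at h2
    rw [div_le_iff₀ hL] at h4
    linarith
  have hivt : ∀ y E0, Θ E0 ≤ y → ∃ E, Θ E = y := by
    intro y E0 h
    obtain ⟨E1, h1⟩ := hub y
    obtain ⟨x, -, hx⟩ := intermediate_value_uIcc (hc.continuousOn (s := uIcc E0 E1))
      (show y ∈ uIcc (Θ E0) (Θ E1) by rw [uIcc_of_le (h.trans h1)]; exact ⟨h, h1⟩)
    exact ⟨x, hx⟩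
  have hex : ∃ k : ℕ, ∃ E, Θ E = φ + k * Real.pi := by
    obtain ⟨k, hk⟩ := exists_nat_ge (Θ 0 / Real.pi)
    rw [div_le_iff₀ hpi] at hk
    exact ⟨k, hivt _ 0 (by linarith)⟩
  set n0 := Nat.find hex with hn0
  obtain ⟨E0, hE0⟩ := Nat.find_spec hex
  have hall : ∀ n : ℕ, ∃ E, Θ E = φ + ((n0 + n : ℕ) : ℝ) * Real.pi := by
    intro n
    refine hivt _ E0 ?_
    rw [hE0]
    have : ((Nat.find hex : ℕ) : ℝ) ≤ ((n0 + n : ℕ) : ℝ) := by exact_mod_cast Nat.le_add_right _ _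
    nlinarith
  choose E hE using hall
  have hEm : StrictMono E := by
    intro m n hmn
    rw [← hm.lt_iff_lt, hE, hE]
    have : ((n0 + m : ℕ) : ℝ) < ((n0 + n : ℕ) : ℝ) := by exact_mod_cast (by omega)
    nlinarith
  have hr : range E = Λ := by
    ext x
    rw [hΛ']
    constructor
    · rintro ⟨n, rfl⟩; exact ⟨n0 + n, hE n⟩
    · rintro ⟨k, hk⟩
      have : n0 ≤ k := Nat.find_min' hex ⟨x, hk⟩
      refine ⟨k - n0, hm.injective ?_⟩
      rw [hE, hk, Nat.add_sub_cancel' this]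
  have hEt : Tendsto E atTop atTop := by
    rw [tendsto_atTop]
    intro M
    obtain ⟨k, hk⟩ := exists_nat_ge (Θ M / Real.pi)
    rw [div_le_iff₀ hpi] at hk
    filter_upwards [eventually_ge_atTop k] with n hn
    rw [← hm.le_iff_le, hE]
    have : (k : ℝ) ≤ ((n0 + n : ℕ) : ℝ) := by exact_mod_cast (by omega)
    nlinarith [hφ.1]
  refine ⟨?_, ?_, ?_, E, hEm, hr, ?_⟩
  · rw [← hr]; exact infinite_range_of_injective hEm.injective
  · rw [← hr]; refine ⟨E 0, ?_⟩
    rintro _ ⟨n, rfl⟩; exact hEm.monotone (Nat.zero_le n)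
  · intro x hx
    rw [accPt_iff_frequently] at hx
    have hfin : (Λ ∩ Iio (x + 1)).Finite := by
      obtain ⟨N, hN⟩ := (hEt.eventually_ge_atTop (x + 1)).exists_forall_of_atTop
      refine ((finite_lt_nat N).image E).subset ?_
      rintro y ⟨h1, h2⟩
      rw [← hr] at h1
      obtain ⟨n, rfl⟩ := h1
      refine ⟨n, ?_, rfl⟩
      by_contra hn
      exact absurd (hN n (not_lt.1 hn)) (not_le.2 h2)
    have h1 : ∀ᶠ y in nhds x, y ∉ (Λ ∩ Iio (x + 1)) \ {x} :=
      (hfin.subset sdiff_subset).isClosed.isOpen_compl.mem_nhds (by simp)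
    have h2 : ∀ᶠ y in nhds x, y < x + 1 := Iio_mem_nhds (by linarith)
    obtain ⟨y, ⟨hy1, hy2⟩, hy3, hy4⟩ := (hx.and_eventually (h1.and h2)).exists
    exact hy3 ⟨⟨hy2, hy4⟩, hy1⟩
  · have hs : Tendsto (fun n => Real.sqrt (E n)) atTop atTop := Real.tendsto_sqrt_atTop.comp hEt
    have h1 := ht.comp hs
    have h2 : Tendsto (fun n : ℕ => (φ + ((n0 + n : ℕ) : ℝ) * Real.pi) / (n : ℝ)) atTop
        (nhds Real.pi) := by
      have h3 : Tendsto (fun n : ℕ => (φ + n0 * Real.pi) / (n : ℝ) + Real.pi) atTop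
          (nhds (0 + Real.pi)) :=
        (tendsto_const_div_atTop_nhds_zero_nat _).add_const _
      rw [zero_add] at h3
      refine h3.congr' ?_
      filter_upwards [eventually_gt_atTop 0] with n hn
      have : (n : ℝ) ≠ 0 := by positivity
      push_cast
      field_simp
      ring
    have h4 := ((h2.div h1 hL.ne').pow 2)
    rw [div_pow] at h4
    refine h4.congr' ?_
    filter_upwards [eventually_gt_atTop 0, hEt.eventually_gt_atTop 0,
      (tendsto_atTop.1 (hm.monotone.tendsto_atTop_atTop hub |>.comp hEt) 1)] with n hn hE1 hΘ
    simp only [Function.comp, Pi.div_apply] at hΘ ⊢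
    rw [Real.sq_sqrt hE1.le, ← hE]
    have hne : Θ (E n) ≠ 0 := by linarith
    have hn' : (n : ℝ) ≠ 0 := by positivity
    have hs' : Real.sqrt (E n) ≠ 0 := (Real.sqrt_pos.2 hE1).ne'
    rw [div_div_div_comm, div_self hne, one_div, inv_div, div_pow, Real.sq_sqrt hE1.le]

structure TS (X : Set ℝ) (a b : ℝ) : Prop where
  cl : IsClosed X
  lo : IsLeast X a
  hi : IsGreatest X b

noncomputable def tau (X : Set ℝ) (a y : ℝ) : ℝ := sSup (X ∩ Iic (max y a))
noncomputable def nxt (X : Set ℝ) (b y : ℝ) : ℝ := sInf (X ∩ Ici (min y b))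
noncomputable def wt (X : Set ℝ) (a b y : ℝ) : ℝ :=
  1 + Real.sign (tau X a y + nxt X b y - 2 * y)

namespace TS
variable {X : Set ℝ} {a b : ℝ}

theorem ab (h : TS X a b) : a ≤ b := h.lo.2 h.hi.1

theorem bddA (h : TS X a b) (s : Set ℝ) : BddAbove (X ∩ s) := ⟨b, fun _ hx => h.hi.2 hx.1⟩
theorem bddB (h : TS X a b) (s : Set ℝ) : BddBelow (X ∩ s) := ⟨a, fun _ hx => h.lo.2 hx.1⟩

theorem neT (h : TS X a b) (y : ℝ) : (X ∩ Iic (max y a)).Nonempty := ⟨a, h.lo.1, mem_Iic.2 (le_max_right _ _)⟩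
theorem neN (h : TS X a b) (y : ℝ) : (X ∩ Ici (min y b)).Nonempty := ⟨b, h.hi.1, mem_Ici.2 (min_le_right _ _)⟩

theorem tau_mem' (h : TS X a b) (y : ℝ) : tau X a y ∈ X ∩ Iic (max y a) :=
  (h.cl.inter isClosed_Iic).csSup_mem (h.neT y) (h.bddA _)
theorem nxt_mem' (h : TS X a b) (y : ℝ) : nxt X b y ∈ X ∩ Ici (min y b) :=
  (h.cl.inter isClosed_Ici).csInf_mem (h.neN y) (h.bddB _)
theorem tau_mem (h : TS X a b) (y : ℝ) : tau X a y ∈ X := (h.tau_mem' y).1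
theorem nxt_mem (h : TS X a b) (y : ℝ) : nxt X b y ∈ X := (h.nxt_mem' y).1
theorem tau_le (h : TS X a b) {y : ℝ} (hy : a ≤ y) : tau X a y ≤ y := by
  have := (h.tau_mem' y).2; rwa [max_eq_left hy] at this
theorem le_nxt (h : TS X a b) {y : ℝ} (hy : y ≤ b) : y ≤ nxt X b y := by
  have := (h.nxt_mem' y).2; rwa [min_eq_left hy] at this
theorem le_tau (h : TS X a b) {s y : ℝ} (hs : s ∈ X) (hsy : s ≤ y) : s ≤ tau X a y :=
  le_csSup (h.bddA _) ⟨hs, hsy.trans (le_max_left _ _)⟩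
theorem nxt_le (h : TS X a b) {s y : ℝ} (hs : s ∈ X) (hsy : y ≤ s) : nxt X b y ≤ s :=
  csInf_le (h.bddB _) ⟨hs, (min_le_left _ _).trans hsy⟩
theorem tau_mono (h : TS X a b) : Monotone (tau X a) := fun _ _ hxy =>
  csSup_le_csSup (h.bddA _) (h.neT _) (inter_subset_inter_right _ (Iic_subset_Iic.2 (max_le_max_right _ hxy)))
theorem nxt_mono (h : TS X a b) : Monotone (nxt X b) := fun _ _ hxy =>
  csInf_le_csInf (h.bddB _) (h.neN _) (inter_subset_inter_right _ (Ici_subset_Ici.2 (min_le_min_right _ hxy)))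
theorem mem_Icc (h : TS X a b) {s : ℝ} (hs : s ∈ X) : s ∈ Icc a b := ⟨h.lo.2 hs, h.hi.2 hs⟩
theorem tau_eq (h : TS X a b) {y : ℝ} (hy : y ∈ X) : tau X a y = y :=
  le_antisymm (h.tau_le (h.lo.2 hy)) (h.le_tau hy le_rfl)
theorem nxt_eq (h : TS X a b) {y : ℝ} (hy : y ∈ X) : nxt X b y = y :=
  le_antisymm (h.nxt_le hy le_rfl) (h.le_nxt (h.hi.2 hy))
theorem wt_eq (h : TS X a b) {y : ℝ} (hy : y ∈ X) : wt X a b y = 1 := by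
  rw [wt, h.tau_eq hy, h.nxt_eq hy]; ring_nf; simp
theorem tau_lt (h : TS X a b) {y : ℝ} (hy : a ≤ y) (hn : y ∉ X) : tau X a y < y :=
  lt_of_le_of_ne (h.tau_le hy) fun e => hn (e ▸ h.tau_mem y)
theorem lt_nxt (h : TS X a b) {y : ℝ} (hy : y ≤ b) (hn : y ∉ X) : y < nxt X b y :=
  lt_of_le_of_ne (h.le_nxt hy) fun e => hn (e ▸ h.nxt_mem y)

theorem gap (h : TS X a b) {y z : ℝ}
    (hz : z ∈ Ioo (tau X a y) (nxt X b y)) :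
    z ∉ X ∧ tau X a z = tau X a y ∧ nxt X b z = nxt X b y := by
  have key : ∀ s ∈ X, s ≤ tau X a y ∨ nxt X b y ≤ s := by
    intro s hs
    rcases le_total s y with h1 | h1
    · exact Or.inl (h.le_tau hs h1)
    · exact Or.inr (h.nxt_le hs h1)
  have hzX : z ∉ X := fun hzX => by
    rcases key z hzX with h1 | h1
    · exact absurd h1 (not_le.2 hz.1)
    · exact absurd h1 (not_le.2 hz.2)
  have ha : a ≤ z := (h.lo.2 (h.tau_mem y)).trans hz.1.le
  have hb : z ≤ b := hz.2.le.trans (h.hi.2 (h.nxt_mem y))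
  refine ⟨hzX, le_antisymm ?_ (h.le_tau (h.tau_mem y) hz.1.le),
    le_antisymm (h.nxt_le (h.nxt_mem y) hz.2.le) ?_⟩
  · rcases key _ (h.tau_mem z) with h1 | h1
    · exact h1
    · exact absurd (h1.trans (h.tau_le ha)) (not_le.2 hz.2)
  · rcases key _ (h.nxt_mem z) with h1 | h1
    · exact absurd ((h.le_nxt hb).trans h1) (not_le.2 hz.1)
    · exact h1

theorem infDist_eq (h : TS X a b) {y : ℝ} (hy : y ∈ Icc a b) :
    Metric.infDist y X = min (y - tau X a y) (nxt X b y - y) := by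
  have h1 := h.tau_le hy.1
  have h2 := h.le_nxt hy.2
  apply le_antisymm
  · refine le_min ?_ ?_
    · refine (Metric.infDist_le_dist_of_mem (h.tau_mem y)).trans_eq ?_
      rw [Real.dist_eq, abs_of_nonneg (by linarith)]
    · refine (Metric.infDist_le_dist_of_mem (h.nxt_mem y)).trans_eq ?_
      rw [Real.dist_eq, abs_sub_comm, abs_of_nonneg (by linarith)]
  · rw [Metric.le_infDist ⟨a, h.lo.1⟩]
    intro s hs
    rw [Real.dist_eq]
    rcases le_total s y with h3 | h3
    · have := h.le_tau hs h3
      rw [abs_of_nonneg (by linarith)]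
      exact (min_le_left _ _).trans (by linarith)
    · have := h.nxt_le hs h3
      rw [abs_sub_comm, abs_of_nonneg (by linarith)]
      exact (min_le_right _ _).trans (by linarith)

theorem ae_mid (h : TS X a b) :
    ∀ᵐ y : ℝ, y ∈ Icc a b → y ∉ X → tau X a y + nxt X b y - 2 * y ≠ 0 := by
  have hc := (countable_zero (fun y => tau X a y + nxt X b y - 2 * y)).measure_zero volume
  have : ∀ᵐ y : ℝ, y ∉ {x | tau X a x + nxt X b x - 2 * x = 0 ∧ ∃ d ≠ 0,
      HasDerivAt (fun y => tau X a y + nxt X b y - 2 * y) d x} :=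
    measure_eq_zero_iff_ae_notMem.1 hc
  filter_upwards [this] with y hy hyI hyX h0
  refine hy ⟨h0, -2, by norm_num, ?_⟩
  have hd : HasDerivAt (fun z => tau X a y + nxt X b y - 2 * z) (-2) y := by
    simpa using ((hasDerivAt_id y).const_mul 2).const_sub (tau X a y + nxt X b y)
  refine hd.congr_of_eventuallyEq ?_
  filter_upwards [Ioo_mem_nhds (h.tau_lt hyI.1 hyX) (h.lt_nxt hyI.2 hyX)] with z hz
  obtain ⟨-, e1, e2⟩ := h.gap hz
  rw [e1, e2]

theorem wt_meas (h : TS X a b) : Measurable (wt X a b) := by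
  have h1 := h.tau_mono.measurable
  have h2 := h.nxt_mono.measurable
  have h3 : Measurable Real.sign := by
    unfold Real.sign
    exact Measurable.ite measurableSet_Iio measurable_const
      (Measurable.ite measurableSet_Ioi measurable_const measurable_const)
  unfold wt
  exact measurable_const.add (h3.comp (by fun_prop))

theorem wt_cases (X : Set ℝ) (a b y : ℝ) : wt X a b y = 0 ∨ wt X a b y = 1 ∨ wt X a b y = 2 := by
  unfold wt
  rcases Real.sign_apply_eq (tau X a y + nxt X b y - 2 * y) with h | h | h <;> rw [h] <;> norm_num

theorem wt_abs (X : Set ℝ) (a b y : ℝ) : |wt X a b y - 1| ≤ 1 := by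
  rcases wt_cases X a b y with h | h | h <;> rw [h] <;> norm_num

theorem wt_int (h : TS X a b) (c d : ℝ) :
    IntervalIntegrable (fun y => wt X a b y - 1) volume c d := by
  refine (intervalIntegrable_const (c := (1 : ℝ))).mono_fun
    (h.wt_meas.sub_const 1).aestronglyMeasurable ?_
  exact Eventually.of_forall fun y => by simpa using wt_abs X a b y

theorem infDist_ac (h : TS X a b) :
    ACd (fun y => Metric.infDist y X) (fun y => wt X a b y - 1) a b := by
  have hac : AbsolutelyContinuousOnInterval (fun y => Metric.infDist y X) a b :=
    ((Metric.lipschitz_infDist_pt X).lipschitzOnWith).absolutelyContinuousOnInterval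
  refine ACd.of_ac h.ab hac ?_
  filter_upwards [hac.ae_differentiableAt, h.ae_mid] with y hd hm hy
  have hyI := Ioo_subset_Icc_self hy
  have hd := (hd (by rwa [uIcc_of_le h.ab])).hasDerivAt
  by_cases hyX : y ∈ X
  · have hmin : IsLocalMin (fun y => Metric.infDist y X) y :=
      Eventually.of_forall fun z => by
        simp only [Metric.infDist_zero_of_mem hyX]; exact Metric.infDist_nonneg
    rw [hmin.hasDerivAt_eq_zero hd] at hd
    rwa [h.wt_eq hyX, sub_self]
  · have hm := hm hyI hyX
    have h1 := h.tau_lt hyI.1 hyX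
    have h2 := h.lt_nxt hyI.2 hyX
    rcases lt_or_gt_of_ne hm with h0 | h0
    · rw [wt, Real.sign_of_neg h0]
      have hd : HasDerivAt (fun z => nxt X b y - z) (1 + -1 - 1) y := by
        simpa using (hasDerivAt_id y).const_sub (nxt X b y)
      refine hd.congr_of_eventuallyEq ?_
      filter_upwards [Ioo_mem_nhds h1 h2, Ioo_mem_nhds hy.1 hy.2, Ioi_mem_nhds
        (show (tau X a y + nxt X b y) / 2 < y by linarith)] with z hz hz2 hz3
      obtain ⟨-, e1, e2⟩ := h.gap hz
      rw [h.infDist_eq (Ioo_subset_Icc_self hz2), e1, e2]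
      rw [mem_Ioi] at hz3
      exact min_eq_right (by linarith)
    · rw [wt, Real.sign_of_pos h0]
      have hd : HasDerivAt (fun z => z - tau X a y) (1 + 1 - 1) y := by
        simpa using (hasDerivAt_id y).sub_const (tau X a y)
      refine hd.congr_of_eventuallyEq ?_
      filter_upwards [Ioo_mem_nhds h1 h2, Ioo_mem_nhds hy.1 hy.2, Iio_mem_nhds
        (show y < (tau X a y + nxt X b y) / 2 by linarith)] with z hz hz2 hz3
      obtain ⟨-, e1, e2⟩ := h.gap hz
      rw [h.infDist_eq (Ioo_subset_Icc_self hz2), e1, e2]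
      rw [mem_Iio] at hz3
      exact min_eq_left (by linarith)

theorem int_wt (h : TS X a b) {x : ℝ} (hx : x ∈ X) : ∫ y in a..x, (wt X a b y - 1) = 0 := by
  have := h.infDist_ac.2 x (h.mem_Icc hx)
  simp only [Metric.infDist_zero_of_mem hx, Metric.infDist_zero_of_mem h.lo.1] at this
  linarith

/-- Weighted and unweighted push-forwards agree. -/
theorem map_wt (h : TS X a b) {m ξ : ℝ → ℝ} (hm : Measurable m) (hξ : ∀ c, ξ c ∈ X)
    (hmξ : ∀ c, ∀ᵐ y, y ∈ Ioc a b → (m y ≤ c ↔ y ≤ ξ c)) :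
    ((volume.restrict (Ioc a b)).withDensity (fun y => ENNReal.ofReal (wt X a b y))).map m =
      (volume.restrict (Ioc a b)).map m := by
  have hset : ∀ c, (m ⁻¹' Iic c ∩ Ioc a b : Set ℝ) =ᵐ[volume] Ioc a (ξ c) := by
    intro c
    filter_upwards [hmξ c] with y hy
    have hb := h.hi.2 (hξ c)
    refine propext ⟨fun h1 => ⟨h1.2.1, (hy h1.2).1 h1.1⟩, fun h1 => ?_⟩
    have h2 : y ∈ Ioc a b := ⟨h1.1, h1.2.trans hb⟩
    exact ⟨(hy h2).2 h1.2, h2⟩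
  symm
  refine Measure.ext_of_Iic _ _ fun c => ?_
  have hξa := h.lo.2 (hξ c)
  rw [Measure.map_apply hm measurableSet_Iic, Measure.map_apply hm measurableSet_Iic,
    withDensity_apply _ (hm measurableSet_Iic), Measure.restrict_apply (hm measurableSet_Iic),
    Measure.restrict_restrict (hm measurableSet_Iic), measure_congr (hset c),
    setLIntegral_congr (hset c), Real.volume_Ioc]
  have hi : IntervalIntegrable (fun y => wt X a b y) volume a (ξ c) := by
    simpa using (h.wt_int a (ξ c)).add (intervalIntegrable_const (c := (1 : ℝ)))
  have h0 := h.int_wt (hξ c)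
  rw [intervalIntegral.integral_sub hi intervalIntegrable_const, intervalIntegral.integral_const,
    intervalIntegral.integral_of_le hξa, smul_eq_mul, mul_one] at h0
  rw [← ofReal_integral_eq_lintegral_ofReal]
  · congr 1; linarith
  · exact (intervalIntegrable_iff_integrableOn_Ioc_of_le hξa).1 hi
  · exact Eventually.of_forall fun y => by
      rcases wt_cases X a b y with h | h | h <;> simp [h]

theorem int_map (h : TS X a b) {m ξ : ℝ → ℝ} (hm : Measurable m) (hξ : ∀ c, ξ c ∈ X)
    (hmξ : ∀ c, ∀ᵐ y, y ∈ Ioc a b → (m y ≤ c ↔ y ≤ ξ c)) {H : ℝ → ℝ}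
    (hH : Integrable H ((volume.restrict (Ioc a b)).map m)) (c : ℝ) :
    IntegrableOn (fun y => H (m y)) (Ioc a b) ∧
    IntegrableOn (fun y => wt X a b y * H (m y)) (Ioc a b) ∧
    ∫ t in Iic c, H t ∂((volume.restrict (Ioc a b)).map m) = ∫ y in a..(ξ c), H (m y) ∧
    ∫ y in a..(ξ c), wt X a b y * H (m y) = ∫ y in a..(ξ c), H (m y) := by
  have hset : ∀ c, (m ⁻¹' Iic c ∩ Ioc a b : Set ℝ) =ᵐ[volume] Ioc a (ξ c) := by
    intro c
    filter_upwards [hmξ c] with y hy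
    have hb := h.hi.2 (hξ c)
    refine propext ⟨fun h1 => ⟨h1.2.1, (hy h1.2).1 h1.1⟩, fun h1 => ?_⟩
    have h2 : y ∈ Ioc a b := ⟨h1.1, h1.2.trans hb⟩
    exact ⟨(hy h2).2 h1.2, h2⟩
  have hξa := h.lo.2 (hξ c)
  have i1 : IntegrableOn (fun y => H (m y)) (Ioc a b) :=
    (integrable_map_measure hH.1 hm.aemeasurable).1 hH
  have i2 : IntegrableOn (fun y => wt X a b y * H (m y)) (Ioc a b) := by
    refine i1.bdd_mul (c := 2) h.wt_meas.aestronglyMeasurable (Eventually.of_forall fun y => ?_)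
    rcases wt_cases X a b y with h | h | h <;> simp [h]
  have e1 : ∫ t in Iic c, H t ∂((volume.restrict (Ioc a b)).map m) = ∫ y in a..(ξ c), H (m y) := by
    rw [setIntegral_map measurableSet_Iic hH.1 hm.aemeasurable,
      Measure.restrict_restrict (hm measurableSet_Iic), setIntegral_congr_set (hset c),
      intervalIntegral.integral_of_le hξa]
  refine ⟨i1, i2, e1, ?_⟩
  rw [← e1, ← h.map_wt hm hξ hmξ]
  rw [← h.map_wt hm hξ hmξ] at hH
  rw [setIntegral_map measurableSet_Iic hH.1 hm.aemeasurable,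
    setIntegral_withDensity_eq_setIntegral_toReal_smul h.wt_meas.ennreal_ofReal
      (by simp) _ (hm measurableSet_Iic),
    Measure.restrict_restrict (hm measurableSet_Iic), setIntegral_congr_set (hset c),
      intervalIntegral.integral_of_le hξa]
  refine setIntegral_congr_fun measurableSet_Ioc fun y _ => ?_
  simp only [smul_eq_mul]
  rw [ENNReal.toReal_ofReal]
  rcases wt_cases X a b y with h | h | h <;> simp [h]

end TS

theorem ACd.const_of_zero {f g : ℝ → ℝ} {a b s t : ℝ} (h : ACd f g a b) (hs : s ∈ Icc a b)
    (ht : t ∈ Icc a b) (hst : s ≤ t) (h0 : ∀ z ∈ Ioo s t, g z = 0) : f t = f s := by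
  have hab := hs.1.trans hs.2
  have i1 : IntervalIntegrable g volume a s := h.1.mono_set (by
    rw [uIcc_of_le hs.1, uIcc_of_le hab]; exact Icc_subset_Icc le_rfl hs.2)
  have i2 : IntervalIntegrable g volume a t := h.1.mono_set (by
    rw [uIcc_of_le ht.1, uIcc_of_le hab]; exact Icc_subset_Icc le_rfl ht.2)
  have e := intervalIntegral.integral_interval_sub_left i2 i1
  have e0 : ∫ x in s..t, g x = 0 := by
    rw [intervalIntegral.integral_of_le hst, integral_Ioc_eq_integral_Ioo,
      setIntegral_congr_fun measurableSet_Ioo (g := fun _ => (0 : ℝ)) (fun z hz => h0 z hz)]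
    simp
  have := h.2 s hs
  have := h.2 t ht
  linarith

theorem cont_int {f k : ℝ → ℝ} {a b : ℝ} {M : Measure ℝ} (hM : ∀ᵐ t ∂M, t ∈ Icc a b)
    (hf : ContinuousOn f (Icc a b)) (hk : Integrable k M) : Integrable (fun t => f t * k t) M := by
  obtain ⟨C, hC⟩ := isCompact_Icc.exists_bound_of_continuousOn hf
  have hm : AEStronglyMeasurable f M := by
    rw [← Measure.restrict_eq_self_of_ae_mem hM]
    exact hf.aestronglyMeasurable measurableSet_Icc
  refine hk.bdd_mul (c := C) hm ?_
  filter_upwards [hM] with t ht using hC t ht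

namespace TS
variable {X : Set ℝ} {a b : ℝ}

theorem sSup_eq (h : TS X a b) : sSup X = b := h.hi.csSup_eq
theorem sInf_eq (h : TS X a b) : sInf X = a := h.lo.csInf_eq

theorem sg_mem (h : TS X a b) (c : ℝ) : tsSigma X c ∈ X := by
  unfold tsSigma
  split_ifs with hn
  · obtain ⟨s0, hs0⟩ := hn
    have hbd : BddBelow {s | s ∈ X ∧ c < s} := ⟨a, fun s hs => h.lo.2 hs.1⟩
    have := closure_mono (show {s | s ∈ X ∧ c < s} ⊆ X from fun s hs => hs.1)
      (csInf_mem_closure ⟨s0, hs0⟩ hbd)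
    rwa [h.cl.closure_eq] at this
  · rw [h.sSup_eq]; exact h.hi.1

theorem sg_le (h : TS X a b) {c s : ℝ} (hs : s ∈ X) (hcs : c < s) : tsSigma X c ≤ s := by
  unfold tsSigma
  rw [if_pos ⟨s, hs, hcs⟩]
  exact csInf_le ⟨a, fun s hs => h.lo.2 hs.1⟩ ⟨hs, hcs⟩

theorem le_sg (h : TS X a b) {c : ℝ} (hc : c ≤ b) : c ≤ tsSigma X c := by
  unfold tsSigma
  split_ifs with hn
  · exact le_csInf hn fun s hs => hs.2.le
  · rw [h.sSup_eq]; exact hc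

theorem sg_lt (h : TS X a b) {c y : ℝ} (hy : y ≤ b) (hcy : tsSigma X c < y) :
    ∃ s ∈ X, c < s ∧ s < y := by
  unfold tsSigma at hcy
  split_ifs at hcy with hn
  · obtain ⟨s, hs, h2⟩ := exists_lt_of_csInf_lt hn hcy
    exact ⟨s, hs.1, hs.2, h2⟩
  · rw [h.sSup_eq] at hcy; exact absurd hcy (not_lt.2 hy)

theorem rho_mem (h : TS X a b) (c : ℝ) : tsRho X c ∈ X := by
  unfold tsRho
  split_ifs with hn
  · have hbd : BddAbove {s | s ∈ X ∧ s < c} := ⟨b, fun s hs => h.hi.2 hs.1⟩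
    have := closure_mono (show {s | s ∈ X ∧ s < c} ⊆ X from fun s hs => hs.1)
      (csSup_mem_closure hn hbd)
    rwa [h.cl.closure_eq] at this
  · rw [h.sInf_eq]; exact h.lo.1

theorem le_rho (h : TS X a b) {c s : ℝ} (hs : s ∈ X) (hcs : s < c) : s ≤ tsRho X c := by
  unfold tsRho
  rw [if_pos ⟨s, hs, hcs⟩]
  exact le_csSup ⟨b, fun s hs => h.hi.2 hs.1⟩ ⟨hs, hcs⟩

theorem lt_rho (h : TS X a b) {c y : ℝ} (hy : a ≤ y) (hcy : y < tsRho X c) :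
    ∃ s ∈ X, s < c ∧ y < s := by
  unfold tsRho at hcy
  split_ifs at hcy with hn
  · obtain ⟨s, hs, h2⟩ := exists_lt_of_lt_csSup hn hcy
    exact ⟨s, hs.1, hs.2, h2⟩
  · rw [h.sInf_eq] at hcy; exact absurd hcy (not_lt.2 hy)

theorem ae_ne' (c : ℝ) : ∀ᵐ y : ℝ, y ≠ c := by simp [ae_iff, measure_singleton]

theorem tau_iff (h : TS X a b) (c : ℝ) :
    ∀ᵐ y, y ∈ Ioc a b → (tau X a y ≤ c ↔ y ≤ tsSigma X c) := by
  filter_upwards [ae_ne' (tsSigma X c)] with y hne hy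
  constructor
  · intro h1
    by_contra h2
    obtain ⟨s, hs, h3, h4⟩ := h.sg_lt hy.2 (not_le.1 h2)
    exact absurd ((h.le_tau hs h4.le).trans h1) (not_le.2 h3)
  · intro h1
    by_contra h2
    have h3 := h.sg_le (h.tau_mem y) (not_le.1 h2)
    exact hne (le_antisymm h1 (h3.trans (h.tau_le hy.1.le)))

theorem nxt_iff (h : TS X a b) (c : ℝ) :
    ∀ᵐ y, y ∈ Ioc a b → (nxt X b y ≤ c ↔ y ≤ tau X a c) := by
  refine Eventually.of_forall fun y hy => ⟨fun h1 => ?_, fun h1 => ?_⟩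
  · exact (h.le_nxt hy.2).trans (h.le_tau (h.nxt_mem y) h1)
  · have h2 := (h.tau_mem' c).2
    rw [mem_Iic, le_max_iff] at h2
    rcases h2 with h2 | h2
    · exact (h.nxt_le (h.tau_mem c) h1).trans h2
    · exact absurd (h1.trans h2) (not_le.2 hy.1)

theorem mu_eq (h : TS X a b) {μ : Measure ℝ} (hμ : ∀ c d : ℝ, c ≤ d →
      μ (Set.Ioc c d) = ENNReal.ofReal (tsSigma X d - tsSigma X c)) :
    μ = (volume.restrict (Ioc a b)).map (tau X a) := by
  symm
  refine Measure.ext_of_Ioc _ _ fun c d hcd => ?_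
  have hm := h.tau_mono.measurable
  rw [hμ c d hcd.le, Measure.map_apply hm measurableSet_Ioc,
    Measure.restrict_apply (hm measurableSet_Ioc), ← Real.volume_Ioc]
  refine measure_congr ?_
  filter_upwards [h.tau_iff c, h.tau_iff d] with y h1 h2
  have hc := h.lo.2 (h.sg_mem c)
  have hd := h.hi.2 (h.sg_mem d)
  refine propext ⟨fun h3 => ?_, fun h3 => ?_⟩
  · exact ⟨not_le.1 fun h4 => absurd ((h1 h3.2).2 h4) (not_le.2 h3.1.1), (h2 h3.2).1 h3.1.2⟩
  · have hy : y ∈ Ioc a b := ⟨hc.trans_lt h3.1, h3.2.trans hd⟩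
    exact ⟨⟨not_le.1 fun h4 => absurd ((h1 hy).1 h4) (not_le.2 h3.1), (h2 hy).2 h3.2⟩, hy⟩

theorem nxt_iff' (h : TS X a b) (c : ℝ) :
    ∀ᵐ y, y ∈ Ioc a b → (nxt X b y < c ↔ y ≤ tsRho X c) := by
  filter_upwards [ae_ne' (tsRho X c)] with y hne hy
  constructor
  · intro h1
    exact (h.le_nxt hy.2).trans (h.le_rho (h.nxt_mem y) h1)
  · intro h1
    obtain ⟨s, hs, h2, h3⟩ := h.lt_rho hy.1.le (lt_of_le_of_ne h1 hne)
    exact (h.nxt_le hs h3.le).trans_lt h2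

theorem nu_eq (h : TS X a b) {ν : Measure ℝ} (hν : ∀ c d : ℝ, c ≤ d →
      ν (Set.Ico c d) = ENNReal.ofReal (tsRho X d - tsRho X c)) :
    ν = (volume.restrict (Ioc a b)).map (nxt X b) := by
  symm
  refine Measure.ext_of_Ico _ _ fun c d hcd => ?_
  have hm := h.nxt_mono.measurable
  rw [hν c d hcd.le, Measure.map_apply hm measurableSet_Ico,
    Measure.restrict_apply (hm measurableSet_Ico), ← Real.volume_Ioc]
  refine measure_congr ?_
  filter_upwards [h.nxt_iff' c, h.nxt_iff' d] with y h1 h2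
  have hc := h.lo.2 (h.rho_mem c)
  have hd := h.hi.2 (h.rho_mem d)
  refine propext ⟨fun h3 => ?_, fun h3 => ?_⟩
  · exact ⟨not_le.1 fun h4 => absurd ((h1 h3.2).2 h4) (not_lt.2 h3.1.1), (h2 h3.2).1 h3.1.2⟩
  · have hy : y ∈ Ioc a b := ⟨hc.trans_lt h3.1, h3.2.trans hd⟩
    exact ⟨⟨not_lt.1 fun h4 => absurd ((h1 hy).1 h4) (not_le.2 h3.1), (h2 hy).2 h3.2⟩, hy⟩

theorem sg_nxt (h : TS X a b) : ∀ᵐ y, y ∈ Ioc a b → tsSigma X y = nxt X b y := by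
  have hc : {y | y ∈ X ∧ y < tsSigma X y}.Countable := by
    refine (countable_setOfPred_isolated_right_within (s := X)).mono ?_
    intro y hy
    refine ⟨hy.1, ?_⟩
    rw [← empty_mem_iff_bot]
    have h3 : ∀ᶠ z in nhdsWithin y (X ∩ Ioi y), False := by
      filter_upwards [self_mem_nhdsWithin, mem_nhdsWithin_of_mem_nhds (Iio_mem_nhds hy.2)] with z h1 h2
      exact absurd (h.sg_le h1.1 h1.2) (not_le.2 h2)
    exact h3
  filter_upwards [measure_eq_zero_iff_ae_notMem.1 (hc.measure_zero volume)] with y hy hyI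
  by_cases hX : y ∈ X
  · rw [h.nxt_eq hX]
    exact le_antisymm (not_lt.1 fun h1 => hy ⟨hX, h1⟩) (h.le_sg hyI.2)
  · exact le_antisymm (h.sg_le (h.nxt_mem y) (h.lt_nxt hyI.2 hX))
      (h.nxt_le (h.sg_mem y) (h.le_sg hyI.2))

theorem K3 (h : TS X a b) {y g : ℝ → ℝ} (hy : ACd y (fun t => (2 - wt X a b t) * g t) a b) :
    ∀ᵐ t, t ∈ Ioc a b → wt X a b t * y (tau X a t) = wt X a b t * y t := by
  filter_upwards [h.ae_mid] with t hm ht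
  by_cases hX : t ∈ X
  · rw [h.tau_eq hX]
  have htI := Ioc_subset_Icc_self ht
  rcases lt_or_gt_of_ne (hm htI hX) with h0 | h0
  · rw [wt, Real.sign_of_neg h0]; simp
  · congr 1
    symm
    refine hy.const_of_zero (h.mem_Icc (h.tau_mem t)) htI (h.tau_le htI.1) fun z hz => ?_
    have h2 := h.lt_nxt htI.2 hX
    obtain ⟨-, e1, e2⟩ := h.gap (y := t) (z := z) ⟨hz.1, hz.2.trans h2⟩
    rw [wt, e1, e2, Real.sign_of_pos (by linarith [hz.2])]
    norm_num

theorem K2a (h : TS X a b) {y1 k : ℝ → ℝ} (hy : ACd y1 (fun t => wt X a b t * k t) a b) :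
    ∀ᵐ t, t ∈ Ioc a b → (2 - wt X a b t) * y1 (nxt X b t) = (2 - wt X a b t) * y1 t := by
  filter_upwards [h.ae_mid] with t hm ht
  by_cases hX : t ∈ X
  · rw [h.nxt_eq hX]
  have htI := Ioc_subset_Icc_self ht
  rcases lt_or_gt_of_ne (hm htI hX) with h0 | h0
  · congr 1
    refine hy.const_of_zero htI (h.mem_Icc (h.nxt_mem t)) (h.le_nxt htI.2) fun z hz => ?_
    have h2 := h.tau_lt htI.1 hX
    obtain ⟨-, e1, e2⟩ := h.gap (y := t) (z := z) ⟨h2.trans hz.1, hz.2⟩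
    rw [wt, e1, e2, Real.sign_of_neg (by linarith [hz.1])]
    norm_num
  · rw [wt, Real.sign_of_pos h0]; norm_num

theorem map_nxt_mem (h : TS X a b) :
    ∀ᵐ t ∂((volume.restrict (Ioc a b)).map (nxt X b)), t ∈ Icc a b := by
  exact (ae_map_iff (p := fun t => t ∈ Icc a b) h.nxt_mono.measurable.aemeasurable
    measurableSet_Icc).2 (Eventually.of_forall fun y => h.mem_Icc (h.nxt_mem y))

theorem map_tau_mem (h : TS X a b) :
    ∀ᵐ t ∂((volume.restrict (Ioc a b)).map (tau X a)), t ∈ X := by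
  exact (ae_map_iff (p := fun t => t ∈ X) h.tau_mono.measurable.aemeasurable
    h.cl.measurableSet).2 (Eventually.of_forall fun y => h.tau_mem y)

theorem K2 (h : TS X a b) {y1 k p : ℝ → ℝ} (hy : ACd y1 (fun t => wt X a b t * k t) a b)
    (hp : Integrable (fun t => 1 / p t) ((volume.restrict (Ioc a b)).map (nxt X b))) :
    IntegrableOn (fun t => y1 (tsSigma X t) / p (nxt X b t)) (Ioc a b) ∧
    IntegrableOn (fun t => (2 - wt X a b t) / p (nxt X b t) * y1 t) (Ioc a b) ∧
    ∀ x ∈ X, ∫ t in a..x, y1 (tsSigma X t) / p (nxt X b t) =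
      ∫ t in a..x, (2 - wt X a b t) / p (nxt X b t) * y1 t := by
  have hK := cont_int h.map_nxt_mem (hy.continuousOn h.ab) hp
  have key := fun c => h.int_map h.nxt_mono.measurable h.tau_mem h.nxt_iff hK c
  have e1 : (fun t => y1 (tsSigma X t) / p (nxt X b t)) =ᵐ[volume.restrict (Ioc a b)]
      (fun t => y1 (nxt X b t) * (1 / p (nxt X b t))) := by
    rw [EventuallyEq, ae_restrict_iff' measurableSet_Ioc]
    filter_upwards [h.sg_nxt] with t ht htI
    rw [ht htI]; ring
  have e2 : (fun t => (2 - wt X a b t) / p (nxt X b t) * y1 t) =ᵐ[volume.restrict (Ioc a b)]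
      (fun t => 2 * (y1 (nxt X b t) * (1 / p (nxt X b t))) -
        wt X a b t * (y1 (nxt X b t) * (1 / p (nxt X b t)))) := by
    rw [EventuallyEq, ae_restrict_iff' measurableSet_Ioc]
    filter_upwards [h.K2a hy] with t ht htI
    have := ht htI
    calc _ = ((2 - wt X a b t) * y1 t) / p (nxt X b t) := by ring
      _ = _ := by rw [← this]; ring
  have i1 := (key b).1
  have i2 := (key b).2.1
  refine ⟨i1.congr e1.symm, ((i1.const_mul 2).sub i2).congr e2.symm, fun x hx => ?_⟩
  have hxI := h.mem_Icc hx
  have hs : Ioc a x ⊆ Ioc a b := Ioc_subset_Ioc le_rfl hxI.2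
  have k3 := (key x).2.2.2
  rw [h.tau_eq hx] at k3
  rw [intervalIntegral.integral_of_le hxI.1, intervalIntegral.integral_of_le hxI.1] at k3 ⊢
  rw [integral_congr_ae (ae_restrict_of_ae_restrict_of_subset hs e1),
    integral_congr_ae (ae_restrict_of_ae_restrict_of_subset hs e2),
    integral_sub (((i1.mono_set hs).const_mul 2)) (i2.mono_set hs), integral_const_mul, k3]
  ring

end TS

/-- Real solutions of the linear system. -/
def LSol (P N y y1 : ℝ → ℝ) (a b : ℝ) : Prop :=
  ACd y (fun t => P t * y1 t) a b ∧ ACd y1 (fun t => N t * y t) a b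

theorem lsol_of_theta {P Q R θ : ℝ → ℝ} {a b E : ℝ} (hab : a ≤ b)
    (hP : IntervalIntegrable P volume a b)
    (hQ : IntervalIntegrable Q volume a b) (hR : IntervalIntegrable R volume a b)
    (h : ACd θ (fun s => prF P Q R E s (θ s)) a b) :
    ∃ ρ : ℝ → ℝ, ρ a = 1 ∧ (∀ x, 0 < ρ x) ∧
      LSol P (fun t => Q t - E * R t) (fun t => ρ t * Real.sin (θ t))
        (fun t => ρ t * Real.cos (θ t)) a b := by
  have hc := h.continuousOn hab
  rw [← uIcc_of_le hab] at hc
  have hg : IntervalIntegrable (fun s => (P s + (Q s - E * R s)) *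
      (Real.sin (θ s) * Real.cos (θ s))) volume a b :=
    (hP.add (hQ.sub (hR.const_mul E))).mul_continuousOn
      ((Real.continuous_sin.comp_continuousOn hc).mul (Real.continuous_cos.comp_continuousOn hc))
  set J : ℝ → ℝ := fun x => 0 + ∫ t in a..x, (P t + (Q t - E * R t)) *
      (Real.sin (θ t) * Real.cos (θ t)) with hJ
  have hJa : ACd J _ a b := ACd.of_integral hg 0
  refine ⟨fun x => Real.exp (J x), by simp [hJ], fun x => Real.exp_pos _, ?_, ?_⟩
  · refine ACd.comp2 (F := fun z => Real.exp z.1 * Real.sin z.2) hab hJa h (by fun_prop) ?_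
    refine Eventually.of_forall fun x _ d1 d2 => ?_
    convert! d1.exp.mul d2.sin using 1
    simp only [prF]
    have e1 := Real.sin_sq_add_cos_sq (θ x)
    linear_combination (-(P x) * Real.exp (J x) * Real.cos (θ x)) * e1
  · refine ACd.comp2 (F := fun z => Real.exp z.1 * Real.cos z.2) hab hJa h (by fun_prop) ?_
    refine Eventually.of_forall fun x _ d1 d2 => ?_
    convert! d1.exp.mul d2.cos using 1
    simp only [prF]
    have e1 := Real.sin_sq_add_cos_sq (θ x)
    linear_combination (-(Q x - E * R x) * Real.exp (J x) * Real.sin (θ x)) * e1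

theorem acd_mul {f f' g g' : ℝ → ℝ} {a b : ℝ} (hab : a ≤ b) (hf : ACd f f' a b)
    (hg : ACd g g' a b) : ACd (fun x => f x * g x) (fun x => f' x * g x + f x * g' x) a b := by
  refine ACd.comp2 (F := fun z => z.1 * z.2) hab hf hg (by fun_prop) ?_
  exact Eventually.of_forall fun x _ d1 d2 => d1.mul d2

theorem lsol_wr {P N y y1 v v1 : ℝ → ℝ} {a b x : ℝ} (hab : a ≤ b) (hy : LSol P N y y1 a b)
    (hv : LSol P N v v1 a b) (hx : x ∈ Icc a b) :
    y x * v1 x - y1 x * v x = y a * v1 a - y1 a * v a := by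
  have h1 := acd_mul hab hy.1 hv.2
  have h2 := acd_mul hab hy.2 hv.1
  have h3 := ACd.comp2 (F := fun z => z.1 - z.2) (k := fun _ => 0) hab h1 h2 (by fun_prop) (by
    refine Eventually.of_forall fun x _ d1 d2 => ?_
    convert! d1.sub d2 using 1
    ring)
  have := h3.2 x hx
  simpa using this

theorem lsol_mult {P Q R θ : ℝ → ℝ} {a b E φ : ℝ} (hab : a ≤ b)
    (hP : IntervalIntegrable P volume a b)
    (hQ : IntervalIntegrable Q volume a b) (hR : IntervalIntegrable R volume a b)
    {ρ : ℝ → ℝ} (hθ : θ a = φ) (hρ : ρ a = 1)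
    (hv : LSol P (fun t => Q t - E * R t) (fun t => ρ t * Real.sin (θ t))
        (fun t => ρ t * Real.cos (θ t)) a b)
    {y y1 : ℝ → ℝ} (hy : LSol P (fun t => Q t - E * R t) y y1 a b)
    (hbc : y a * Real.cos φ - y1 a * Real.sin φ = 0) :
    ∃ κ : ℝ, ∀ x ∈ Icc a b, y x = κ * (ρ x * Real.sin (θ x)) ∧
      y1 x = κ * (ρ x * Real.cos (θ x)) := by
  obtain ⟨θ2, h2a, h2⟩ := prufer_exists hab hP hQ hR (φ + Real.pi / 2) E
  obtain ⟨ρ2, hρ2, -, hw⟩ := lsol_of_theta hab hP hQ hR h2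
  refine ⟨y a * Real.sin φ + y1 a * Real.cos φ, fun x hx => ?_⟩
  have w1 := lsol_wr hab hv hw hx
  have w2 := lsol_wr hab hw hy hx
  have w3 := lsol_wr hab hy hv hx
  have hs := Real.sin_sq_add_cos_sq φ
  simp only [hθ, hρ, h2a, hρ2, Real.sin_add_pi_div_two, Real.cos_add_pi_div_two] at w1 w2 w3
  set V := ρ x * Real.sin (θ x)
  set V1 := ρ x * Real.cos (θ x)
  set W := ρ2 x * Real.sin (θ2 x)
  set W1 := ρ2 x * Real.cos (θ2 x)
  have w1' : V * W1 - V1 * W = -1 := by rw [w1]; linear_combination -hs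
  have w3' : y x * V1 - y1 x * V = 0 := by rw [w3]; linear_combination hbc
  constructor
  · linear_combination (y x) * w1' + V * w2 + W * w3'
  · linear_combination (y1 x) * w1' + V1 * w2 + W1 * w3'

theorem ACd.congr_ae {f g g' : ℝ → ℝ} {a b : ℝ} (hab : a ≤ b) (h : ACd f g a b)
    (e : ∀ᵐ t, t ∈ Ioc a b → g t = g' t) : ACd f g' a b := by
  refine ⟨h.1.congr_ae ?_, fun x hx => ?_⟩
  · rw [EventuallyEq, ae_restrict_iff' measurableSet_uIoc, uIoc_of_le hab]; exact e
  · rw [h.2 x hx]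
    congr 1
    refine intervalIntegral.integral_congr_ae ?_
    filter_upwards [e] with t ht htI
    rw [uIoc_of_le hx.1] at htI
    exact ht ⟨htI.1, htI.2.trans hx.2⟩

theorem iI {g : ℝ → ℝ} {a b : ℝ} (hab : a ≤ b) (h : IntegrableOn g (Ioc a b)) :
    IntervalIntegrable g volume a b := (intervalIntegrable_iff_integrableOn_Ioc_of_le hab).2 h

namespace TS
variable {X : Set ℝ} {a b : ℝ}

/-- The measure `dσ`. -/
noncomputable def mu (X : Set ℝ) (a b : ℝ) : Measure ℝ := (volume.restrict (Ioc a b)).map (tau X a)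
/-- The measure `dρ`. -/
noncomputable def nu (X : Set ℝ) (a b : ℝ) : Measure ℝ := (volume.restrict (Ioc a b)).map (nxt X b)

/-- coefficient -/
noncomputable def cP (X : Set ℝ) (a b : ℝ) (p : ℝ → ℝ) (t : ℝ) : ℝ :=
  (2 - wt X a b t) / p (nxt X b t)
/-- coefficient -/
noncomputable def cQ (X : Set ℝ) (a b : ℝ) (q : ℝ → ℝ) (t : ℝ) : ℝ := wt X a b t * q (tau X a t)

theorem ae_mu {p : ℝ → Prop} (h : TS X a b) (hp : ∀ᵐ t ∂(mu X a b), p t) :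
    ∀ᵐ t, t ∈ Ioc a b → p (tau X a t) := by
  rw [← ae_restrict_iff' measurableSet_Ioc]
  exact ae_of_ae_map h.tau_mono.measurable.aemeasurable hp

theorem sg_b (h : TS X a b) : tsSigma X b = b :=
  le_antisymm (h.hi.2 (h.sg_mem b)) (h.le_sg le_rfl)

theorem imu (h : TS X a b) {H : ℝ → ℝ} (hH : Integrable H (mu X a b)) (c : ℝ) :
    IntervalIntegrable (fun y => wt X a b y * H (tau X a y)) volume a b ∧
    ∫ t in Iic c, H t ∂(mu X a b) = ∫ y in a..(tsSigma X c), wt X a b y * H (tau X a y) := by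
  obtain ⟨-, h2, h3, h4⟩ := h.int_map h.tau_mono.measurable h.sg_mem h.tau_iff hH c
  exact ⟨iI h.ab h2, h3.trans h4.symm⟩

theorem cP_int (h : TS X a b) {p : ℝ → ℝ} (hp : Integrable (fun t => 1 / p t) (nu X a b)) :
    IntervalIntegrable (cP X a b p) volume a b := by
  have := (h.K2 (y1 := fun _ => 1) (k := fun _ => 0) ⟨by simp, by simp⟩ hp).2.1
  refine iI h.ab (this.congr (Eventually.of_forall fun t => ?_))
  simp [cP]

theorem cQ_int (h : TS X a b) {q : ℝ → ℝ} (hq : Integrable q (mu X a b)) :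
    IntervalIntegrable (cQ X a b q) volume a b := (h.imu hq a).1

theorem mu_mem (h : TS X a b) : ∀ᵐ t ∂(mu X a b), t ∈ X := h.map_tau_mem

theorem lsol_K3 (h : TS X a b) {p N y y1 : ℝ → ℝ} (hv : LSol (cP X a b p) N y y1 a b) :
    ∀ᵐ t, t ∈ Ioc a b → wt X a b t * y (tau X a t) = wt X a b t * y t := by
  refine h.K3 (g := fun t => y1 t / p (nxt X b t)) (hv.1.congr_ae h.ab ?_)
  refine Eventually.of_forall fun t _ => ?_
  simp only [cP]; ring

/-- From the continuous system to the time scale. -/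
theorem coreA (h : TS X a b) {p q r v v1 : ℝ → ℝ} {E : ℝ}
    (hp : Integrable (fun t => 1 / p t) (nu X a b)) (hq : Integrable q (mu X a b))
    (hr : Integrable r (mu X a b))
    (hv : LSol (cP X a b p) (fun t => cQ X a b q t - E * cQ X a b r t) v v1 a b) :
    Integrable (fun t => (q t - E * r t) * v t) (mu X a b) ∧
    (∀ x, v1 a + ∫ t in Iic x, (q t - E * r t) * v t ∂(mu X a b) = v1 (tsSigma X x)) ∧
    IntervalIntegrable (fun t => v1 (tsSigma X t) / p (nxt X b t)) volume a b ∧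
    ∀ x ∈ X, v a + ∫ t in a..x, v1 (tsSigma X t) / p (nxt X b t) = v x := by
  have hH : Integrable (fun t => (q t - E * r t) * v t) (mu X a b) := by
    have := cont_int (k := fun t => q t - E * r t) (h.mu_mem.mono fun t ht => h.mem_Icc ht)
      (hv.1.continuousOn h.ab) (hq.sub (hr.const_mul E))
    exact this.congr (Eventually.of_forall fun t => mul_comm _ _)
  have e1 : ∀ᵐ t, t ∈ Ioc a b → (cQ X a b q t - E * cQ X a b r t) * v t =
      wt X a b t * ((q (tau X a t) - E * r (tau X a t)) * v (tau X a t)) := by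
    filter_upwards [h.lsol_K3 hv] with t ht htI
    have := ht htI
    simp only [cQ]
    linear_combination -(q (tau X a t) - E * r (tau X a t)) * this
  have hv1 := hv.2.congr_ae h.ab e1
  refine ⟨hH, fun x => ?_, ?_⟩
  · rw [(h.imu hH x).2, ← hv1.2 _ (h.mem_Icc (h.sg_mem x))]
  · have k2 := h.K2 hv1 hp
    refine ⟨iI h.ab k2.1, fun x hx => ?_⟩
    rw [k2.2.2 x hx]
    exact (hv.1.2 x (h.mem_Icc hx)).symm

theorem coreB1 (h : TS X a b) (hσ : tsSigma X a = a) {u1 k : ℝ → ℝ}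
    (hk : Integrable k (mu X a b))
    (hu1 : ∀ x ∈ Icc a b, u1 x = u1 a + ∫ t in Ioc a x, k t ∂(mu X a b)) :
    ∃ y1 : ℝ → ℝ, ACd y1 (fun t => wt X a b t * k (tau X a t)) a b ∧ y1 a = u1 a ∧
      ∀ x ∈ Icc a b, y1 (tsSigma X x) = u1 x := by
  have k0 := h.imu hk
  refine ⟨_, ACd.of_integral (k0 a).1 (u1 a), by simp, fun x hx => ?_⟩
  rw [hu1 x hx, ← (k0 x).2, ← Iic_union_Ioc_eq_Iic hx.1,
    setIntegral_union (Set.disjoint_left.2 fun z hz hz' => not_lt.2 (mem_Iic.1 hz) hz'.1)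
      measurableSet_Ioc hk.integrableOn hk.integrableOn, (k0 a).2, hσ]
  simp

theorem coreB1' (h : TS X a b) {p y1 u1 k : ℝ → ℝ}
    (hp : Integrable (fun t => 1 / p t) (nu X a b))
    (h1 : ACd y1 (fun t => wt X a b t * k (tau X a t)) a b)
    (h2 : ∀ x ∈ Icc a b, y1 (tsSigma X x) = u1 x) :
    IntegrableOn (fun t => u1 t / p (nxt X b t)) (Ioc a b) := by
  refine (h.K2 h1 hp).1.congr ?_
  rw [EventuallyEq, ae_restrict_iff' measurableSet_Ioc]
  exact Eventually.of_forall fun t ht => by rw [h2 t (Ioc_subset_Icc_self ht)]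

theorem coreB (h : TS X a b) {p q r y1 u u1 k : ℝ → ℝ} {E : ℝ}
    (hp : Integrable (fun t => 1 / p t) (nu X a b))
    (h1 : ACd y1 (fun t => wt X a b t * k (tau X a t)) a b)
    (h2 : ∀ x ∈ Icc a b, y1 (tsSigma X x) = u1 x)
    (hk : ∀ᵐ t ∂(mu X a b), k t = (q t - E * r t) * u t)
    (hu : ∀ x ∈ Icc a b, u x = u a + ∫ t in a..x, u1 t / p (nxt X b t)) :
    ∃ y : ℝ → ℝ, LSol (cP X a b p) (fun t => cQ X a b q t - E * cQ X a b r t) y y1 a b ∧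
      ∀ x ∈ X, y x = u x := by
  have k2 := h.K2 h1 hp
  have hy : ACd (fun x => u a + ∫ t in a..x, cP X a b p t * y1 t) (fun t => cP X a b p t * y1 t) a b :=
    ACd.of_integral (iI h.ab k2.2.1) _
  have hyu : ∀ x ∈ X, u a + ∫ t in a..x, cP X a b p t * y1 t = u x := by
    intro x hx
    have hxI := h.mem_Icc hx
    rw [hu x hxI]
    congr 1
    refine (k2.2.2 x hx).symm.trans ?_
    refine intervalIntegral.integral_congr_ae (Eventually.of_forall fun t ht => ?_)
    rw [uIoc_of_le hxI.1] at ht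
    rw [h2 t ⟨ht.1.le, ht.2.trans hxI.2⟩]
  refine ⟨_, ⟨hy, h1.congr_ae h.ab ?_⟩, hyu⟩
  have k3 := h.K3 (g := fun t => y1 t / p (nxt X b t)) (hy.congr_ae h.ab
    (Eventually.of_forall fun t _ => by simp only [cP]; ring))
  filter_upwards [k3, h.ae_mu hk] with t ht hkt htI
  have e1 := ht htI
  rw [hkt htI, ← hyu _ (h.tau_mem t)]
  simp only [cQ]
  linear_combination (q (tau X a t) - E * r (tau X a t)) * e1

end TS

theorem TS.ofT {T : Set ℝ} (hne : T.Nonempty) (hcl : IsClosed T)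
    (hbb : BddBelow T) (hba : BddAbove T) : TS T (sInf T) (sSup T) :=
  ⟨hcl, ⟨hcl.csInf_mem hne hbb, fun _ hs => csInf_le hbb hs⟩,
    ⟨hcl.csSup_mem hne hba, fun _ hs => le_csSup hba hs⟩⟩

theorem kappa_eq {T : Set ℝ} {a b : ℝ} (h : TS T a b) :
    tsKappa T = T ∩ Ici (tsSigma T a) := by
  unfold tsKappa
  rw [h.sInf_eq]
  have hle := h.le_sg h.ab
  split_ifs with hc
  · ext s
    constructor
    · rintro ⟨h1, h2⟩
      exact ⟨h1, mem_Ici.2 (h.sg_le h1 (lt_of_le_of_ne (h.lo.2 h1) (Ne.symm h2)))⟩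
    · rintro ⟨h1, h2⟩
      refine ⟨h1, fun e => ?_⟩
      rw [mem_singleton_iff] at e
      rw [mem_Ici] at h2
      linarith [hc.2]
  · have : tsSigma T a = a := by
      by_contra hne
      exact hc ⟨⟨a, fun s hs => h.lo.2 hs⟩, lt_of_le_of_ne hle (Ne.symm hne)⟩
    rw [this]
    ext s
    exact ⟨fun hs => ⟨hs, h.lo.2 hs⟩, fun hs => hs.1⟩

theorem kappa_TS {T : Set ℝ} {a b : ℝ} (h : TS T a b) :
    TS (tsKappa T) (tsSigma T a) b := by
  rw [kappa_eq h]
  have hm := h.sg_mem a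
  refine ⟨h.cl.inter isClosed_Ici, ⟨⟨hm, mem_Ici.2 le_rfl⟩, fun s hs => hs.2⟩,
    ⟨⟨h.hi.1, mem_Ici.2 (h.hi.2 hm)⟩, fun s hs => h.hi.2 hs.1⟩⟩

theorem kappa_sg {T : Set ℝ} {a b : ℝ} (h : TS T a b) :
    tsSigma (tsKappa T) (tsSigma T a) = tsSigma T (tsSigma T a) := by
  have hX := kappa_TS h
  have e : {s | s ∈ tsKappa T ∧ tsSigma T a < s} = {s | s ∈ T ∧ tsSigma T a < s} := by
    ext s
    rw [kappa_eq h]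
    exact ⟨fun hs => ⟨hs.1.1, hs.2⟩, fun hs => ⟨⟨hs.1, hs.2.le⟩, hs.2⟩⟩
  conv_lhs => rw [tsSigma]
  conv_rhs => rw [tsSigma]
  rw [e, hX.sSup_eq, h.sSup_eq]

theorem kappa_nu {T : Set ℝ} {a b : ℝ} (h : TS T a b) :
    TS.nu (tsKappa T) (tsSigma T a) b ≤ TS.nu T a b := by
  have hX := kappa_TS h
  have e : ∀ y ∈ Ioc (tsSigma T a) b, nxt (tsKappa T) b y = nxt T b y := by
    intro y hy
    unfold nxt
    rw [min_eq_left hy.2, kappa_eq h]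
    congr 1
    ext s
    exact ⟨fun hs => ⟨hs.1.1, hs.2⟩, fun hs => ⟨⟨hs.1, hy.1.le.trans hs.2⟩, hs.2⟩⟩
  refine Measure.le_iff.2 fun s hs => ?_
  unfold TS.nu
  rw [Measure.map_apply hX.nxt_mono.measurable hs, Measure.map_apply h.nxt_mono.measurable hs,
    Measure.restrict_apply (hX.nxt_mono.measurable hs),
    Measure.restrict_apply (h.nxt_mono.measurable hs)]
  refine measure_mono fun y hy => ?_
  have h1 : nxt (tsKappa T) b y ∈ s := hy.1
  rw [e y hy.2] at h1
  exact ⟨h1, (h.le_sg h.ab).trans_lt hy.2.1, hy.2.2⟩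

namespace TS
variable {X : Set ℝ} {a b : ℝ}

theorem ae_nu {p : ℝ → Prop} (h : TS X a b) (hp : ∀ᵐ t ∂(nu X a b), p t) :
    ∀ᵐ t, t ∈ Ioc a b → p (nxt X b t) := by
  rw [← ae_restrict_iff' measurableSet_Ioc]
  exact ae_of_ae_map h.nxt_mono.measurable.aemeasurable hp

theorem cP_nonneg (h : TS X a b) {p : ℝ → ℝ} (hp : ∀ᵐ t ∂(nu X a b), 0 < p t) :
    ∀ᵐ t, t ∈ Icc a b → 0 ≤ cP X a b p t := by
  refine ae_Icc_of_Ioo ?_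
  filter_upwards [h.ae_nu hp] with t ht htI
  refine div_nonneg ?_ (ht (Ioo_subset_Ioc_self htI)).le
  rcases wt_cases X a b t with e | e | e <;> rw [e] <;> norm_num

theorem cQ_nonneg (h : TS X a b) {r : ℝ → ℝ} (hr : ∀ᵐ t ∂(mu X a b), 0 < r t) :
    ∀ᵐ t, t ∈ Icc a b → 0 ≤ cQ X a b r t := by
  refine ae_Icc_of_Ioo ?_
  filter_upwards [h.ae_mu hr] with t ht htI
  refine mul_nonneg ?_ (ht (Ioo_subset_Ioc_self htI)).le
  rcases wt_cases X a b t with e | e | e <;> rw [e] <;> norm_num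

theorem L_eq (h : TS X a b) (p r : ℝ → ℝ) :
    ∫ t in a..b, Real.sqrt (cP X a b p t * cQ X a b r t) = ∫ t in X, Real.sqrt (r t / p t) := by
  have e : ∀ᵐ t, t ∈ Ioc a b → Real.sqrt (cP X a b p t * cQ X a b r t) =
      X.indicator (fun t => Real.sqrt (r t / p t)) t := by
    filter_upwards [h.ae_mid] with t ht htI
    by_cases hX : t ∈ X
    · rw [indicator_of_mem hX]
      simp only [cP, cQ]
      rw [h.wt_eq hX, h.nxt_eq hX, h.tau_eq hX]
      congr 1; ring
    · rw [indicator_of_notMem hX]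
      have h1 := ht (Ioc_subset_Icc_self htI) hX
      have : cP X a b p t * cQ X a b r t = 0 := by
        simp only [cP, cQ, wt]
        rcases lt_or_gt_of_ne h1 with h0 | h0
        · rw [Real.sign_of_neg h0]; ring
        · rw [Real.sign_of_pos h0]; ring
      rw [this, Real.sqrt_zero]
  rw [intervalIntegral.integral_of_le h.ab, setIntegral_congr_ae measurableSet_Ioc e,
    setIntegral_indicator h.cl.measurableSet]
  refine setIntegral_congr_set ?_
  filter_upwards [ae_ne' a] with t ht
  refine propext ⟨fun hs => hs.2, fun hs => ⟨⟨?_, (h.mem_Icc hs).2⟩, hs⟩⟩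
  exact lt_of_le_of_ne (h.mem_Icc hs).1 (Ne.symm ht)

theorem hZ_of (h : TS X a b) {P R : ℝ → ℝ}
    (hP0 : ∀ᵐ x, x ∈ Icc a b → 0 ≤ P x) (hR0 : ∀ᵐ x, x ∈ Icc a b → 0 ≤ R x)
    (hL : 0 < ∫ t in a..b, Real.sqrt (P t * R t)) :
    volume {x | x ∈ Ioo a b ∧ 0 < P x ∧ 0 < R x} ≠ 0 := by
  intro h0
  have h1 := measure_eq_zero_iff_ae_notMem.1 h0
  have : ∫ t in a..b, Real.sqrt (P t * R t) = 0 := by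
    rw [intervalIntegral.integral_of_le h.ab, integral_Ioc_eq_integral_Ioo,
      setIntegral_congr_ae (g := fun _ => (0 : ℝ)) measurableSet_Ioo]
    · simp
    filter_upwards [h1, hP0, hR0] with t h1 h2 h3 ht
    have hI := Ioo_subset_Icc_self ht
    rcases (h2 hI).eq_or_lt with e | e
    · rw [← e]; simp
    rcases (h3 hI).eq_or_lt with e' | e'
    · rw [← e']; simp
    exact absurd ⟨ht, e, e'⟩ h1
  linarith

end TS

theorem L_T {T : Set ℝ} {a b : ℝ} (h : TS T a b) (g : ℝ → ℝ) :
    ∫ t in tsKappa T, g t = ∫ t in T, g t := by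
  refine setIntegral_congr_set ?_
  filter_upwards [TS.ae_ne' a] with t ht
  rw [kappa_eq h]
  refine propext ⟨fun hs => hs.1, fun hs => ⟨hs, ?_⟩⟩
  exact h.sg_le hs (lt_of_le_of_ne (h.mem_Icc hs).1 (Ne.symm ht))

namespace TS
variable {X : Set ℝ} {a b : ℝ}

theorem sg_left (h : TS X a b) {t : ℝ} (ht : t < a) : tsSigma X t = a :=
  le_antisymm (h.sg_le h.lo.1 ht) (h.lo.2 (h.sg_mem t))

theorem sg_right (h : TS X a b) {t : ℝ} (ht : b ≤ t) : tsSigma X t = b := by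
  unfold tsSigma
  rw [if_neg, h.sSup_eq]
  rintro ⟨s, hs, h1⟩
  exact absurd (h.hi.2 hs) (not_le.2 (lt_of_le_of_lt ht h1))

theorem nxt_right (h : TS X a b) {t : ℝ} (ht : b ≤ t) : nxt X b t = b := by
  have := h.nxt_eq h.hi.1
  unfold nxt at this ⊢
  rw [min_self] at this
  rwa [min_eq_right ht]

theorem sg_nxt_off (h : TS X a b) {t : ℝ} (ht : t ∉ X) : tsSigma X t = nxt X b t := by
  rcases le_or_gt b t with hb | hb
  · rw [h.sg_right hb, h.nxt_right hb]
  · have hne : ({s | s ∈ X ∧ t < s}).Nonempty := ⟨b, h.hi.1, hb⟩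
    unfold tsSigma nxt
    rw [if_pos hne, min_eq_left hb.le]
    congr 1
    ext s
    exact ⟨fun hs => ⟨hs.1, hs.2.le⟩, fun hs => ⟨hs.1, lt_of_le_of_ne hs.2 fun e => ht (e ▸ hs.1)⟩⟩

theorem nxt_left (h : TS X a b) {t : ℝ} (ht : t < a) : nxt X b t = a := by
  rw [← h.sg_nxt_off fun hX => absurd (h.lo.2 hX) (not_le.2 ht), h.sg_left ht]

end TS

theorem extK_eq {T : Set ℝ} {a b : ℝ} (h : TS (tsKappa T) a b) (p : ℝ → ℝ) (t : ℝ) :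
    extK T (cR p) t = ((p (nxt (tsKappa T) b t) : ℝ) : ℂ) := by
  unfold extK cR
  split_ifs with hX
  · rw [h.nxt_eq hX]
  · rw [h.sg_nxt_off hX]

theorem mkPair {T : Set ℝ} {a b : ℝ} (h : TS (tsKappa T) a b) {p k u1 : ℝ → ℝ} {c0 : ℝ}
    (hk : Integrable k (TS.mu (tsKappa T) a b))
    (hu1 : ∀ x, u1 x = c0 + ∫ t in Iic x, k t ∂(TS.mu (tsKappa T) a b))
    (hg : IntervalIntegrable (fun t => u1 t / p (nxt (tsKappa T) b t)) volume a b) (d0 : ℝ) :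
    IsPair T (TS.mu (tsKappa T) a b) (cR p)
      (fun x => ((d0 + ∫ t in a..x, u1 t / p (nxt (tsKappa T) b t) : ℝ) : ℂ))
      (fun x => ((u1 x : ℝ) : ℂ)) (fun x => ((k x : ℝ) : ℂ)) := by
  have hl : ∀ t, t < a → u1 t = c0 := by
    intro t ht
    rw [hu1, (h.imu hk t).2, h.sg_left ht]; simp
  have hr : ∀ t, b ≤ t → u1 t = u1 b := by
    intro t ht
    rw [hu1, hu1, (h.imu hk t).2, (h.imu hk b).2, h.sg_right ht, h.sg_right le_rfl]
  have hI : ∀ c, IntervalIntegrable (fun t => u1 t / p (nxt (tsKappa T) b t)) volume a c := by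
    intro c
    rcases le_total c a with hc | hc
    · refine (intervalIntegrable_const (c := c0 / p a)).congr_ae ?_
      rw [EventuallyEq, ae_restrict_iff' measurableSet_uIoc]
      filter_upwards [TS.ae_ne' a] with t ht htI
      rw [uIoc_of_ge hc] at htI
      have := lt_of_le_of_ne htI.2 ht
      rw [hl t this, h.nxt_left this]
    rcases le_total c b with hcb | hcb
    · refine hg.mono_set ?_
      rw [uIcc_of_le hc, uIcc_of_le h.ab]; exact Icc_subset_Icc le_rfl hcb
    · refine hg.trans ((intervalIntegrable_const (c := u1 b / p b)).congr_ae ?_)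
      rw [EventuallyEq, ae_restrict_iff' measurableSet_uIoc]
      refine Eventually.of_forall fun t htI => ?_
      rw [uIoc_of_le hcb] at htI
      rw [hr t htI.1.le, h.nxt_right htI.1.le]
  intro c x hcx
  constructor
  · have e := intervalIntegral.integral_add_adjacent_intervals (hI c) ((hI c).symm.trans (hI x))
    have e2 : ∫ t in c..x, ((u1 t : ℝ) : ℂ) / extK T (cR p) t =
        ((∫ t in c..x, u1 t / p (nxt (tsKappa T) b t) : ℝ) : ℂ) := by
      rw [← intervalIntegral.integral_ofReal]
      congr 1
      ext t
      rw [extK_eq h]; push_cast; rfl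
    simp only
    rw [e2, ← Complex.ofReal_add, ← e]
    congr 1; ring
  · simp only
    rw [integral_complex_ofReal, ← Complex.ofReal_add, hu1 x, hu1 c, ← Iic_union_Ioc_eq_Iic hcx,
      setIntegral_union (Set.disjoint_left.2 fun z hz hz' => not_lt.2 (mem_Iic.1 hz) hz'.1)
      measurableSet_Ioc hk.integrableOn hk.integrableOn]
    congr 1; ring

theorem wM_ae {T : Set ℝ} {μ : Measure ℝ} {r : ℝ → ℝ} (hm : ∀ᵐ t ∂μ, t ∈ tsKappa T)
    (hr : Integrable r μ) (hrpos : ∀ᵐ t ∂μ, 0 < r t) {P : ℝ → Prop} :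
    (∀ᵐ t ∂(wM T μ r), P t) ↔ ∀ᵐ t ∂μ, P t := by
  unfold wM
  rw [Measure.restrict_eq_self_of_ae_mem hm,
    ae_withDensity_iff' hr.aestronglyMeasurable.aemeasurable.ennreal_ofReal]
  constructor
  · intro h
    filter_upwards [h, hrpos] with t h1 h2
    exact h1 (by simpa using h2)
  · intro h
    exact h.mono fun t ht _ => ht

theorem memL2T_bdd {T : Set ℝ} {μ : Measure ℝ} {r : ℝ → ℝ} (hm : ∀ᵐ t ∂μ, t ∈ tsKappa T)
    (hr : Integrable r μ) {u : ℝ → ℂ} {C : ℝ} (hu : ∀ᵐ t ∂μ, ‖u t‖ ≤ C) : MemL2T T μ r u := by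
  unfold MemL2T
  rw [Measure.restrict_eq_self_of_ae_mem hm]
  have h1 : ∫⁻ t, ENNReal.ofReal (r t) ∂μ < ∞ := hr.lintegral_lt_top
  calc ∫⁻ t, sqWeight r u t ∂μ ≤ ∫⁻ t, ENNReal.ofReal C ^ 2 * ENNReal.ofReal (r t) ∂μ := by
        refine lintegral_mono_ae ?_
        filter_upwards [hu] with t ht
        unfold sqWeight
        gcongr
        rw [← enorm_eq_nnnorm, ← ofReal_norm]
        exact ENNReal.ofReal_le_ofReal ht
    _ = ENNReal.ofReal C ^ 2 * ∫⁻ t, ENNReal.ofReal (r t) ∂μ :=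
        lintegral_const_mul' _ _ (by finiteness)
    _ < ∞ := ENNReal.mul_lt_top (by finiteness) h1

theorem memLp_bdd {T : Set ℝ} {μ : Measure ℝ} {r : ℝ → ℝ} (hm : ∀ᵐ t ∂μ, t ∈ tsKappa T)
    (hr : Integrable r μ) {u : ℝ → ℂ} {C : ℝ} (hmu : AEStronglyMeasurable u μ)
    (hu : ∀ᵐ t ∂μ, ‖u t‖ ≤ C) : MemLp u 2 (wM T μ r) := by
  unfold wM
  rw [Measure.restrict_eq_self_of_ae_mem hm]
  have := isFiniteMeasure_withDensity_ofReal hr.2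
  have hac := withDensity_absolutelyContinuous μ (fun t => ENNReal.ofReal (r t))
  exact MemLp.of_bound (hmu.mono_ac hac) C (hac.ae_le hu)

theorem clm_real_mul (L : ℂ →L[ℝ] ℝ) (c : ℝ) (z : ℂ) : L ((c : ℂ) * z) = c * L z := by
  rw [← Complex.real_smul, map_smul, smul_eq_mul]

theorem clm_mul_real (L : ℂ →L[ℝ] ℝ) (c : ℝ) (z : ℂ) : L (z * (c : ℂ)) = L z * c := by
  rw [mul_comm, clm_real_mul, mul_comm]

theorem dirB {T : Set ℝ} {a b : ℝ} (h : TS (tsKappa T) a b) (hσ : tsSigma (tsKappa T) a = a)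
    {p q r : ℝ → ℝ} {E : ℝ} (hp : Integrable (fun t => 1 / p t) (TS.nu (tsKappa T) a b))
    {u u1 k : ℝ → ℂ} (hk : Integrable k (TS.mu (tsKappa T) a b))
    (hpair : IsPair T (TS.mu (tsKappa T) a b) (cR p) u u1 k)
    (hke : ∀ᵐ t ∂(TS.mu (tsKappa T) a b), k t = ((q t - E * r t : ℝ) : ℂ) * u t)
    (L : ℂ →L[ℝ] ℝ) :
    ∃ y y1 : ℝ → ℝ, LSol (TS.cP (tsKappa T) a b p)
      (fun t => TS.cQ (tsKappa T) a b q t - E * TS.cQ (tsKappa T) a b r t) y y1 a b ∧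
      (∀ x ∈ tsKappa T, y x = L (u x)) ∧ y1 a = L (u1 a) ∧ y1 b = L (u1 b) := by
  have hL : ∀ L : ℂ →L[ℝ] ℝ, ∃ y1 : ℝ → ℝ,
      ACd y1 (fun t => wt (tsKappa T) a b t * L (k (tau (tsKappa T) a t))) a b ∧
      y1 a = L (u1 a) ∧ ∀ x ∈ Icc a b, y1 (tsSigma (tsKappa T) x) = L (u1 x) := by
    intro L
    refine h.coreB1 hσ (u1 := fun x => L (u1 x)) (k := fun x => L (k x)) (L.integrable_comp hk)
      fun x hx => ?_
    rw [L.integral_comp_comm hk.integrableOn, ← map_add, ← (hpair a x hx.1).2]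
  have hI : ∀ L : ℂ →L[ℝ] ℝ,
      IntegrableOn (fun t => L (u1 t) / p (nxt (tsKappa T) b t)) (Ioc a b) := by
    intro L
    obtain ⟨y1, h1, -, h2⟩ := hL L
    exact h.coreB1' (k := fun x => L (k x)) hp h1 h2
  have hIc : IntegrableOn (fun t => u1 t / extK T (cR p) t) (Ioc a b) := by
    refine Integrable.re_im_iff.1 ⟨(hI Complex.reCLM).congr ?_, (hI Complex.imCLM).congr ?_⟩
    · refine Eventually.of_forall fun t => ?_
      simp only [extK_eq h]
      simp [Complex.div_ofReal_re]
    · refine Eventually.of_forall fun t => ?_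
      simp only [extK_eq h]
      simp [Complex.div_ofReal_im]
  obtain ⟨y1, h1, h1a, h2⟩ := hL L
  obtain ⟨y, hy, hyu⟩ := h.coreB (u := fun x => L (u x)) (u1 := fun x => L (u1 x))
    (k := fun x => L (k x)) (q := q) (r := r) (E := E) hp h1 h2 (by
      filter_upwards [hke] with t ht
      rw [ht, clm_real_mul]) (by
      intro x hx
      have hi : IntervalIntegrable (fun t => u1 t / extK T (cR p) t) volume a x :=
        (intervalIntegrable_iff_integrableOn_Ioc_of_le hx.1).2
          (hIc.mono_set (Ioc_subset_Ioc le_rfl hx.2))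
      have e : ∀ t, L (u1 t) / p (nxt (tsKappa T) b t) = L (u1 t / extK T (cR p) t) := by
        intro t
        rw [extK_eq h, div_eq_mul_inv, div_eq_mul_inv, ← Complex.ofReal_inv, clm_mul_real]
      simp only [e]
      rw [L.intervalIntegral_comp_comm hi, ← map_add, ← (hpair a x hx.1).1])
  refine ⟨y, y1, hy, hyu, h1a, ?_⟩
  rw [← h2 b ⟨h.ab, le_rfl⟩, h.sg_b]

theorem sin_sub_zero {x φ : ℝ} : Real.sin x * Real.cos φ - Real.cos x * Real.sin φ = 0 ↔
    ∃ k : ℤ, x = φ + k * Real.pi := by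
  rw [← Real.sin_sub, Real.sin_eq_zero_iff]
  exact ⟨fun ⟨k, hk⟩ => ⟨k, by linarith⟩, fun ⟨k, hk⟩ => ⟨k, by linarith⟩⟩

/-- eigenvector gives the angle condition -/
theorem eigB {T : Set ℝ} {a b : ℝ} (h : TS (tsKappa T) a b) (hσ : tsSigma (tsKappa T) a = a)
    {p q r : ℝ → ℝ} {E φα φβ : ℝ} (hp : Integrable (fun t => 1 / p t) (TS.nu (tsKappa T) a b))
    (hq : Integrable q (TS.mu (tsKappa T) a b)) (hr : Integrable r (TS.mu (tsKappa T) a b))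
    {θ : ℝ → ℝ} (hθa : θ a = φα) (hθ : ACd θ (fun s => prF (TS.cP (tsKappa T) a b p)
      (TS.cQ (tsKappa T) a b q) (TS.cQ (tsKappa T) a b r) E s (θ s)) a b)
    {u u1 k : ℝ → ℂ} (hk : Integrable k (TS.mu (tsKappa T) a b))
    (hpair : IsPair T (TS.mu (tsKappa T) a b) (cR p) u u1 k)
    (hke : ∀ᵐ t ∂(TS.mu (tsKappa T) a b), k t = ((q t - E * r t : ℝ) : ℂ) * u t)
    (ha : u a * (Real.cos φα : ℂ) - u1 a * (Real.sin φα : ℂ) = 0)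
    (hb : u b * (Real.cos φβ : ℂ) - u1 b * (Real.sin φβ : ℂ) = 0)
    (hne : ¬ ∀ x ∈ tsKappa T, u x = 0) : ∃ k : ℤ, θ b = φβ + k * Real.pi := by
  have iP := h.cP_int hp
  have iQ := h.cQ_int hq
  have iR := h.cQ_int hr
  obtain ⟨ρ, hρ1, hρ, hv⟩ := lsol_of_theta h.ab iP iQ iR hθ
  have key : ∀ L : ℂ →L[ℝ] ℝ, (∀ x ∈ tsKappa T, L (u x) = 0) ∨ ∃ k : ℤ, θ b = φβ + k * Real.pi := by
    intro L
    obtain ⟨y, y1, hy, hyu, hya, hyb⟩ := dirB h hσ hp hk hpair hke L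
    have ha' := congrArg L ha
    have hb' := congrArg L hb
    rw [map_sub, clm_mul_real, clm_mul_real, map_zero] at ha' hb'
    rw [← hyu a h.lo.1, ← hya] at ha'
    rw [← hyu b h.hi.1, ← hyb] at hb'
    obtain ⟨κ, hκ⟩ := lsol_mult h.ab iP iQ iR hθa hρ1 hv hy ha'
    by_cases h0 : κ = 0
    · left
      intro x hx
      rw [← hyu x hx, (hκ x (h.mem_Icc hx)).1, h0, zero_mul]
    · right
      have hb2 := hκ b ⟨h.ab, le_rfl⟩
      rw [hb2.1, hb2.2] at hb'
      refine sin_sub_zero.1 ?_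
      have hne : κ * ρ b ≠ 0 := mul_ne_zero h0 (hρ b).ne'
      apply mul_left_cancel₀ hne
      rw [mul_zero, ← hb']; ring
  rcases key Complex.reCLM with h1 | h1
  · rcases key Complex.imCLM with h2 | h2
    · exact absurd (fun x hx => Complex.ext (h1 x hx) (h2 x hx)) hne
    · exact h2
  · exact h1

/-- The angle condition gives an eigenvector. -/
theorem eigA {T : Set ℝ} {a b : ℝ} (h : TS (tsKappa T) a b) (hσ : tsSigma (tsKappa T) a = a)
    {p q r : ℝ → ℝ} {E φα φβ : ℝ} (hp : Integrable (fun t => 1 / p t) (TS.nu (tsKappa T) a b))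
    (hq : Integrable q (TS.mu (tsKappa T) a b)) (hr : Integrable r (TS.mu (tsKappa T) a b))
    (hrpos : ∀ᵐ t ∂(TS.mu (tsKappa T) a b), 0 < r t)
    (hZ : volume {x | x ∈ Ioo a b ∧ 0 < TS.cP (tsKappa T) a b p x ∧
      0 < TS.cQ (tsKappa T) a b r x} ≠ 0)
    {θ : ℝ → ℝ} (hθa : θ a = φα) (hθ : ACd θ (fun s => prF (TS.cP (tsKappa T) a b p)
      (TS.cQ (tsKappa T) a b q) (TS.cQ (tsKappa T) a b r) E s (θ s)) a b)
    (hθb : ∃ k : ℤ, θ b = φβ + k * Real.pi) :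
    ∃ F : Lp ℂ 2 (wM T (TS.mu (tsKappa T) a b) r), F ≠ 0 ∧ ∃ u u1 k : ℝ → ℂ,
      MemD2 T (TS.mu (tsKappa T) a b) p r q u u1 k ∧
      (∀ᵐ t ∂(wM T (TS.mu (tsKappa T) a b) r), F t = u t) ∧
      (∀ᵐ t ∂(wM T (TS.mu (tsKappa T) a b) r), ((E : ℂ) • F) t = ellApply r q k u t) ∧
      u a * (Real.cos φα : ℂ) - u1 a * (Real.sin φα : ℂ) = 0 ∧
      u b * (Real.cos φβ : ℂ) - u1 b * (Real.sin φβ : ℂ) = 0 := by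
  have iP := h.cP_int hp
  have iQ := h.cQ_int hq
  have iR := h.cQ_int hr
  obtain ⟨ρ, hρ1, hρ, hv⟩ := lsol_of_theta h.ab iP iQ iR hθ
  have hpos := pr_pos h.ab iR (h.cQ_nonneg hrpos) hZ hθ
  obtain ⟨c1, c2, c3, c4⟩ := h.coreA hp hq hr hv
  have k3 := h.lsol_K3 hv
  set v : ℝ → ℝ := fun t => ρ t * Real.sin (θ t) with hvd
  set v1 : ℝ → ℝ := fun t => ρ t * Real.cos (θ t) with hv1d
  have hpair := mkPair h (p := p) (u1 := fun x => v1 (tsSigma (tsKappa T) x)) c1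
    (fun x => (c2 x).symm) c3 (v a)
  set u : ℝ → ℂ := fun x => ((v a + ∫ t in a..x, v1 (tsSigma (tsKappa T) t) /
    p (nxt (tsKappa T) b t) : ℝ) : ℂ) with hud
  set k : ℝ → ℂ := fun x => (((q x - E * r x) * v x : ℝ) : ℂ) with hkd
  set M := TS.mu (tsKappa T) a b with hMd
  have hu : ∀ x ∈ tsKappa T, u x = v x := fun x hx => by rw [hud]; simp only; rw [c4 x hx]
  have hm : ∀ᵐ t ∂M, t ∈ tsKappa T := h.mu_mem
  have huv : ∀ᵐ t ∂M, u t = v t := hm.mono hu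
  have hcont := hv.1.continuousOn h.ab
  obtain ⟨C, hC⟩ := isCompact_Icc.exists_bound_of_continuousOn hcont
  have hfin : IsFiniteMeasure M := by rw [hMd]; unfold TS.mu; infer_instance
  have hvm : AEStronglyMeasurable v M := by
    have := (cont_int (hm.mono fun t ht => h.mem_Icc ht) hcont
      (integrable_const (1 : ℝ))).aestronglyMeasurable
    simpa using this
  have hum : AEStronglyMeasurable u M :=
    (Complex.continuous_ofReal.comp_aestronglyMeasurable hvm).congr (huv.mono fun t ht => ht.symm)
  have hub : ∀ᵐ t ∂M, ‖u t‖ ≤ C := by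
    filter_upwards [hm] with t ht
    rw [hu t ht, Complex.norm_real]
    exact hC t (h.mem_Icc ht)
  have hell : ∀ᵐ t ∂M, ellApply r q k u t = (E : ℂ) * u t := by
    filter_upwards [huv, hrpos] with t h1 h2
    have h2' : (r t : ℂ) ≠ 0 := by exact_mod_cast h2.ne'
    unfold ellApply
    rw [div_eq_iff h2', h1, hkd]
    push_cast; ring
  have hLp := memLp_bdd hm hr hum hub
  have hF := hLp.coeFn_toLp
  refine ⟨hLp.toLp u, ?_, u, _, k, ⟨c1.ofReal.locallyIntegrable, hpair, memL2T_bdd hm hr hub,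
    memL2T_bdd (C := |E| * C) hm hr ?_⟩, hF, ?_, ?_, ?_⟩
  · intro h0
    rw [h0] at hF
    have e0 : ∀ᵐ t ∂(wM T M r), u t = 0 := by
      filter_upwards [hF, Lp.coeFn_zero ℂ 2 (wM T M r)] with t h1 h2
      rw [← h1, h2]; rfl
    rw [wM_ae hm hr hrpos] at e0
    have e1 : ∀ᵐ t ∂M, v t = 0 := by
      filter_upwards [e0, huv] with t h1 h2
      rw [h1] at h2; exact_mod_cast h2.symm
    have e2 : ∫ t in a..b, TS.cQ (tsKappa T) a b r t * Real.sin (θ t) ^ 2 = 0 := by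
      rw [intervalIntegral.integral_of_le h.ab, setIntegral_congr_ae (g := fun _ => (0 : ℝ))
        measurableSet_Ioc]
      · simp
      filter_upwards [k3, h.ae_mu e1] with t h1 h2 ht
      have h3 : wt (tsKappa T) a b t * v (tau (tsKappa T) a t) = wt (tsKappa T) a b t * v t := h1 ht
      rw [h2 ht, mul_zero] at h3
      have h4 : wt (tsKappa T) a b t * Real.sin (θ t) = 0 := by
        have : ρ t * (wt (tsKappa T) a b t * Real.sin (θ t)) = 0 := by
          rw [h3, hvd]; ring
        exact (mul_eq_zero.1 this).resolve_left (hρ t).ne'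
      simp only [TS.cQ]
      linear_combination (r (tau (tsKappa T) a t) * Real.sin (θ t)) * h4
    linarith
  · filter_upwards [hell, hub] with t h1 h2
    rw [h1, norm_mul, Complex.norm_real, Real.norm_eq_abs]
    gcongr
  · filter_upwards [Lp.coeFn_smul (E : ℂ) (hLp.toLp u), hF, (wM_ae hm hr hrpos).2 hell]
      with t h1 h2 h3
    rw [h1, h3, Pi.smul_apply, h2, smul_eq_mul]
  · rw [hu a h.lo.1, hσ]
    simp only [hvd, hv1d, hθa, hρ1]
    push_cast; ring
  · rw [hu b h.hi.1, h.sg_b]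
    have := sin_sub_zero.2 hθb
    have e : v b * Real.cos φβ - v1 b * Real.sin φβ = 0 := by
      simp only [hvd, hv1d]
      linear_combination ρ b * this
    exact_mod_cast e

/-- In the right-scattered case the relation is multivalued. -/
theorem multi {T : Set ℝ} {a b : ℝ} (h : TS (tsKappa T) a b) (hσ : a < tsSigma (tsKappa T) a)
    {μ : Measure ℝ} (hμe : μ = TS.mu (tsKappa T) a b)
    (hμ : ∀ c d : ℝ, c ≤ d →
      μ (Set.Ioc c d) = ENNReal.ofReal (tsSigma (tsKappa T) d - tsSigma (tsKappa T) c))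
    {p q r : ℝ → ℝ} {φα φβ : ℝ}
    (hr : Integrable r μ) (hrpos : ∀ᵐ t ∂μ, 0 < r t) :
    ∃ G : Lp ℂ 2 (wM T μ r), G ≠ 0 ∧ ∃ u u1 k : ℝ → ℂ,
      MemD2 T μ p r q u u1 k ∧
      (∀ᵐ t ∂(wM T μ r), (0 : Lp ℂ 2 (wM T μ r)) t = u t) ∧
      (∀ᵐ t ∂(wM T μ r), G t = ellApply r q k u t) ∧
      u a * (Real.cos φα : ℂ) - u1 a * (Real.sin φα : ℂ) = 0 ∧
      u b * (Real.cos φβ : ℂ) - u1 b * (Real.sin φβ : ℂ) = 0 := by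
  subst hμe
  set M := TS.mu (tsKappa T) a b with hMd
  have hm : ∀ᵐ t ∂M, t ∈ tsKappa T := h.mu_mem
  have hfin : IsFiniteMeasure M := by rw [hMd]; unfold TS.mu; infer_instance
  have hna : ¬ ∀ᵐ t ∂M, t ≠ a := by
    intro h0
    have h1 := hμ (a - 1) a (by linarith)
    rw [h.sg_left (by linarith : a - 1 < a)] at h1
    have h2 : M (Ioc (a - 1) a) = 0 := by
      rw [measure_eq_zero_iff_ae_notMem]
      filter_upwards [h0, hm] with t ht ht' hI
      exact ht (le_antisymm hI.2 (h.lo.2 ht'))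
    rw [h2] at h1
    have := ENNReal.ofReal_eq_zero.1 h1.symm
    linarith
  set kk : ℝ → ℝ := ({a} : Set ℝ).indicator fun _ => 1 with hkk
  have hkm : Measurable kk := measurable_const.indicator (measurableSet_singleton a)
  have hk1 : ∀ t, ‖kk t‖ ≤ 1 := by
    intro t
    by_cases ht : t = a <;> simp [hkk, ht]
  have hki : Integrable kk M :=
    Integrable.of_bound hkm.aestronglyMeasurable 1 (Eventually.of_forall hk1)
  set m := ∫ t in Iic a, kk t ∂M with hmd
  set w : ℝ → ℝ := fun x => -m + ∫ t in Iic x, kk t ∂M with hw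
  have hw0 : ∀ x, a ≤ x → w x = 0 := by
    intro x hx
    have : ∫ t in Iic x, kk t ∂M = m := by
      rw [hmd, hkk, setIntegral_indicator (measurableSet_singleton a),
        setIntegral_indicator (measurableSet_singleton a)]
      congr 2
      ext t
      simp only [mem_inter_iff, mem_Iic, mem_singleton_iff]
      constructor
      · rintro ⟨-, rfl⟩; exact ⟨le_rfl, rfl⟩
      · rintro ⟨-, rfl⟩; exact ⟨hx, rfl⟩
    rw [hw]; simp only; rw [this]; ring
  have hz : ∀ x, a ≤ x → EqOn (fun t => w t / p (nxt (tsKappa T) b t)) (fun _ => (0 : ℝ)) (uIcc a x) := by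
    intro x hx t ht
    rw [uIcc_of_le hx] at ht
    simp only
    rw [hw0 t ht.1, zero_div]
  have hg : IntervalIntegrable (fun t => w t / p (nxt (tsKappa T) b t)) volume a b :=
    (intervalIntegrable_const (c := (0 : ℝ))).congr fun t ht =>
      (hz b h.ab (uIoc_subset_uIcc ht)).symm
  have hpair := mkPair h (p := p) (u1 := w) hki (fun x => rfl) hg 0
  set u : ℝ → ℂ := fun x => ((0 + ∫ t in a..x, w t /
    p (nxt (tsKappa T) b t) : ℝ) : ℂ) with hud
  set k : ℝ → ℂ := fun x => ((kk x : ℝ) : ℂ) with hkd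
  have hu : ∀ x, a ≤ x → u x = 0 := by
    intro x hx
    simp only [hud]
    rw [intervalIntegral.integral_congr (hz x hx)]
    simp
  have hu' : ∀ᵐ t ∂M, u t = 0 := hm.mono fun t ht => hu t (h.lo.2 ht)
  have hell : ∀ᵐ t ∂M, ellApply r q k u t = -k t / (r a : ℂ) := by
    filter_upwards [hu'] with t ht
    unfold ellApply
    rw [ht, mul_zero, add_zero]
    by_cases h1 : t = a
    · rw [h1]
    · have : k t = 0 := by simp [hkd, hkk, h1]
      rw [this]; simp
  have hb : ∀ t, ‖-k t / (r a : ℂ)‖ ≤ 1 / |r a| := by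
    intro t
    rw [norm_div, norm_neg, Complex.norm_real, Complex.norm_real, Real.norm_eq_abs (r a)]
    gcongr
    exact hk1 t
  have hLp : MemLp (fun t => -k t / (r a : ℂ)) 2 (wM T M r) :=
    memLp_bdd hm hr ((Complex.measurable_ofReal.comp hkm).neg.div_const _).aestronglyMeasurable
      (Eventually.of_forall hb)
  have hG := hLp.coeFn_toLp
  refine ⟨hLp.toLp _, ?_, u, _, k, ⟨hki.ofReal.locallyIntegrable, hpair,
    memL2T_bdd (C := 0) hm hr ?_, memL2T_bdd (C := 1 / |r a|) hm hr ?_⟩, ?_, ?_, ?_, ?_⟩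
  · intro h0
    rw [h0] at hG
    have e0 : ∀ᵐ t ∂(wM T M r), -k t / (r a : ℂ) = 0 := by
      filter_upwards [hG, Lp.coeFn_zero ℂ 2 (wM T M r)] with t h1 h2
      rw [← h1, h2]; rfl
    rw [wM_ae hm hr hrpos] at e0
    apply hna
    filter_upwards [e0, hrpos] with t h1 h2 h3
    subst h3
    have : (r t : ℂ) ≠ 0 := by exact_mod_cast h2.ne'
    rw [div_eq_zero_iff] at h1
    rcases h1 with h1 | h1
    · simp [hkd, hkk] at h1
    · exact this h1
  · filter_upwards [hu'] with t ht
    rw [ht]; simp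
  · filter_upwards [hell] with t ht
    rw [ht]; exact hb t
  · filter_upwards [(wM_ae hm hr hrpos).2 hu', Lp.coeFn_zero ℂ 2 (wM T M r)] with t h1 h2
    rw [h1, h2]; rfl
  · filter_upwards [(wM_ae hm hr hrpos).2 hell, hG] with t h1 h2
    rw [h1, h2]
  · rw [hu a le_rfl, hw0 a le_rfl]; simp
  · rw [hu b h.ab, hw0 b h.ab]; simp

/-- Eigenvalue asymptotics: if `𝕋` is bounded, `p > 0`, the space `L²(𝕋_κ; r dσ_κ)` is
infinite dimensional and `L = ∫_𝕋 √(r/p) dt > 0`, then the self-adjoint operator `S` with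
separated boundary conditions has an infinite set of eigenvalues which is bounded from below
and has no finite accumulation point, and enumerating them as `E₀ < E₁ < ⋯` one has
`E_n / n² → π² / L²`. -/
theorem eigenvalue_asymptotics_bounded_time_scale
    (T : Set ℝ) (hne : T.Nonempty) (hcl : IsClosed T)
    (hbb : BddBelow T) (hba : BddAbove T)
    (hfive : ∃ s : Finset ℝ, ↑s ⊆ T ∧ 5 ≤ s.card)
    (μ ν : Measure ℝ)
    (hμ : ∀ c d : ℝ, c ≤ d →
      μ (Set.Ioc c d) = ENNReal.ofReal (tsSigma (tsKappa T) d - tsSigma (tsKappa T) c))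
    (hν : ∀ c d : ℝ, c ≤ d → ν (Set.Ico c d) = ENNReal.ofReal (tsRho T d - tsRho T c))
    (p r q : ℝ → ℝ)
    (hr : Integrable r (μ.restrict (tsKappa T))) (hrpos : ∀ᵐ t ∂μ, 0 < r t)
    (hq : Integrable q (μ.restrict (tsKappa T)))
    (hppos : ∀ᵐ t ∂ν, 0 < p t) (hp : Integrable (fun t => 1 / p t) ν)
    (φα φβ : ℝ) (hφα : 0 ≤ φα ∧ φα < Real.pi) (hφβ : 0 ≤ φβ ∧ φβ < Real.pi)
    (hα : tsSigma T (sInf T) < tsSigma T (tsSigma T (sInf T)) → φα ≠ 0)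
    (hβ : tsRho T (sSup T) < tsSigma T (tsRho T (sSup T)) →
      p (sSup T) * Real.sin φβ ≠ (sSup T - tsRho T (sSup T)) * Real.cos φβ)
    (S : Lp ℂ 2 (wM T μ r) →ₗ.[ℂ] Lp ℂ 2 (wM T μ r))
    (hSsa : IsSelfAdjoint S)
    (hSgraph : ∀ F G : Lp ℂ 2 (wM T μ r), (F, G) ∈ S.graph ↔
      ∃ u u1 h : ℝ → ℂ, MemD2 T μ p r q u u1 h ∧
        (∀ᵐ t ∂(wM T μ r), F t = u t) ∧
        (∀ᵐ t ∂(wM T μ r), G t = ellApply r q h u t) ∧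
        u (tsSigma T (sInf T)) * (Real.cos φα : ℂ) -
          u1 (tsSigma T (sInf T)) * (Real.sin φα : ℂ) = 0 ∧
        u (sSup T) * (Real.cos φβ : ℂ) - u1 (sSup T) * (Real.sin φβ : ℂ) = 0)
    (hinf : ¬ FiniteDimensional ℂ (Lp ℂ 2 (wM T μ r)))
    (hL : 0 < ∫ t in T, Real.sqrt (r t / p t)) :
    Set.Infinite {E : ℝ | ∃ F : Lp ℂ 2 (wM T μ r), F ≠ 0 ∧ (F, (E : ℂ) • F) ∈ S.graph} ∧
    BddBelow {E : ℝ | ∃ F : Lp ℂ 2 (wM T μ r), F ≠ 0 ∧ (F, (E : ℂ) • F) ∈ S.graph} ∧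
    (∀ x : ℝ, ¬ AccPt x (Filter.principal
      {E : ℝ | ∃ F : Lp ℂ 2 (wM T μ r), F ≠ 0 ∧ (F, (E : ℂ) • F) ∈ S.graph})) ∧
    ∃ E : ℕ → ℝ, StrictMono E ∧
      Set.range E = {E : ℝ | ∃ F : Lp ℂ 2 (wM T μ r), F ≠ 0 ∧ (F, (E : ℂ) • F) ∈ S.graph} ∧
      Filter.Tendsto (fun n => E n / (n : ℝ) ^ 2) Filter.atTop
        (nhds (Real.pi ^ 2 / (∫ t in T, Real.sqrt (r t / p t)) ^ 2)) := by
  have hT := TS.ofT hne hcl hbb hba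
  have hX := kappa_TS hT
  have hμe := hX.mu_eq hμ
  have hνe := hT.nu_eq hν
  have hmem : ∀ᵐ t ∂μ, t ∈ tsKappa T := by rw [hμe]; exact hX.map_tau_mem
  rw [Measure.restrict_eq_self_of_ae_mem hmem] at hr hq
  by_cases hσ : tsSigma (tsKappa T) (tsSigma T (sInf T)) = tsSigma T (sInf T)
  swap
  · exfalso
    have hlt := lt_of_le_of_ne (hX.le_sg hX.ab) (Ne.symm hσ)
    obtain ⟨G, hG0, hG⟩ := multi (p := p) (q := q) (φα := φα) (φβ := φβ) hX hlt hμe hμ hr hrpos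
    exact hG0 (S.graph_fst_eq_zero_snd ((hSgraph 0 G).2 hG) rfl)
  have hνX := kappa_nu hT
  have hμe' : μ = TS.mu (tsKappa T) (tsSigma T (sInf T)) (sSup T) := hμe
  have hνe' : ν = TS.nu T (sInf T) (sSup T) := hνe
  rw [← hνe'] at hνX
  have hp' := hp.mono_measure hνX
  have hpp' := ae_mono hνX hppos
  set X := tsKappa T with hXd
  set a := tsSigma T (sInf T) with had
  set b := sSup T with hbd
  subst hμe'
  have iP := hX.cP_int hp'
  have iQ := hX.cQ_int hq
  have iR := hX.cQ_int hr
  have hP0 := hX.cP_nonneg hpp'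
  have hR0 := hX.cQ_nonneg hrpos
  have hLe := (hX.L_eq p r).trans (L_T hT _)
  have hZ := hX.hZ_of hP0 hR0 (by rw [hLe]; exact hL)
  obtain ⟨θ, h1, h2, h3, h4, h5⟩ := theta_package hX.ab hφα.1 iP iQ iR hP0 hR0 hZ
  rw [hLe] at h5
  refine counting h2 h3 h4 hL h5 hφβ fun E => ?_
  constructor
  · rintro ⟨F, hF0, hF⟩
    obtain ⟨u, u1, k, hD, hFu, hG, hba, hbb⟩ := (hSgraph F _).1 hF
    have hk : Integrable k (TS.mu X a b) := by
      have := hD.1.integrableOn_isCompact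
        (isCompact_Icc.of_isClosed_subset hX.cl fun x hx => hX.mem_Icc hx)
      rwa [IntegrableOn, Measure.restrict_eq_self_of_ae_mem hmem] at this
    have hke : ∀ᵐ t ∂(TS.mu X a b), k t = ((q t - E * r t : ℝ) : ℂ) * u t := by
      have e : ∀ᵐ t ∂(wM T (TS.mu X a b) r), (E : ℂ) * u t = ellApply r q k u t := by
        filter_upwards [hFu, hG, Lp.coeFn_smul (E : ℂ) F] with t e1 e2 e3
        rw [← e2, e3, Pi.smul_apply, e1, smul_eq_mul]
      rw [wM_ae hmem hr hrpos] at e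
      filter_upwards [e, hrpos] with t e1 e2
      have e3 : (r t : ℂ) ≠ 0 := by exact_mod_cast e2.ne'
      unfold ellApply at e1
      rw [eq_div_iff e3] at e1
      push_cast
      linear_combination e1
    refine eigB hX hσ hp' hq hr (h1 E).1 (h1 E).2 hk hD.2.1 hke hba hbb fun h0 => hF0 ?_
    refine Lp.eq_zero_iff_ae_eq_zero.2 ?_
    have e : ∀ᵐ t ∂(wM T (TS.mu X a b) r), u t = 0 :=
      (wM_ae hmem hr hrpos).2 (hmem.mono h0)
    filter_upwards [hFu, e] with t e1 e2
    rw [e1, e2]; rfl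
  · intro hk
    obtain ⟨F, hF0, hF⟩ := eigA hX hσ hp' hq hr hrpos hZ (h1 E).1 (h1 E).2 hk
    exact ⟨F, hF0, (hSgraph F _).2 hF⟩
end

section
/- Assume 𝕋 is bounded and let S be the self-adjoint operator with separated boundary conditions as above. Then every eigenvalue of S is simple: for every λ ∈ ℝ, the eigenspace {f ∈ dom S : Sf = λ·f} has dimension at most one. -/
open MeasureTheory Set Filter
open scoped ENNReal NNReal Classical

/-- local step -/
lemma core_zero (μ : Measure ℝ) (α b : ℝ) (hab : α ≤ b) (e k w w1 : ℝ → ℂ)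
    (he : IntegrableOn (fun t => ‖1 / e t‖) (Ioc α b) volume)
    (hk : IntegrableOn k (Ioc α b) μ)
    (hw : ∀ c x, α ≤ c → c ≤ x → x ≤ b → w x = w c + ∫ t in c..x, w1 t / e t)
    (hw1 : ∀ x ∈ Icc α b, w1 x = ∫ t in Ioc α x, k t * w t ∂μ)
    (h0 : w α = 0) (hB : ∃ M, ∀ x ∈ Icc α b, ‖w x‖ ≤ M) :
    ∀ x ∈ Icc α b, w x = 0 := by
  obtain ⟨M0, hM0⟩ := hB
  set K := ∫ t in Ioc α b, ‖k t‖ ∂μ with hK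
  have hK0 : 0 ≤ K := integral_nonneg fun _ => norm_nonneg _
  have hKt : ∀ x ∈ Icc α b, ∫ t in Ioc α x, ‖k t‖ ∂μ ≤ K := fun x hx =>
    setIntegral_mono_set hk.norm (ae_of_all _ fun _ => norm_nonneg _)
      (LE.le.eventuallyLE (Ioc_subset_Ioc_right hx.2))
  have hei : ∀ c x, α ≤ c → c ≤ x → x ≤ b →
      IntervalIntegrable (fun t => ‖1 / e t‖) volume c x := fun c x h1 h2 h3 =>
    (intervalIntegrable_iff_integrableOn_Ioc_of_le h2).2 (he.mono_set (Ioc_subset_Ioc h1 h3))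
  have half : ∀ c d M, α ≤ c → c ≤ d → d ≤ b → K * (∫ t in c..d, ‖1 / e t‖) ≤ 1 / 2 →
      (∀ x ∈ Icc α c, w x = 0) → (∀ x ∈ Icc α d, ‖w x‖ ≤ M) →
      ∀ x ∈ Icc α d, ‖w x‖ ≤ M / 2 := by
    intro c d M hc hcd hd hsm hz hM x hx
    have hMn : 0 ≤ M := (norm_nonneg _).trans (hM x hx)
    rcases le_total x c with hxc | hxc
    · rw [hz x ⟨hx.1, hxc⟩]; simpa using by linarith
    have hw1b : ∀ t ∈ Icc α d, ‖w1 t‖ ≤ K * M := by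
      intro t ht
      have htb : t ∈ Icc α b := ⟨ht.1, ht.2.trans hd⟩
      rw [hw1 t htb]
      calc ‖∫ s in Ioc α t, k s * w s ∂μ‖ ≤ ∫ s in Ioc α t, ‖k s‖ * M ∂μ := by
            refine norm_integral_le_of_norm_le
              ((hk.mono_set (Ioc_subset_Ioc_right htb.2)).norm.mul_const M) ?_
            refine (ae_restrict_mem measurableSet_Ioc).mono fun s hs => ?_
            rw [norm_mul]
            exact mul_le_mul_of_nonneg_left (hM s ⟨hs.1.le, hs.2.trans ht.2⟩) (norm_nonneg _)
        _ = (∫ s in Ioc α t, ‖k s‖ ∂μ) * M := integral_mul_const _ _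
        _ ≤ K * M := mul_le_mul_of_nonneg_right (hKt t htb) hMn
    rw [hw c x hc hxc (hx.2.trans hd), hz c ⟨hc, le_rfl⟩, zero_add]
    calc ‖∫ t in c..x, w1 t / e t‖ ≤ ∫ t in c..x, K * M * ‖1 / e t‖ := by
          refine intervalIntegral.norm_integral_le_of_norm_le hxc ?_
            ((hei c x hc hxc (hx.2.trans hd)).const_mul _)
          refine ae_of_all _ fun t ht => ?_
          rw [div_eq_mul_one_div, norm_mul]
          exact mul_le_mul_of_nonneg_right (hw1b t ⟨hc.trans ht.1.le, ht.2.trans hx.2⟩)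
            (norm_nonneg _)
      _ = K * M * ∫ t in c..x, ‖1 / e t‖ := intervalIntegral.integral_const_mul _ _
      _ ≤ K * M * ∫ t in c..d, ‖1 / e t‖ := by
          refine mul_le_mul_of_nonneg_left ?_ (mul_nonneg hK0 hMn)
          exact intervalIntegral.integral_mono_interval le_rfl hxc hx.2
            (ae_of_all _ fun _ => norm_nonneg _) (hei c d hc hcd hd)
      _ = (K * ∫ t in c..d, ‖1 / e t‖) * M := by ring
      _ ≤ 1 / 2 * M := mul_le_mul_of_nonneg_right hsm hMn
      _ = M / 2 := by ring
  have step : ∀ c d, α ≤ c → c ≤ d → d ≤ b → K * (∫ t in c..d, ‖1 / e t‖) ≤ 1 / 2 →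
      (∀ x ∈ Icc α c, w x = 0) → ∀ x ∈ Icc α d, w x = 0 := by
    intro c d hc hcd hd hsm hz x hx
    have hn : ∀ n : ℕ, ∀ y ∈ Icc α d, ‖w y‖ ≤ M0 * (1 / 2) ^ n := by
      intro n
      induction n with
      | zero => intro y hy; simpa using hM0 y ⟨hy.1, hy.2.trans hd⟩
      | succ n ih =>
        intro y hy
        have := half c d _ hc hcd hd hsm hz ih y hy
        rw [pow_succ]; linarith
    have ht : Tendsto (fun n : ℕ => M0 * (1 / 2 : ℝ) ^ n) atTop (nhds (M0 * 0)) :=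
      (tendsto_pow_atTop_nhds_zero_of_lt_one (by norm_num) (by norm_num)).const_mul M0
    have := ge_of_tendsto' ht (fun n => hn n x hx)
    rw [mul_zero] at this
    exact norm_le_zero_iff.1 this
  have hcont : ContinuousOn (fun x => ∫ t in α..x, ‖1 / e t‖) (Icc α b) := by
    have := intervalIntegral.continuousOn_primitive_interval (μ := volume) (f := fun t => ‖1 / e t‖)
      (a := α) (b := b) (by rw [uIcc_of_le hab]; exact (integrableOn_Icc_iff_integrableOn_Ioc (by simp)).2 he)
    rwa [uIcc_of_le hab] at this
  have huc := isCompact_Icc.uniformContinuousOn_of_continuous hcont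
  rw [Metric.uniformContinuousOn_iff] at huc
  obtain ⟨δ, hδ, hδ'⟩ := huc (1 / (2 * (K + 1))) (by positivity)
  have hsmall : ∀ c d, α ≤ c → c ≤ d → d ≤ b → d < c + δ →
      K * (∫ t in c..d, ‖1 / e t‖) ≤ 1 / 2 := by
    intro c d hc hcd hd hdc
    have h1 := hδ' d ⟨hc.trans hcd, hd⟩ c ⟨hc, hcd.trans hd⟩ (by
      rw [Real.dist_eq, abs_of_nonneg (by linarith)]; linarith)
    rw [Real.dist_eq, intervalIntegral.integral_interval_sub_left
      (hei α d le_rfl (hc.trans hcd) hd) (hei α c le_rfl hc (hcd.trans hd))] at h1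
    have h2 := (le_abs_self _).trans h1.le
    calc K * (∫ t in c..d, ‖1 / e t‖) ≤ K * (1 / (2 * (K + 1))) :=
          mul_le_mul_of_nonneg_left h2 hK0
      _ ≤ 1 / 2 := by
          rw [mul_one_div, div_le_div_iff₀ (by positivity) (by norm_num)]; linarith
  have hind : ∀ n : ℕ, ∀ x ∈ Icc α (min b (α + n * (δ / 2))), w x = 0 := by
    intro n
    induction n with
    | zero =>
      intro x hx
      have : x = α := le_antisymm (by simpa [hab] using hx.2) hx.1
      rw [this, h0]
    | succ n ih =>
      have e1 : α + ((n + 1 : ℕ) : ℝ) * (δ / 2) = α + n * (δ / 2) + δ / 2 := by push_cast; ring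
      have hnn : 0 ≤ (n : ℝ) * (δ / 2) := by positivity
      have hle : min b (α + n * (δ / 2)) ≤ min b (α + ((n + 1 : ℕ) : ℝ) * (δ / 2)) :=
        min_le_min le_rfl (by rw [e1]; linarith)
      refine step (min b (α + n * (δ / 2))) _ (le_min hab (by linarith)) hle (min_le_left _ _)
        (hsmall _ _ (le_min hab (by linarith)) hle (min_le_left _ _) ?_) ih
      rw [e1]
      rcases le_total b (α + n * (δ / 2)) with h | h
      · rw [min_eq_left h, min_eq_left (by linarith)]; linarith
      · rw [min_eq_right h]
        exact (min_le_right _ _).trans_lt (by linarith)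
  intro x hx
  obtain ⟨n, hn⟩ := exists_nat_gt ((b - α) / (δ / 2))
  rw [div_lt_iff₀ (by positivity)] at hn
  exact hind n x ⟨hx.1, hx.2.trans (le_min le_rfl (by linarith))⟩

lemma kappa_mu_null (T : Set ℝ) (hTc : IsClosed T) (μ : Measure ℝ)
    (hμ : ∀ c d : ℝ, c ≤ d → μ (Set.Ioc c d) = ENNReal.ofReal (tsSigma T d - tsSigma T c)) :
    μ Tᶜ = 0 := by
  refine measure_null_of_locally_null _ fun t ht => ?_
  obtain ⟨ε, hε, hb⟩ := Metric.isOpen_iff.1 hTc.isOpen_compl t ht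
  refine ⟨Ioc (t - ε / 2) (t + ε / 2), mem_nhdsWithin_of_mem_nhds
    (Ioc_mem_nhds (by linarith) (by linarith)), ?_⟩
  rw [hμ _ _ (by linarith)]
  have : {s | s ∈ T ∧ t - ε / 2 < s} = {s | s ∈ T ∧ t + ε / 2 < s} := by
    ext s
    simp only [mem_ofPred_eq]
    refine ⟨fun h => ⟨h.1, ?_⟩, fun h => ⟨h.1, by linarith [h.2]⟩⟩
    by_contra hs
    refine hb (a := s) ?_ h.1
    rw [Metric.mem_ball, Real.dist_eq, abs_lt]
    constructor <;> linarith [h.2]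
  unfold tsSigma
  rw [this]; simp

lemma nu_map (T : Set ℝ) (hne : T.Nonempty) (hcl : IsClosed T)
    (hbb : BddBelow T) (hba : BddAbove T) (ν : Measure ℝ)
    (hν : ∀ c d : ℝ, c ≤ d → ν (Set.Ico c d) = ENNReal.ofReal (tsRho T d - tsRho T c)) :
    AEMeasurable (fun t => sInf (T ∩ Ici t)) (volume.restrict (Ioc (sInf T) (sSup T))) ∧
    Measure.map (fun t => sInf (T ∩ Ici t)) (volume.restrict (Ioc (sInf T) (sSup T))) = ν := by
  have hbT : sSup T ∈ T := hcl.csSup_mem hne hba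
  have haT : sInf T ∈ T := hcl.csInf_mem hne hbb
  have hbdd : ∀ t, BddBelow (T ∩ Ici t) := fun t => hbb.mono inter_subset_left
  have hnonem : ∀ t ≤ sSup T, (T ∩ Ici t).Nonempty := fun t ht => ⟨_, hbT, ht⟩
  have hm : AEMeasurable (fun t => sInf (T ∩ Ici t))
      (volume.restrict (Ioc (sInf T) (sSup T))) := by
    refine aemeasurable_restrict_of_monotoneOn measurableSet_Ioc ?_
    intro x hx y hy hxy
    exact csInf_le_csInf (hbdd x) (hnonem y hy.2)
      (inter_subset_inter_right _ (Ici_subset_Ici.2 hxy))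
  refine ⟨hm, ?_⟩
  have hrho : ∀ c, tsRho T c ∈ Icc (sInf T) (sSup T) := by
    intro c
    unfold tsRho
    split_ifs with h
    · obtain ⟨s, hs⟩ := h
      exact ⟨(csInf_le hbb hs.1).trans (le_csSup (hba.mono fun x hx => hx.1) hs),
        csSup_le_csSup hba ⟨s, hs⟩ fun x hx => hx.1⟩
    · exact ⟨le_rfl, csInf_le_csSup hne hbb hba⟩
  have h1 : ∀ c t, t ≤ sSup T → tsRho T c < t → c ≤ sInf (T ∩ Ici t) := by
    intro c t ht hct
    refine le_csInf (hnonem t ht) fun s hs => ?_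
    by_contra hsc
    push Not at hsc
    have hh : ({s | s ∈ T ∧ s < c}).Nonempty := ⟨s, hs.1, hsc⟩
    unfold tsRho at hct
    rw [if_pos hh] at hct
    have : s ≤ sSup {s | s ∈ T ∧ s < c} := le_csSup (hba.mono fun x hx => hx.1) ⟨hs.1, hsc⟩
    have := hs.2
    simp only [mem_Ici] at this
    linarith
  have h2 : ∀ c t, sInf T < t → t < tsRho T c → sInf (T ∩ Ici t) < c := by
    intro c t ht hct
    unfold tsRho at hct
    split_ifs at hct with h
    · obtain ⟨s, hs, hts⟩ := exists_lt_of_lt_csSup h hct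
      exact (csInf_le (hbdd t) ⟨hs.1, hts.le⟩).trans_lt hs.2
    · linarith
  have : IsFiniteMeasure (volume.restrict (Ioc (sInf T) (sSup T))) :=
    ⟨by simp⟩
  refine Measure.ext_of_Ico _ _ fun c d hcd => ?_
  rw [hν c d hcd.le, Measure.map_apply_of_aemeasurable hm measurableSet_Ico]
  rw [Measure.restrict_apply' measurableSet_Ioc]
  apply le_antisymm
  · rw [← Real.volume_Icc]
    refine measure_mono ?_
    rintro t ⟨⟨ht1, ht2⟩, ht3, ht4⟩
    constructor
    · by_contra h; push Not at h
      exact absurd (h2 c t ht3 h) (not_lt.2 ht1)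
    · by_contra h; push Not at h
      exact absurd (h1 d t ht4 h) (not_le.2 ht2)
  · rw [← Real.volume_Ioo]
    refine measure_mono ?_
    rintro t ⟨ht1, ht2⟩
    have hta : sInf T < t := (hrho c).1.trans_lt ht1
    have htb : t ≤ sSup T := ht2.le.trans (hrho d).2
    exact ⟨⟨h1 c t htb ht1, h2 d t hta ht2⟩, hta, htb⟩

lemma prim_meas (μ : Measure ℝ) (α b : ℝ) (hfin : μ (Ioc α b) ≠ ∞) (e h u1 : ℝ → ℂ)
    (he : IntegrableOn (fun t => 1 / e t) (Ioc α b) volume)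
    (hh : IntegrableOn h (Ioc α b) μ)
    (hu1 : ∀ x ∈ Icc α b, u1 x = u1 α + ∫ t in Ioc α x, h t ∂μ) :
    IntegrableOn (fun t => u1 t / e t) (Ioc α b) volume := by
  have : IsFiniteMeasure (μ.restrict (Ioc α b)) := ⟨by simpa using hfin.lt_top⟩
  obtain ⟨g, hg, hgh⟩ := hh.1
  have hset : MeasurableSet {z : ℝ × ℝ | z.2 ≤ z.1} :=
    measurableSet_le measurable_snd measurable_fst
  have hF : StronglyMeasurable (fun z : ℝ × ℝ => {z : ℝ × ℝ | z.2 ≤ z.1}.indicator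
      (fun z => g z.2) z) := (hg.comp_measurable measurable_snd).indicator hset
  have hG : StronglyMeasurable (fun x => ∫ y, {z : ℝ × ℝ | z.2 ≤ z.1}.indicator
      (fun z => g z.2) (x, y) ∂(μ.restrict (Ioc α b))) :=
    StronglyMeasurable.integral_prod_right (f := fun x y => {z : ℝ × ℝ | z.2 ≤ z.1}.indicator
      (fun z => g z.2) (x, y)) hF
  have hEq : ∀ x ∈ Icc α b, u1 x = u1 α + ∫ y, {z : ℝ × ℝ | z.2 ≤ z.1}.indicator
      (fun z => g z.2) (x, y) ∂(μ.restrict (Ioc α b)) := by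
    intro x hx
    rw [hu1 x hx]
    congr 1
    have e1 : ∀ y, {z : ℝ × ℝ | z.2 ≤ z.1}.indicator (fun z => g z.2) (x, y)
        = (Iic x).indicator g y := by
      intro y; simp [indicator]
    simp_rw [e1]
    rw [integral_indicator measurableSet_Iic, Measure.restrict_restrict measurableSet_Iic]
    have e2 : Iic x ∩ Ioc α b = Ioc α x := by
      ext y; simp only [mem_inter_iff, mem_Iic, mem_Ioc]
      exact ⟨fun h => ⟨h.2.1, h.1⟩, fun h => ⟨h.2, h.1, h.2.trans hx.2⟩⟩
    rw [e2]
    exact integral_congr_ae (ae_mono (Measure.restrict_mono (Ioc_subset_Ioc_right hx.2) le_rfl) hgh)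
  have hms : AEStronglyMeasurable u1 (volume.restrict (Ioc α b)) := by
    refine AEStronglyMeasurable.congr
      ((stronglyMeasurable_const (b := u1 α)).add hG).aestronglyMeasurable ?_
    exact (ae_restrict_mem measurableSet_Ioc).mono fun x hx => (hEq x ⟨hx.1.le, hx.2⟩).symm
  have hbd : ∀ x ∈ Icc α b, ‖u1 x‖ ≤ ‖u1 α‖ + ∫ t in Ioc α b, ‖h t‖ ∂μ := by
    intro x hx
    rw [hu1 x hx]
    refine (norm_add_le _ _).trans (add_le_add le_rfl ((norm_integral_le_integral_norm _).trans ?_))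
    exact setIntegral_mono_set hh.norm (ae_of_all _ fun _ => norm_nonneg _)
      (LE.le.eventuallyLE (Ioc_subset_Ioc_right hx.2))
  have := Integrable.bdd_mul (c := ‖u1 α‖ + ∫ t in Ioc α b, ‖h t‖ ∂μ) he hms
    ((ae_restrict_mem measurableSet_Ioc).mono fun x hx => hbd x ⟨hx.1.le, hx.2⟩)
  simpa [IntegrableOn, div_eq_mul_inv] using this

lemma kappa_closed (T : Set ℝ) (hcl : IsClosed T) (hbb : BddBelow T) :
    IsClosed (tsKappa T) := by
  unfold tsKappa
  split_ifs with h
  · have : T \ {sInf T} = T ∩ Ici (tsSigma T (sInf T)) := by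
      ext s
      constructor
      · rintro ⟨hs, hs'⟩
        refine ⟨hs, ?_⟩
        have hlt : sInf T < s := lt_of_le_of_ne (csInf_le hbb hs) (fun h => hs' (by simp [h]))
        have hn : ({x | x ∈ T ∧ sInf T < x}).Nonempty := ⟨s, hs, hlt⟩
        unfold tsSigma
        rw [if_pos hn]
        exact csInf_le (hbb.mono fun x hx => hx.1) ⟨hs, hlt⟩
      · rintro ⟨hs, hs'⟩
        refine ⟨hs, fun h' => ?_⟩
        have h'' : s = sInf T := h'
        have : tsSigma T (sInf T) ≤ s := hs'
        linarith [h.2]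
    rw [this]
    exact hcl.inter isClosed_Ici
  · exact hcl

lemma sigma_inf_mem (T : Set ℝ) (hne : T.Nonempty)
    (hbb : BddBelow T) (hba : BddAbove T) :
    tsSigma T (sInf T) ∈ Icc (sInf T) (sSup T) := by
  unfold tsSigma
  split_ifs with h
  · obtain ⟨s, hs⟩ := h
    exact ⟨le_csInf ⟨s, hs⟩ fun x hx => hx.2.le,
      (csInf_le (hbb.mono fun x hx => hx.1) hs).trans (le_csSup hba hs.1)⟩
  · exact ⟨csInf_le_csSup hne hbb hba, le_rfl⟩

lemma kappa_sub (T : Set ℝ) (hbb : BddBelow T) (hba : BddAbove T) :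
    tsKappa T ⊆ Icc (tsSigma T (sInf T)) (sSup T) := by
  intro s hs
  unfold tsKappa at hs
  split_ifs at hs with h
  · refine ⟨?_, le_csSup hba hs.1⟩
    have hlt : sInf T < s := lt_of_le_of_ne (csInf_le hbb hs.1) (fun h => hs.2 (by simp [h]))
    have hn : ({x | x ∈ T ∧ sInf T < x}).Nonempty := ⟨s, hs.1, hlt⟩
    unfold tsSigma
    rw [if_pos hn]
    exact csInf_le (hbb.mono fun x hx => hx.1) ⟨hs.1, hlt⟩
  · refine ⟨?_, le_csSup hba hs⟩
    push Not at h
    exact (h hbb).trans (csInf_le hbb hs)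

lemma mem_kappa (T : Set ℝ) (s : ℝ) (hs : sInf T < s) : s ∈ tsKappa T ↔ s ∈ T := by
  unfold tsKappa
  split_ifs with h
  · exact ⟨fun h => h.1, fun h => ⟨h, fun h' => hs.ne' h'⟩⟩
  · rfl

lemma ext_eq (T : Set ℝ) (hne : T.Nonempty) (hcl : IsClosed T)
    (hbb : BddBelow T) (hba : BddAbove T) (p : ℝ → ℂ) (t : ℝ)
    (ht : t ∈ Ioc (sInf T) (sSup T)) : extK T p t = p (sInf (T ∩ Ici t)) := by
  have hbT : sSup T ∈ T := hcl.csSup_mem hne hba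
  unfold extK
  split_ifs with h
  · have hT := (mem_kappa T t ht.1).1 h
    congr 1
    exact le_antisymm (le_csInf ⟨t, hT, self_mem_Ici⟩ fun x hx => hx.2)
      (csInf_le (hbb.mono inter_subset_left) ⟨hT, self_mem_Ici⟩)
  · have hT : t ∉ T := fun h' => h ((mem_kappa T t ht.1).2 h')
    have hset : {s | s ∈ tsKappa T ∧ t < s} = T ∩ Ici t := by
      ext s
      constructor
      · rintro ⟨h1, h2⟩
        exact ⟨(mem_kappa T s (ht.1.trans h2)).1 h1, h2.le⟩
      · rintro ⟨h1, h2⟩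
        have h3 : t < s := lt_of_le_of_ne h2 (fun h' => hT (h' ▸ h1))
        exact ⟨(mem_kappa T s (ht.1.trans h3)).2 h1, h3⟩
    unfold tsSigma
    rw [hset, if_pos ⟨_, hbT, ht.2⟩]

lemma ext_int (T : Set ℝ) (hne : T.Nonempty) (hcl : IsClosed T)
    (hbb : BddBelow T) (hba : BddAbove T) (ν : Measure ℝ)
    (hν : ∀ c d : ℝ, c ≤ d → ν (Set.Ico c d) = ENNReal.ofReal (tsRho T d - tsRho T c))
    (p : ℝ → ℝ) (hp : Integrable (fun t => 1 / p t) ν) :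
    IntegrableOn (fun t => 1 / extK T (cR p) t) (Ioc (sInf T) (sSup T)) volume := by
  obtain ⟨hm, hmap⟩ := nu_map T hne hcl hbb hba ν hν
  rw [← hmap] at hp
  have h1 := (hp.comp_aemeasurable hm).ofReal (𝕜 := ℂ)
  refine h1.congr ?_
  refine (ae_restrict_mem measurableSet_Ioc).mono fun t ht => ?_
  simp only [ext_eq T hne hcl hbb hba (cR p) t ht, cR, Function.comp]
  push_cast
  rfl

lemma eig_data (T : Set ℝ) (μ : Measure ℝ) (r q : ℝ → ℝ)
    (hres : μ.restrict (tsKappa T) = μ)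
    (hr : Integrable r μ) (hrpos : ∀ᵐ t ∂μ, 0 < r t) (lam : ℝ)
    (F : Lp ℂ 2 (wM T μ r)) (u h : ℝ → ℂ)
    (h1 : ∀ᵐ t ∂(wM T μ r), F t = u t)
    (h2 : ∀ᵐ t ∂(wM T μ r), ((lam : ℂ) • F : Lp ℂ 2 (wM T μ r)) t = ellApply r q h u t) :
    ∀ᵐ t ∂μ, h t = ((q t : ℂ) - lam * r t) * u t := by
  have h3 : ∀ᵐ t ∂(wM T μ r), (lam : ℂ) * u t = ellApply r q h u t := by
    filter_upwards [h1, h2, Lp.coeFn_smul (lam : ℂ) F] with t a b c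
    rw [← b, c, Pi.smul_apply, smul_eq_mul, a]
  unfold wM at h3
  rw [hres, ae_withDensity_iff' hr.1.aemeasurable.ennreal_ofReal] at h3
  filter_upwards [h3, hrpos] with t a b
  have a' := a (by simpa using b)
  have hb : (r t : ℂ) ≠ 0 := by exact_mod_cast b.ne'
  unfold ellApply at a'
  rw [eq_div_iff hb] at a'
  linear_combination a'

lemma comb_zero (T : Set ℝ) (μ : Measure ℝ) (p r q : ℝ → ℝ) (α b : ℝ) (hab : α ≤ b)
    (hfin : μ (Ioc α b) ≠ ∞)
    (he : IntegrableOn (fun t => 1 / extK T (cR p) t) (Ioc α b) volume)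
    (hr : Integrable r μ) (hq : Integrable q μ) (lam : ℝ)
    (u u1 h v v1 g : ℝ → ℂ)
    (hu : MemD2 T μ p r q u u1 h) (hv : MemD2 T μ p r q v v1 g)
    (hh : ∀ᵐ t ∂μ, h t = ((q t : ℂ) - lam * r t) * u t)
    (hg : ∀ᵐ t ∂μ, g t = ((q t : ℂ) - lam * r t) * v t)
    (s t : ℂ) (h0 : s * u α + t * v α = 0) (h01 : s * u1 α + t * v1 α = 0) :
    ∀ x ∈ Icc α b, s * u x + t * v x = 0 := by
  obtain ⟨huL, huP, -, -⟩ := hu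
  obtain ⟨hvL, hvP, -, -⟩ := hv
  have hhi : IntegrableOn h (Ioc α b) μ :=
    (huL.integrableOn_isCompact isCompact_Icc).mono_set Ioc_subset_Icc_self
  have hgi : IntegrableOn g (Ioc α b) μ :=
    (hvL.integrableOn_isCompact isCompact_Icc).mono_set Ioc_subset_Icc_self
  have hui := prim_meas μ α b hfin _ h u1 he hhi fun x hx => (huP α x hx.1).2
  have hvi := prim_meas μ α b hfin _ g v1 he hgi fun x hx => (hvP α x hx.1).2
  have hint : ∀ {f : ℝ → ℂ}, IntegrableOn f (Ioc α b) volume → ∀ c x, α ≤ c → c ≤ x → x ≤ b →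
      IntervalIntegrable f volume c x := fun hf c x h1 h2 h3 =>
    (intervalIntegrable_iff_integrableOn_Ioc_of_le h2).2 (hf.mono_set (Ioc_subset_Ioc h1 h3))
  have hwi : IntegrableOn (fun y => (s * u1 y + t * v1 y) / extK T (cR p) y) (Ioc α b) volume := by
    refine ((hui.const_mul s).add (hvi.const_mul t)).congr (ae_of_all _ fun y => ?_)
    simp only [Pi.add_apply]; ring
  have hw : ∀ c x, α ≤ c → c ≤ x → x ≤ b → s * u x + t * v x = s * u c + t * v c +
      ∫ y in c..x, (s * u1 y + t * v1 y) / extK T (cR p) y := by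
    intro c x hc hcx hx
    have e1 : ∫ y in c..x, (s * u1 y + t * v1 y) / extK T (cR p) y
        = s * (∫ y in c..x, u1 y / extK T (cR p) y) + t * ∫ y in c..x, v1 y / extK T (cR p) y := by
      rw [← intervalIntegral.integral_const_mul, ← intervalIntegral.integral_const_mul,
        ← intervalIntegral.integral_add ((hint hui c x hc hcx hx).const_mul s)
          ((hint hvi c x hc hcx hx).const_mul t)]
      congr 1; ext y; ring
    rw [e1, (huP c x hcx).1, (hvP c x hcx).1]; ring
  refine core_zero μ α b hab (extK T (cR p)) (fun y => (q y : ℂ) - lam * r y)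
    (fun x => s * u x + t * v x) (fun x => s * u1 x + t * v1 x) he.norm ?_ hw ?_ h0 ?_
  · exact (hq.ofReal.sub (hr.ofReal.const_mul _)).integrableOn
  · intro x hx
    have hx' : Ioc α x ⊆ Ioc α b := Ioc_subset_Ioc_right hx.2
    have e1 : ∫ y in Ioc α x, ((q y : ℂ) - lam * r y) * (s * u y + t * v y) ∂μ
        = ∫ y in Ioc α x, (s * h y + t * g y) ∂μ := by
      refine integral_congr_ae (ae_restrict_of_ae ?_)
      filter_upwards [hh, hg] with y a b
      rw [a, b]; ring
    rw [e1, integral_add ((hhi.mono_set hx').const_mul s) ((hgi.mono_set hx').const_mul t),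
      integral_const_mul, integral_const_mul]
    rw [(huP α x hx.1).2, (hvP α x hx.1).2]
    linear_combination h01
  · refine ⟨∫ y in Ioc α b, ‖(s * u1 y + t * v1 y) / extK T (cR p) y‖, fun x hx => ?_⟩
    rw [hw α x le_rfl hx.1 hx.2, h0, zero_add, intervalIntegral.integral_of_le hx.1]
    exact (norm_integral_le_integral_norm _).trans
      (setIntegral_mono_set hwi.norm (ae_of_all _ fun _ => norm_nonneg _)
        (LE.le.eventuallyLE (Ioc_subset_Ioc_right hx.2)))

/-- All eigenvalues of the self-adjoint operator with separated boundary conditions on a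
bounded time scale are simple: any two eigenvectors for the same eigenvalue `λ ∈ ℝ` are
linearly dependent, i.e. each eigenspace has dimension at most one. -/
theorem eigenvalues_simple_separated
    (T : Set ℝ) (hne : T.Nonempty) (hcl : IsClosed T)
    (hbb : BddBelow T) (hba : BddAbove T)
    (hfive : ∃ s : Finset ℝ, ↑s ⊆ T ∧ 5 ≤ s.card)
    (μ ν : Measure ℝ)
    (hμ : ∀ c d : ℝ, c ≤ d →
      μ (Set.Ioc c d) = ENNReal.ofReal (tsSigma (tsKappa T) d - tsSigma (tsKappa T) c))
    (hν : ∀ c d : ℝ, c ≤ d → ν (Set.Ico c d) = ENNReal.ofReal (tsRho T d - tsRho T c))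
    (p r q : ℝ → ℝ)
    (hr : Integrable r (μ.restrict (tsKappa T))) (hrpos : ∀ᵐ t ∂μ, 0 < r t)
    (hq : Integrable q (μ.restrict (tsKappa T)))
    (hpne : ∀ᵐ t ∂ν, p t ≠ 0) (hp : Integrable (fun t => 1 / p t) ν)
    (φα φβ : ℝ) (hφα : 0 ≤ φα ∧ φα < Real.pi) (hφβ : 0 ≤ φβ ∧ φβ < Real.pi)
    (hα : tsSigma T (sInf T) < tsSigma T (tsSigma T (sInf T)) → φα ≠ 0)
    (hβ : tsRho T (sSup T) < tsSigma T (tsRho T (sSup T)) →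
      p (sSup T) * Real.sin φβ ≠ (sSup T - tsRho T (sSup T)) * Real.cos φβ)
    (S : Lp ℂ 2 (wM T μ r) →ₗ.[ℂ] Lp ℂ 2 (wM T μ r))
    (hSsa : IsSelfAdjoint S)
    (hSgraph : ∀ F G : Lp ℂ 2 (wM T μ r), (F, G) ∈ S.graph ↔
      ∃ u u1 h : ℝ → ℂ, MemD2 T μ p r q u u1 h ∧
        (∀ᵐ t ∂(wM T μ r), F t = u t) ∧
        (∀ᵐ t ∂(wM T μ r), G t = ellApply r q h u t) ∧
        u (tsSigma T (sInf T)) * (Real.cos φα : ℂ) -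
          u1 (tsSigma T (sInf T)) * (Real.sin φα : ℂ) = 0 ∧
        u (sSup T) * (Real.cos φβ : ℂ) - u1 (sSup T) * (Real.sin φβ : ℂ) = 0)
    :
    ∀ lam : ℝ, ∀ F G : Lp ℂ 2 (wM T μ r),
      (F, (lam : ℂ) • F) ∈ S.graph → (G, (lam : ℂ) • G) ∈ S.graph →
      ¬ LinearIndependent ℂ ![F, G] := by
  intro lam F G hF hG hLI
  obtain ⟨u, u1, h, hu, hFu, hFe, hua, -⟩ := (hSgraph _ _).1 hF
  obtain ⟨v, v1, g, hv, hGv, hGe, hva, -⟩ := (hSgraph _ _).1 hG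
  have hmem : ∀ᵐ t ∂μ, t ∈ tsKappa T :=
    kappa_mu_null (tsKappa T) (kappa_closed T hcl hbb) μ hμ
  have hres : μ.restrict (tsKappa T) = μ := Measure.restrict_eq_self_of_ae_mem hmem
  rw [hres] at hr hq
  have hh := eig_data T μ r q hres hr hrpos lam F u h hFu hFe
  have hg := eig_data T μ r q hres hr hrpos lam G v g hGv hGe
  have hα' := sigma_inf_mem T hne hbb hba
  have he := (ext_int T hne hcl hbb hba ν hν p hp).mono_set (Ioc_subset_Ioc_left hα'.1)
  have hfin : μ (Ioc (tsSigma T (sInf T)) (sSup T)) ≠ ∞ := by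
    rw [hμ _ _ hα'.2]; exact ENNReal.ofReal_ne_top
  have key : ∀ s t : ℂ, s * u (tsSigma T (sInf T)) + t * v (tsSigma T (sInf T)) = 0 →
      s * u1 (tsSigma T (sInf T)) + t * v1 (tsSigma T (sInf T)) = 0 → s = 0 ∧ t = 0 := by
    intro s t h0 h01
    have hz := comb_zero T μ p r q _ _ hα'.2 hfin he hr hq lam u u1 h v v1 g hu hv hh hg s t h0 h01
    refine (LinearIndependent.pair_iff.1 hLI) s t ?_
    have hwm : ∀ᵐ x ∂(wM T μ r), x ∈ tsKappa T := by
      refine (withDensity_absolutelyContinuous _ _).ae_le ?_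
      rw [hres]; exact hmem
    rw [Lp.eq_zero_iff_ae_eq_zero]
    filter_upwards [Lp.coeFn_add (s • F) (t • G), Lp.coeFn_smul s F, Lp.coeFn_smul t G,
      hFu, hGv, hwm] with x a1 a2 a3 a4 a5 a6
    rw [a1, Pi.add_apply, a2, a3, Pi.smul_apply, Pi.smul_apply, a4, a5, smul_eq_mul, smul_eq_mul,
      hz x (kappa_sub T hbb hba a6)]
    rfl
  have hcs : (Real.sin φα : ℂ) ^ 2 + (Real.cos φα : ℂ) ^ 2 = 1 := by
    exact_mod_cast Real.sin_sq_add_cos_sq φα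
  generalize tsSigma T (sInf T) = α at *
  generalize (Real.sin φα : ℂ) = S' at *
  generalize (Real.cos φα : ℂ) = C' at *
  have u_eq : u α = (u α * S' + u1 α * C') * S' := by linear_combination (-u α) * hcs + C' * hua
  have u1_eq : u1 α = (u α * S' + u1 α * C') * C' := by
    linear_combination (-u1 α) * hcs - S' * hua
  have v_eq : v α = (v α * S' + v1 α * C') * S' := by linear_combination (-v α) * hcs + C' * hva
  have v1_eq : v1 α = (v α * S' + v1 α * C') * C' := by
    linear_combination (-v1 α) * hcs - S' * hva
  generalize u α * S' + u1 α * C' = m at *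
  generalize v α * S' + v1 α * C' = n at *
  obtain ⟨hn, hm⟩ := key n (-m) (by rw [u_eq, v_eq]; ring) (by rw [u1_eq, v1_eq]; ring)
  have hm' : m = 0 := neg_eq_zero.1 hm
  have := key 1 0 (by rw [u_eq, hm']; ring) (by rw [u1_eq, hm']; ring)
  exact one_ne_zero this.1
end
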